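/- The existential theory of a free group is decidable: for F a free group of finite rank at least 2, with respect to a fixed Gödel numbering of sentences of the language of groups with constants from F, the set of existential sentences (sentences of the form ∃X θ(X) with θ quantifier-free, so in particular sentences asserting the solvability in F of a finite system of equations and inequations with constants) true in F is computable. -/

import Mathlib

open FirstOrder FirstOrder.Language

/-- Function symbols of the first-order language of groups: a binary multiplication,
a unary inversion, and a constant for the identity. -/
inductive GroupFunc : ℕ → Type
  | mul : GroupFunc 2
  | inv : GroupFunc 1
  | one : GroupFunc 0

/-- The first-order language of groups. -/
def groupLang : FirstOrder.Language :=
  ⟨GroupFunc, fun _ => Empty⟩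

/-- Any group is a structure for the language of groups in the natural way.
Together with Mathlib's `withConstantsSelfStructure`, this makes a free group `F`
a structure for the language of groups with constants from `F`. -/
instance groupLang.structureOfGroup (G : Type*) [Group G] : groupLang.Structure G where
  funMap {_} f := match f with
    | .mul => fun v => v 0 * v 1
    | .inv => fun v => (v 0)⁻¹
    | .one => fun _ => 1
  RelMap {_} r := Empty.elim r

instance (n : ℕ) : Encodable (GroupFunc n) :=
  Encodable.ofLeftInjection (fun _ => 0)
    (fun _ =>
      match n with
      | 0 => some GroupFunc.one
      | 1 => some GroupFunc.inv
      | 2 => some GroupFunc.mul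
      | _ + 3 => none)
    (fun f => by cases f <;> rfl)

/-- A (computable) encoding of the elements of a free group of finite rank by natural
numbers, via reduced words. -/
instance (r : ℕ) : Encodable (FreeGroup (Fin r)) :=
  Encodable.ofLeftInjection FreeGroup.toWord (fun l => some (FreeGroup.mk l))
    (fun x => congrArg some FreeGroup.mk_toWord)

instance (α : Type*) [Encodable α] (n : ℕ) : Encodable ((constantsOn α).Functions n) :=
  match n with
  | 0 => inferInstanceAs (Encodable α)
  | _ + 1 => inferInstanceAs (Encodable PEmpty)

instance (r n : ℕ) : Encodable ((groupLang[[FreeGroup (Fin r)]]).Functions n) :=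
  inferInstanceAs (Encodable (GroupFunc n ⊕ (constantsOn (FreeGroup (Fin r))).Functions n))

instance (r n : ℕ) : Encodable ((groupLang[[FreeGroup (Fin r)]]).Relations n) :=
  inferInstanceAs (Encodable (Empty ⊕ Empty))

/-- A fixed Gödel numbering of the sentences of the language of groups with constants
from the free group of rank `r`, obtained from Mathlib's encoding of first-order
formulas as lists of symbols. -/
def godelNumberWithConstants (r : ℕ)
    (σ : (groupLang[[FreeGroup (Fin r)]]).Sentence) : ℕ :=
  Encodable.encode σ.listEncode

/-- Existential formulas: formulas of the form `∃ X θ` with `θ` quantifier-free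
(`X` a possibly empty tuple of variables). -/
inductive IsExistential {L : FirstOrder.Language} {α : Type*} :
    ∀ {n : ℕ}, L.BoundedFormula α n → Prop
  | of_isQF {n : ℕ} {φ : L.BoundedFormula α n} : φ.IsQF → IsExistential φ
  | ex {n : ℕ} {φ : L.BoundedFormula α (n + 1)} : IsExistential φ → IsExistential φ.ex

/-!
A quantifier-free formula in constants from `F` that has a solution in `F` has one whose norms are
bounded by a computable function of the formula, so that it suffices to try finitely many
assignments.

*From the group to word equations.* Only the values of the subterms matter: they may be moved by any
map which respects the products and inverses occurring among them, keeps nontrivial elements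
nontrivial, and fixes the constants. If `x y = z` in `F` then the reduced words are `x = p₀ p₁`,
`y = p₁⁻¹ p₂` and `z = p₀ p₂` without cancellation, which turns the conditions on such a map into
equations between words with involution.

*Solving word equations by recompression* (Jeż). Split the letters into left and right ones. Cut
words into chunks, maximal factors `aⁱ`, or `aⁱ bʲ` with `a` left and `b` right; pop the first and
last chunk off every variable, and replace each chunk by a single letter, which remembers the first
and the last letter of the chunk so that reducedness is preserved. Some splitting removes a fixed
fraction of the letters of the equations, which makes up for the popped ones, so all systems stay in
one finite set while the solution gets shorter. Conversely, a solution of the new system gives one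
of the old system for any exponents `i`, `j` that satisfy the linear equations expressing that both
sides agree, and such exponents can be chosen small. So a minimal solution of the old system is
bounded by an affine function of a minimal solution of the new one. Following minimal solutions no
system occurs twice, hence the bound is an iterate of that function.
-/

namespace Recompression

/-! ### Bounded solutions by descent -/

/-- Along a chain of descents between minimal solutions no instance is visited twice. -/
theorem exists_le_iterate_of_descent {S : Type*} [Fintype S] {P : S → ℕ → Prop} {f : ℕ → ℕ}
    (hf : Monotone f)
    (descent : ∀ s w, P s w → 0 < w → ∃ s' w', P s' w' ∧ w' < w ∧
      ∀ v, P s' v → ∃ u, P s u ∧ u ≤ f v)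
    {s : S} {w : ℕ} (hsw : P s w) : ∃ u, P s u ∧ u ≤ f^[Fintype.card S] 0 := by
  classical
  let least : S → ℕ := fun s => sInf {w | P s w}
  have least_spec {s w} (h : P s w) : P s (least s) := Nat.sInf_mem (s := {w | P s w}) ⟨w, h⟩
  have least_le {s w} (h : P s w) : least s ≤ w := Nat.sInf_le (s := {w | P s w}) h
  have iterate_mono : Monotone fun n => f^[n] 0 := hf.monotone_iterate_of_le_map (Nat.zero_le _)
  let below : S → Finset S := fun s => {t | (∃ w, P t w) ∧ least t < least s}
  have least_le_iterate (n : ℕ) :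
      ∀ s, least s = n → (∃ w, P s w) → least s ≤ f^[(below s).card] 0 := by
    induction n using Nat.strong_induction_on with
    | _ n ih =>
      rintro s rfl ⟨w, hw⟩
      rcases Nat.eq_zero_or_pos (least s) with hzero | hpos
      · omega
      obtain ⟨t, v, htv, hvs, lift⟩ := descent s (least s) (least_spec hw) hpos
      have hts : least t < least s := (least_le htv).trans_lt hvs
      obtain ⟨u, hu, hut⟩ := lift (least t) (least_spec htv)
      have card_lt : (below t).card < (below s).card := by
        refine Finset.card_lt_card (Finset.ssubset_iff_of_subset ?_ |>.2 ⟨t, ?_, ?_⟩)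
        · intro z
          simp only [below, Finset.mem_filter, Finset.mem_univ, true_and]
          exact fun hz => ⟨hz.1, hz.2.trans hts⟩
        · simpa [below] using ⟨⟨v, htv⟩, hts⟩
        · simp [below]
      calc least s ≤ f (least t) := (least_le hu).trans hut
        _ ≤ f^[(below t).card + 1] 0 := by
          rw [Function.iterate_succ_apply']
          exact hf (ih (least t) hts t rfl ⟨v, htv⟩)
        _ ≤ f^[(below s).card] 0 := iterate_mono card_lt
  exact ⟨least s, least_spec hsw,
    (least_le_iterate _ s rfl ⟨w, hsw⟩).trans (iterate_mono (Finset.card_le_univ _))⟩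

/-! ### Small solutions of linear Diophantine systems -/

section Diophantine

variable {κ : Type*} [Fintype κ]

/-- The integers of absolute value at most `M`, as a finite type. -/
abbrev IntBall (M : ℕ) : Type := Set.Icc (-(M : ℤ)) M

/-- A bound on the size of a small solution of a linear Diophantine system in `k` unknowns all of
whose coefficients have absolute value at most `M`. The exponent of `2` is the number of equations
that can occur in the descent. -/
def diophantineBound (k M : ℕ) : ℕ :=
  (fun v => 2 * v + k)^[2 ^ ((2 * M + 1) ^ k * (2 * (M * k) + 1))] 0

theorem card_intBall (M : ℕ) : Fintype.card (IntBall M) = 2 * M + 1 := by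
  rw [Fintype.card_ofFinset, Int.card_Icc]
  omega

theorem abs_sum_mul_le {c : κ → ℤ} {δ : κ → ℕ} {M : ℕ} (hc : ∀ k, |c k| ≤ M) (hδ : ∀ k, δ k ≤ 1) :
    |∑ k, c k * δ k| ≤ (M * Fintype.card κ : ℕ) := by
  have term_le (k : κ) : |c k * δ k| ≤ M := by
    rcases Nat.le_one_iff_eq_zero_or_eq_one.1 (hδ k) with h | h <;> simp [h, hc k]
  calc |∑ k, c k * δ k| ≤ ∑ k, |c k * δ k| := Finset.abs_sum_le_sum_abs _ _
    _ ≤ ∑ _k : κ, (M : ℤ) := Finset.sum_le_sum fun k _ => term_le k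
    _ = (M * Fintype.card κ : ℕ) := by simp [mul_comm]

theorem sum_mul_two_mul_add (c : κ → ℤ) (z δ : κ → ℕ) :
    ∑ k, c k * (2 * z k + δ k : ℕ) = 2 * ∑ k, c k * z k + ∑ k, c k * δ k := by
  rw [Finset.mul_sum, ← Finset.sum_add_distrib]
  refine Finset.sum_congr rfl fun k _ => ?_
  push_cast
  ring

theorem sum_mul_eq_of_halved {M : ℕ} {c : κ → ℤ} {b : ℤ} {y z : κ → ℕ} (hc : ∀ k, |c k| ≤ M)
    (hb : |b| ≤ (M * Fintype.card κ : ℕ)) (hy : ∑ k, c k * y k = b)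
    (hz : ∀ b' : ℤ, |b'| ≤ (M * Fintype.card κ : ℕ) →
      ∑ k, c k * (y k / 2 : ℕ) = b' → ∑ k, c k * z k = b') :
    ∑ k, c k * (2 * z k + y k % 2 : ℕ) = b := by
  have parity_abs : |∑ k, c k * (y k % 2 : ℕ)| ≤ (M * Fintype.card κ : ℕ) :=
    abs_sum_mul_le hc fun k => Nat.le_of_lt_succ (Nat.mod_lt (y k) two_pos)
  have solves_y : 2 * ∑ k, c k * (y k / 2 : ℕ) + ∑ k, c k * (y k % 2 : ℕ) = b := by
    simp only [← sum_mul_two_mul_add, Nat.div_add_mod, hy]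
  have half_abs : |∑ k, c k * (y k / 2 : ℕ)| ≤ (M * Fintype.card κ : ℕ) := by
    rw [abs_le] at *
    omega
  rw [sum_mul_two_mul_add, hz _ half_abs rfl, solves_y]

/-- Halving every coordinate turns a solution of one system with right-hand sides at most
`M * card κ` into a smaller solution of another such system. -/
theorem exists_small_solution (M : ℕ) (y : κ → ℕ) :
    ∃ y' : κ → ℕ, ∑ k, y' k ≤ diophantineBound (Fintype.card κ) M ∧
      ∀ (c : κ → ℤ) (b : ℤ), (∀ k, |c k| ≤ M) → |b| ≤ (M * Fintype.card κ : ℕ) →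
        ∑ k, c k * y k = b → ∑ k, c k * y' k = b := by
  classical
  let Equation := (κ → IntBall M) × IntBall (M * Fintype.card κ)
  let Solves (y : κ → ℕ) (e : Equation) : Prop := ∑ k, (e.1 k : ℤ) * y k = e.2
  let P : Set Equation → ℕ → Prop := fun E w => ∃ y, ∑ k, y k = w ∧ ∀ e ∈ E, Solves y e
  have descent : ∀ E w, P E w → 0 < w → ∃ E' w', P E' w' ∧ w' < w ∧
      ∀ v, P E' v → ∃ u, P E u ∧ u ≤ 2 * v + Fintype.card κ := by
    rintro E _ ⟨y, rfl, hy⟩ hpos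
    refine ⟨{e | Solves (fun k => y k / 2) e}, ∑ k, y k / 2, ⟨_, rfl, fun _ he => he⟩, ?_, ?_⟩
    · obtain ⟨k, -, hk⟩ := (Finset.sum_pos_iff_of_nonneg fun _ _ => Nat.zero_le _).1 hpos
      exact Finset.sum_lt_sum (fun _ _ => Nat.div_le_self _ _)
        ⟨k, Finset.mem_univ k, Nat.div_lt_self hk one_lt_two⟩
    rintro _ ⟨z, rfl, hz⟩
    refine ⟨∑ k, (2 * z k + y k % 2), ⟨_, rfl, fun e he => ?_⟩, ?_⟩
    · exact sum_mul_eq_of_halved (fun k => abs_le.2 (e.1 k).2) (abs_le.2 e.2.2) (hy e he)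
        fun b' hb' h => hz (e.1, ⟨b', abs_le.1 hb'⟩) h
    · have parity_sum : ∑ k, y k % 2 ≤ Fintype.card κ := by
        simpa using Finset.sum_le_card_nsmul Finset.univ _ 1 fun k _ =>
          Nat.le_of_lt_succ (Nat.mod_lt (y k) two_pos)
      rw [Finset.sum_add_distrib, ← Finset.mul_sum]
      exact Nat.add_le_add_left parity_sum _
  have mono : Monotone fun v => 2 * v + Fintype.card κ := fun a b hab => by dsimp only; omega
  obtain ⟨_, ⟨y', rfl, hy'⟩, hle⟩ :=
    exists_le_iterate_of_descent mono descent (s := {e | Solves y e}) ⟨y, rfl, fun _ he => he⟩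
  refine ⟨y', ?_, fun c b hc hb h =>
    hy' (fun k => ⟨c k, abs_le.1 (hc k)⟩, ⟨b, abs_le.1 hb⟩) h⟩
  rwa [Fintype.card_set, Fintype.card_prod, Fintype.card_fun, card_intBall, card_intBall] at hle

theorem exists_small_positive_solution {M : ℕ} (hM : 1 ≤ M) {o : κ} {x : κ → ℕ}
    (hx : ∀ k, 1 ≤ x k) (ho : x o = 1) :
    ∃ x' : κ → ℕ, (∀ k, 1 ≤ x' k) ∧ x' o = 1 ∧
      (∀ k, x' k ≤ diophantineBound (Fintype.card κ) M + 1) ∧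
      ∀ c : κ → ℤ, (∀ k, |c k| ≤ M) → ∑ k, c k * x k = 0 → ∑ k, c k * x' k = 0 := by
  classical
  obtain ⟨y, hy, solves⟩ := exists_small_solution M fun k => x k - 1
  have sum_shift (c : κ → ℤ) (z : κ → ℕ) :
      ∑ k, c k * (z k + 1 : ℕ) = ∑ k, c k * z k + ∑ k, c k := by
    rw [← Finset.sum_add_distrib]
    exact Finset.sum_congr rfl fun k _ => by push_cast; ring
  refine ⟨fun k => y k + 1, fun k => Nat.le_add_left 1 _, ?_, fun k => ?_, fun c hc hcx => ?_⟩
  · have := solves (fun k => if k = o then 1 else 0) 0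
      (fun k => by split_ifs <;> simp [hM]) (by rw [abs_zero]; positivity) (by simp [ho])
    simpa using this
  · have := Finset.single_le_sum (f := y) (fun _ _ => Nat.zero_le _) (Finset.mem_univ k)
    exact Nat.add_le_add_right (this.trans hy) 1
  · have rhs_le : |-∑ k, c k| ≤ (M * Fintype.card κ : ℕ) := by
      rw [abs_neg]
      simpa using abs_sum_mul_le (δ := fun _ => 1) hc fun _ => le_rfl
    have shifted : ∑ k, c k * (x k - 1 : ℕ) = -∑ k, c k := by
      rw [eq_neg_iff_add_eq_zero, ← sum_shift, ← hcx]
      exact Finset.sum_congr rfl fun k _ => by rw [Nat.sub_add_cancel (hx k)]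
    rw [sum_shift, solves c _ hc rhs_le shifted, neg_add_cancel]

end Diophantine

/-! ### Words with symbolic exponents -/

section PowerWord

variable {A κ : Type*}

/-- The word `a₁ ^ x k₁ ⋯ aₙ ^ x kₙ` obtained from the list of pairs `(aᵢ, kᵢ)`, where the `kᵢ` are
symbolic exponents, by assigning the values `x` to the exponents. -/
def powerWord (x : κ → ℕ) (q : List (A × κ)) : List A :=
  q.flatMap fun p => List.replicate (x p.2) p.1

theorem powerWord_append (x : κ → ℕ) (q q' : List (A × κ)) :
    powerWord x (q ++ q') = powerWord x q ++ powerWord x q' :=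
  List.flatMap_append

theorem powerWord_cons (x : κ → ℕ) (p : A × κ) (q : List (A × κ)) :
    powerWord x (p :: q) = List.replicate (x p.2) p.1 ++ powerWord x q :=
  rfl

theorem powerWord_of_forall_eq (x : κ → ℕ) {a : A} {q : List (A × κ)} (hq : ∀ p ∈ q, p.1 = a) :
    powerWord x q = List.replicate ((q.map Prod.snd).map x).sum a := by
  induction q with
  | nil => rfl
  | cons p q ih =>
    rw [powerWord_cons, ih fun p' hp' => hq p' (List.mem_cons_of_mem _ hp'),
      hq p List.mem_cons_self, List.map_cons, List.map_cons, List.sum_cons, List.replicate_add]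

theorem head?_powerWord {x : κ → ℕ} (hx : ∀ k, 1 ≤ x k) (q : List (A × κ)) :
    (powerWord x q).head? = q.head?.map Prod.fst := by
  cases q with
  | nil => rfl
  | cons p q =>
    obtain ⟨n, hn⟩ := Nat.exists_eq_add_of_le' (hx p.2)
    simp [powerWord_cons, hn, List.replicate_succ]

theorem powerWord_eq_nil {x : κ → ℕ} (hx : ∀ k, 1 ≤ x k) {q : List (A × κ)} :
    powerWord x q = [] ↔ q = [] := by
  rw [← List.head?_eq_none_iff, head?_powerWord hx, Option.map_eq_none_iff, List.head?_eq_none_iff]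

theorem replicate_append_inj {a : A} {n m : ℕ} {R S : List A} (hR : R.head? ≠ some a)
    (hS : S.head? ≠ some a) (h : List.replicate n a ++ R = List.replicate m a ++ S) :
    n = m ∧ R = S := by
  induction n generalizing m with
  | zero =>
    cases m with
    | zero => simpa using h
    | succ m => simp_all [List.replicate_succ]
  | succ n ih =>
    cases m with
    | zero =>
      rw [List.replicate_zero, List.nil_append] at h
      simp [← h, List.replicate_succ] at hS
    | succ m =>
      simp only [List.replicate_succ, List.cons_append, List.cons.injEq, true_and] at h
      simpa using ih h

theorem sum_map_eq_sum_count_mul [Fintype κ] [DecidableEq κ] (x : κ → ℕ) (f : List κ) :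
    ((f.map x).sum : ℤ) = ∑ k, (f.count k : ℤ) * x k := by
  rw [Finset.sum_list_map_count]
  push_cast
  rw [Finset.sum_subset (Finset.subset_univ _)]
  · simp
  · intro k _ hk
    simp [List.count_eq_zero_of_not_mem (mt List.mem_toFinset.2 hk)]

theorem sum_map_eq_of_preserves_relations [Fintype κ] {M : ℕ} {x x' : κ → ℕ}
    (hc : ∀ c : κ → ℤ, (∀ k, |c k| ≤ M) → ∑ k, c k * x k = 0 → ∑ k, c k * x' k = 0)
    {f f' : List κ} (hf : f.length ≤ M) (hf' : f'.length ≤ M)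
    (h : (f.map x).sum = (f'.map x).sum) : (f.map x').sum = (f'.map x').sum := by
  classical
  have sum_sub (z : κ → ℕ) : ∑ k, ((f.count k : ℤ) - f'.count k) * z k =
      ((f.map z).sum : ℤ) - ((f'.map z).sum : ℤ) := by
    simp only [sub_mul, Finset.sum_sub_distrib, sum_map_eq_sum_count_mul]
  have := hc (fun k => (f.count k : ℤ) - f'.count k)
    (fun k => by
      have := f.count_le_length (a := k)
      have := f'.count_le_length (a := k)
      rw [abs_le]
      omega)
    (by rw [sum_sub, h, sub_self])
  rw [sum_sub] at this
  omega

/-- Equality of two power words amounts to equality of the lengths of their maximal runs, and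
these are linear forms in the exponents with small coefficients. -/
theorem powerWord_eq_of_preserves_relations [Fintype κ] {M : ℕ} {x x' : κ → ℕ}
    (hx : ∀ k, 1 ≤ x k)
    (hc : ∀ c : κ → ℤ, (∀ k, |c k| ≤ M) → ∑ k, c k * x k = 0 → ∑ k, c k * x' k = 0)
    {q q' : List (A × κ)} (hq : q.length ≤ M) (hq' : q'.length ≤ M)
    (h : powerWord x q = powerWord x q') : powerWord x' q = powerWord x' q' := by
  classical
  induction hn : q.length using Nat.strong_induction_on generalizing q q' with
  | _ n ih =>
    have head_eq : q.head?.map Prod.fst = q'.head?.map Prod.fst := by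
      rw [← head?_powerWord hx, h, head?_powerWord hx]
    cases q with
    | nil =>
      rw [(powerWord_eq_nil hx).1 h.symm]
    | cons p t =>
      let inRun : A × κ → Bool := fun p' => decide (p'.1 = p.1)
      have split_run (q : List (A × κ)) (z : κ → ℕ) : powerWord z q =
          List.replicate (((q.takeWhile inRun).map Prod.snd).map z).sum p.1 ++
            powerWord z (q.dropWhile inRun) := by
        rw [← powerWord_of_forall_eq z fun p' hp' =>
          of_decide_eq_true (List.mem_takeWhile_imp (p := inRun) hp'), ← powerWord_append,
          List.takeWhile_append_dropWhile]
      have head?_rest (q : List (A × κ)) :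
          (powerWord x (q.dropWhile inRun)).head? ≠ some p.1 := by
        rw [head?_powerWord hx, ne_eq, Option.map_eq_some_iff]
        rintro ⟨p', hp', hpp'⟩
        have := List.head?_dropWhile_not inRun q
        simp [hp', inRun, hpp'] at this
      have length_run (q : List (A × κ)) (hq : q.length ≤ M) :
          ((q.takeWhile inRun).map Prod.snd).length ≤ M := by
        rw [List.length_map]
        exact (List.takeWhile_sublist _).length_le.trans hq
      rw [split_run (p :: t), split_run q'] at h
      obtain ⟨run_eq, rest_eq⟩ := replicate_append_inj (head?_rest _) (head?_rest _) h
      have rest_lt : ((p :: t).dropWhile inRun).length < n := by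
        rw [List.dropWhile_cons_of_pos (by simp [inRun]), ← hn]
        exact Nat.lt_succ_of_le (List.dropWhile_sublist _).length_le
      rw [split_run (p :: t), split_run q',
        sum_map_eq_of_preserves_relations hc (length_run _ hq) (length_run _ hq') run_eq,
        ih _ rest_lt ((List.dropWhile_sublist _).length_le.trans hq)
          ((List.dropWhile_sublist _).length_le.trans hq') rest_eq rfl]

end PowerWord

/-! ### Words with inverses -/

section Words

open FreeGroup (invRev)

variable {A B : Type*}

/-- The formal inverse of a letter, the second component of a letter being its sign. -/
def letterInv (a : A × Bool) : A × Bool := (a.1, !a.2)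

@[simp]
theorem letterInv_letterInv (a : A × Bool) : letterInv (letterInv a) = a := by simp [letterInv]

theorem letterInv_inj {a b : A × Bool} : letterInv a = letterInv b ↔ a = b :=
  (Function.LeftInverse.injective letterInv_letterInv).eq_iff

theorem letterInv_ne (a : A × Bool) : letterInv a ≠ a := fun h => by
  simpa [letterInv] using congrArg Prod.snd h

theorem invRev_eq_reverse_map (w : List (A × Bool)) : invRev w = (w.map letterInv).reverse := rfl

theorem invRev_singleton (a : A × Bool) : invRev [a] = [letterInv a] := rfl

theorem invRev_ne_nil {w : List (A × Bool)} (hw : w ≠ []) : invRev w ≠ [] := by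
  simpa [invRev_eq_reverse_map] using hw

theorem invRev_replicate (n : ℕ) (a : A × Bool) :
    invRev (List.replicate n a) = List.replicate n (letterInv a) := by
  simp [invRev_eq_reverse_map]

theorem invRev_flatten (L : List (List (A × Bool))) :
    invRev L.flatten = (L.map invRev).reverse.flatten := by
  induction L with
  | nil => rfl
  | cons c L ih => simp [FreeGroup.invRev_append, ih]

theorem head?_invRev (w : List (A × Bool)) : (invRev w).head? = w.getLast?.map letterInv := by
  simp [invRev_eq_reverse_map]

theorem getLast?_invRev (w : List (A × Bool)) : (invRev w).getLast? = w.head?.map letterInv := by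
  simp [invRev_eq_reverse_map]

/-- The word `w` or its formal inverse, according to a sign. -/
def orient (b : Bool) (w : List (A × Bool)) : List (A × Bool) := if b then w else invRev w

theorem orient_orient (b : Bool) (w : List (A × Bool)) : orient b (orient b w) = w := by
  cases b <;> simp [orient]

theorem orient_not (b : Bool) (w : List (A × Bool)) : orient (!b) w = invRev (orient b w) := by
  cases b <;> simp [orient]

theorem orient_ne_nil {b : Bool} {w : List (A × Bool)} (hw : w ≠ []) : orient b w ≠ [] := by
  cases b
  · exact invRev_ne_nil hw
  · exact hw

theorem length_orient (b : Bool) (w : List (A × Bool)) : (orient b w).length = w.length := by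
  cases b <;> simp [orient]

/-- The extension of a substitution of words for positive letters to all letters. -/
def extendInv (f : A → List (B × Bool)) (a : A × Bool) : List (B × Bool) := orient a.2 (f a.1)

theorem extendInv_true (f : A → List (B × Bool)) (a : A) : extendInv f (a, true) = f a := rfl

theorem extendInv_false (f : A → List (B × Bool)) (a : A) :
    extendInv f (a, false) = invRev (f a) := rfl

theorem extendInv_letterInv (f : A → List (B × Bool)) (a : A × Bool) :
    extendInv f (letterInv a) = invRev (extendInv f a) :=
  orient_not _ _

theorem flatMap_extendInv_invRev (f : A → List (B × Bool)) (w : List (A × Bool)) :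
    (invRev w).flatMap (extendInv f) = invRev (w.flatMap (extendInv f)) := by
  induction w with
  | nil => rfl
  | cons a w ih =>
    rw [FreeGroup.invRev_cons, List.flatMap_append, ih, List.flatMap_cons,
      FreeGroup.invRev_append, invRev_singleton, List.flatMap_singleton, extendInv_letterInv]

theorem flatMap_extendInv_orient (f : A → List (B × Bool)) (b : Bool) (w : List (A × Bool)) :
    (orient b w).flatMap (extendInv f) = orient b (w.flatMap (extendInv f)) := by
  cases b
  · exact flatMap_extendInv_invRev f w
  · rfl

end Words

section SplitBy

variable {A : Type*} {r : A → A → Bool}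

theorem splitBy_append_of_rel {u v c d : List A} {C D : List (List A)}
    (hu : u.splitBy r = C ++ [c]) (hv : v.splitBy r = d :: D)
    (h : ∀ x ∈ u.getLast?, ∀ y ∈ v.head?, r x y = true) :
    (u ++ v).splitBy r = C ++ (c ++ d) :: D := by
  rw [List.splitBy_eq_iff] at hu hv ⊢
  obtain ⟨rfl, hC, chainC, breakC⟩ := hu
  obtain ⟨rfl, hD, chainD, breakD⟩ := hv
  have hc : c ≠ [] := fun hc => hC (by simp [hc])
  have hd : d ≠ [] := fun hd => hD (by simp [hd])
  have hcd : (c ++ d).IsChain fun x y => r x y :=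
    (chainC c (by simp)).append (chainD d (by simp)) fun x hx y hy =>
      h x (by simpa [List.getLast?_append_of_ne_nil _ hc] using hx) y
        (by simpa [List.head?_append_of_ne_nil _ hd] using hy)
  refine ⟨by simp, by simp_all, ?_, ?_⟩
  · intro m hm
    rcases List.mem_append.1 hm with hm | hm
    · exact chainC m (List.mem_append_left _ hm)
    rcases List.mem_cons.1 hm with rfl | hm
    · exact hcd
    · exact chainD m (List.mem_cons_of_mem _ hm)
  · rw [List.isChain_append] at breakC ⊢
    rw [List.isChain_cons] at breakD ⊢
    refine ⟨breakC.1, ⟨fun y hy => ?_, breakD.2⟩, fun x hx y hy => ?_⟩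
    · obtain ⟨_, hy', hr⟩ := breakD.1 y hy
      exact ⟨by simp [hc], hy', by rwa [List.getLast_append_of_ne_nil _ hd]⟩
    · obtain ⟨hx', _, hr⟩ := breakC.2.2 x hx c (by simp)
      obtain rfl : c ++ d = y := by simpa using hy
      exact ⟨hx', by simp [hc], by rwa [List.head_append_of_ne_nil hc]⟩

theorem length_splitBy_append_of_rel {u v : List A} (hu : u ≠ []) (hv : v ≠ [])
    (h : ∀ x ∈ u.getLast?, ∀ y ∈ v.head?, r x y = true) :
    ((u ++ v).splitBy r).length + 1 = (u.splitBy r).length + (v.splitBy r).length := by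
  obtain ⟨d, D, hD⟩ := List.exists_cons_of_ne_nil (List.splitBy_ne_nil (r := r).2 hv)
  rcases List.eq_nil_or_concat (u.splitBy r) with hC | ⟨C, c, hC⟩
  · exact absurd (List.splitBy_eq_nil.1 hC) hu
  rw [List.concat_eq_append] at hC
  rw [splitBy_append_of_rel hC hD h, hC, hD]
  simp only [List.length_append, List.length_cons, List.length_nil]
  omega

theorem length_splitBy_append_le (u v : List A) :
    ((u ++ v).splitBy r).length ≤ (u.splitBy r).length + (v.splitBy r).length := by
  rcases List.eq_nil_or_concat u with rfl | ⟨u', x, rfl⟩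
  · simp
  cases v with
  | nil => simp
  | cons y v =>
    cases hxy : r x y with
    | false => rw [List.splitBy_append (by simpa using hxy), List.length_append]
    | true =>
      have := length_splitBy_append_of_rel (u := u'.concat x) (v := y :: v) (r := r) (by simp)
        (by simp) (by simpa using hxy)
      omega

end SplitBy

/-! ### Linked letters and chunks -/

section Chunks

open FreeGroup (invRev)

variable {β : Type*} [DecidableEq β] (s : β → Bool)

/-- Two consecutive letters are linked if they are equal, or if the first lies in the left part and
the second in the right part of the partition of the letters given by `s`: of the two letters
`(d, true)` and `(d, false)`, the left one is `(d, s d)`. -/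
def link (a b : β × Bool) : Bool := decide (a = b) || (a.2 == s a.1 && b.2 != s b.1)

theorem link_letterInv (a b : β × Bool) : link s (letterInv b) (letterInv a) = link s a b := by
  have eq_iff : decide (letterInv b = letterInv a) = decide (a = b) := by
    rw [decide_eq_decide, letterInv_inj, eq_comm]
  have side_iff : ((letterInv b).2 == s (letterInv b).1 && (letterInv a).2 != s (letterInv a).1) =
      (a.2 == s a.1 && b.2 != s b.1) := by
    simp only [letterInv]
    cases a.2 <;> cases b.2 <;> cases s a.1 <;> cases s b.1 <;> rfl
  rw [link, link, eq_iff, side_iff]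

/-- The maximal factors of a word in which consecutive letters are linked. Each of them has the form
`a ^ i` or `a ^ i * b ^ j`. -/
def chunks (w : List (β × Bool)) : List (List (β × Bool)) := w.splitBy (link s)

variable {s}

theorem flatten_chunks (w : List (β × Bool)) : (chunks s w).flatten = w :=
  List.flatten_splitBy _ _

theorem ne_nil_of_mem_chunks {w c : List (β × Bool)} (hc : c ∈ chunks s w) : c ≠ [] :=
  List.ne_nil_of_mem_splitBy hc

theorem infix_of_mem_chunks {w c : List (β × Bool)} (hc : c ∈ chunks s w) : c <:+: w := by
  rw [← flatten_chunks (s := s) w]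
  exact List.infix_of_mem_flatten hc

theorem chunks_of_mem_chunks {w c : List (β × Bool)} (hc : c ∈ chunks s w) : chunks s c = [c] :=
  List.splitBy_of_isChain (ne_nil_of_mem_chunks hc) (List.isChain_of_mem_splitBy hc)

theorem chunks_invRev (w : List (β × Bool)) :
    chunks s (invRev w) = ((chunks s w).map invRev).reverse := by
  rw [chunks, List.splitBy_eq_iff]
  refine ⟨?_, ?_, ?_, ?_⟩
  · rw [← invRev_flatten, flatten_chunks]
  · simp only [List.mem_reverse, List.mem_map, not_exists, not_and]
    exact fun c hc => invRev_ne_nil (ne_nil_of_mem_chunks hc)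
  · intro m hm
    obtain ⟨c, hc, rfl⟩ := List.mem_map.1 (List.mem_reverse.1 hm)
    rw [invRev_eq_reverse_map, List.isChain_reverse, List.isChain_map]
    exact (List.isChain_of_mem_splitBy hc).imp fun a b hab => by rwa [link_letterInv]
  · rw [List.isChain_reverse, List.isChain_map]
    refine (List.isChain_getLast_head_splitBy (link s) w).imp ?_
    rintro c d ⟨hc, hd, hcd⟩
    refine ⟨invRev_ne_nil hd, invRev_ne_nil hc, ?_⟩
    simp only [invRev_eq_reverse_map, List.getLast_reverse, List.head_reverse, List.head_map,
      List.getLast_map]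
    rwa [link_letterInv]

theorem length_chunks_orient (b : Bool) (w : List (β × Bool)) :
    (chunks s (orient b w)).length = (chunks s w).length := by
  cases b <;> simp [orient, chunks_invRev]

variable (s) in
/-- The last letter of `u` is not linked to the first letter of `v`. -/
def Separated (u v : List (β × Bool)) : Prop :=
  ∀ x ∈ u.getLast?, ∀ y ∈ v.head?, link s x y = false

theorem Separated.invRev {u v : List (β × Bool)} (h : Separated s u v) :
    Separated s (invRev v) (invRev u) := by
  intro x hx y hy
  rw [getLast?_invRev, Option.mem_def, Option.map_eq_some_iff] at hx
  rw [head?_invRev, Option.mem_def, Option.map_eq_some_iff] at hy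
  obtain ⟨a, ha, rfl⟩ := hx
  obtain ⟨b, hb, rfl⟩ := hy
  rw [link_letterInv]
  exact h b hb a ha

theorem Separated.append_left {u v : List (β × Bool)} (h : Separated s u v) (hu : u ≠ [])
    (t : List (β × Bool)) : Separated s (t ++ u) v := by
  rwa [Separated, List.getLast?_append_of_ne_nil _ hu]

theorem Separated.append_right {u v : List (β × Bool)} (h : Separated s u v) (hv : v ≠ [])
    (t : List (β × Bool)) : Separated s u (v ++ t) := by
  rwa [Separated, List.head?_append_of_ne_nil _ hv]

theorem separated_flatten_of_chunks_eq {w : List (β × Bool)} {C D : List (List (β × Bool))}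
    (h : chunks s w = C ++ D) : Separated s C.flatten D.flatten := by
  have breaks := List.isChain_getLast_head_splitBy (link s) w
  rw [← chunks, h, List.isChain_append] at breaks
  rcases List.eq_nil_or_concat C with rfl | ⟨C', c, rfl⟩
  · simp [Separated]
  cases D with
  | nil => simp [Separated]
  | cons d D =>
    obtain ⟨hc, hd, hcd⟩ := breaks.2.2 c (by simp) d (by simp)
    have : Separated s c d := by
      rw [Separated, List.getLast?_eq_some_getLast hc, List.head?_eq_some_head hd]
      simpa using hcd
    simpa using (this.append_left hc C'.flatten).append_right hd D.flatten

theorem chunks_append {u v : List (β × Bool)} (h : Separated s u v) :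
    chunks s (u ++ v) = chunks s u ++ chunks s v :=
  List.splitBy_append h

theorem length_chunks_append_le (u v : List (β × Bool)) :
    (chunks s (u ++ v)).length ≤ (chunks s u).length + (chunks s v).length :=
  length_splitBy_append_le u v

theorem length_chunks_concat_of_link {u : List (β × Bool)} {a b : β × Bool}
    (ha : a ∈ u.getLast?) (hab : link s a b) :
    (chunks s (u ++ [b])).length = (chunks s u).length := by
  have hu : u ≠ [] := by
    rintro rfl
    simp at ha
  have := length_splitBy_append_of_rel (r := link s) (u := u) (v := [b]) hu (by simp) (by
    rw [Option.mem_def] at ha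
    simpa [ha] using hab)
  exact Nat.succ_injective this

theorem length_chunks_concat_add_countP_le {w : List (β × Bool)} {z : Option (β × Bool)}
    (a : β × Bool) (hz : ∀ y ∈ z, y ∈ w.getLast?) :
    (chunks s (w ++ [a])).length +
        (z.map fun y => (y, a)).toList.countP (fun p => link s p.1 p.2) ≤
      (chunks s w).length + 1 := by
  have chunks_le : (chunks s (w ++ [a])).length ≤ (chunks s w).length + 1 :=
    length_chunks_append_le w [a]
  cases z with
  | none => exact chunks_le
  | some y =>
    simp only [Option.map_some, Option.toList_some, List.countP_singleton]
    split_ifs with hlink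
    · rw [length_chunks_concat_of_link (hz y rfl) hlink]
    · exact chunks_le

end Chunks

section RunLength

variable {A : Type*} [DecidableEq A]

/-- The run-length encoding of a word, as a list of pairs of a letter and a positive exponent. -/
def runLength : List A → List (A × ℕ)
  | [] => []
  | a :: w =>
    match runLength w with
    | [] => [(a, 1)]
    | (b, n) :: q => if a = b then (b, n + 1) :: q else (a, 1) :: (b, n) :: q

theorem powerWord_runLength (w : List A) : powerWord id (runLength w) = w := by
  induction w with
  | nil => rfl
  | cons a w ih =>
    rw [runLength]
    split
    · simp_all [powerWord]
    · split_ifs with hab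
      · simp_all [powerWord, List.replicate_succ]
      · simp_all [powerWord]

theorem one_le_of_mem_runLength {w : List A} {p : A × ℕ} (hp : p ∈ runLength w) : 1 ≤ p.2 := by
  induction w generalizing p with
  | nil => simp [runLength] at hp
  | cons a w ih =>
    rw [runLength] at hp
    split at hp
    case h_1 => simp_all
    case h_2 b n q hq =>
      have ihn : 1 ≤ n := ih (p := (b, n)) (by simp [hq])
      have ihq (hp : p ∈ q) : 1 ≤ p.2 := ih (by simp [hq, hp])
      split_ifs at hp with hab
      · rcases List.mem_cons.1 hp with rfl | hp
        · exact Nat.le_add_left 1 n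
        · exact ihq hp
      · rcases List.mem_cons.1 hp with rfl | hp
        · exact le_rfl
        rcases List.mem_cons.1 hp with rfl | hp
        · exact ihn
        · exact ihq hp

theorem runLength_head?_fst (w : List A) : (runLength w).head?.map Prod.fst = w.head? := by
  cases w with
  | nil => rfl
  | cons a w =>
    rw [runLength]
    split
    · rfl
    · split_ifs with hab
      · simp [hab]
      · rfl

/-- The letters change at most once in a chunk: the letter after a change lies in the right part,
and only a letter of the left part is linked to a different one. -/
theorem length_runLength_of_isChain_link {β : Type*} [DecidableEq β] {s : β → Bool}
    {c : List (β × Bool)} (hc : c.IsChain fun x y => link s x y) :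
    (runLength c).length ≤ 2 ∧
      ∀ a ∈ c.head?, a.2 ≠ s a.1 → (runLength c).length ≤ 1 := by
  induction c with
  | nil => simp [runLength]
  | cons a c ih =>
    rw [List.isChain_cons] at hc
    obtain ⟨length_le_two, length_le_one⟩ := ih hc.2
    have head_eq := runLength_head?_fst c
    rw [runLength]
    split
    case h_1 => simp
    case h_2 b n q hq =>
      rw [hq] at head_eq length_le_two length_le_one
      have link_ab : link s a b := hc.1 b head_eq.symm
      have length_le_one := length_le_one b head_eq.symm
      split_ifs with hab
      · subst hab
        simp only [List.length_cons, List.head?_cons, Option.mem_some_iff] at *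
        refine ⟨length_le_two, ?_⟩
        rintro a rfl
        exact length_le_one
      · simp only [link, hab, decide_false, Bool.false_or, Bool.and_eq_true, beq_iff_eq,
          bne_iff_ne] at link_ab
        have := length_le_one link_ab.2
        simp only [List.length_cons, List.head?_cons, Option.mem_some_iff] at this ⊢
        refine ⟨by omega, ?_⟩
        rintro a rfl ha
        exact absurd link_ab.1 ha

theorem length_runLength_of_mem_chunks {β : Type*} [DecidableEq β] {s : β → Bool}
    {w c : List (β × Bool)} (hc : c ∈ chunks s w) : (runLength c).length ≤ 2 :=
  (length_runLength_of_isChain_link (List.isChain_of_mem_splitBy hc)).1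

end RunLength

/-! ### Reduced words of blocks and their compression -/

section Blocks

open FreeGroup (invRev)

/-- A compressed letter standing for a nonempty reduced word over the alphabet `α`, of which only
the first and the last letter and an arbitrary label are remembered. -/
structure Block (α : Type*) where
  /-- The first letter of the word. -/
  first : α × Bool
  /-- The last letter of the word. -/
  last : α × Bool
  /-- The label of the word. -/
  index : ℕ
deriving DecidableEq, Inhabited

/-- A block or its formal inverse. -/
abbrev BlockLetter (α : Type*) := Block α × Bool

variable {α : Type*}

/-- The first letter of the word a signed block stands for. -/
def firstLetter (a : BlockLetter α) : α × Bool := if a.2 then a.1.first else letterInv a.1.last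

/-- The last letter of the word a signed block stands for. -/
def lastLetter (a : BlockLetter α) : α × Bool := if a.2 then a.1.last else letterInv a.1.first

theorem firstLetter_letterInv (a : BlockLetter α) :
    firstLetter (letterInv a) = letterInv (lastLetter a) := by
  obtain ⟨d, _ | _⟩ := a <;> simp [firstLetter, lastLetter, letterInv]

theorem lastLetter_letterInv (a : BlockLetter α) :
    lastLetter (letterInv a) = letterInv (firstLetter a) := by
  obtain ⟨d, _ | _⟩ := a <;> simp [firstLetter, lastLetter, letterInv]

/-- No cancellation occurs between consecutive blocks of a word. -/
def Reduced (w : List (BlockLetter α)) : Prop :=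
  w.IsChain fun a b => firstLetter b ≠ letterInv (lastLetter a)

theorem Reduced.of_infix {u w : List (BlockLetter α)} (h : Reduced w) (hu : u <:+: w) : Reduced u :=
  List.IsChain.infix h hu

theorem Reduced.invRev {w : List (BlockLetter α)} (h : Reduced w) : Reduced (invRev w) := by
  rw [Reduced, invRev_eq_reverse_map, List.isChain_reverse, List.isChain_map]
  refine List.IsChain.imp (fun a b hab => ?_) h
  rw [firstLetter_letterInv, lastLetter_letterInv, letterInv_letterInv]
  exact hab.symm

theorem Reduced.of_orient {b : Bool} {w : List (BlockLetter α)} (h : Reduced (orient b w)) :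
    Reduced w := by
  cases b
  · simpa [orient] using h.invRev
  · exact h

theorem Reduced.ne_invRev {w : List (BlockLetter α)} (h : Reduced w) (hw : w ≠ []) :
    w ≠ FreeGroup.invRev w := by
  induction w using List.bidirectionalRec with
  | nil => exact absurd rfl hw
  | singleton a =>
    rw [invRev_singleton, ne_eq, List.singleton_inj]
    exact (letterInv_ne a).symm
  | cons_append a l b ih =>
    intro heq
    simp only [invRev_eq_reverse_map, List.map_cons, List.map_append, List.map_nil,
      List.reverse_cons, List.reverse_append, List.reverse_nil, List.nil_append, List.cons_append,
      List.cons.injEq] at heq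
    obtain ⟨rfl, heq⟩ := heq
    rcases eq_or_ne l [] with rfl | hl
    · simp [Reduced, lastLetter_letterInv] at h
    · exact ih (h.of_infix ⟨[letterInv b], [b], by simp⟩) hl (List.append_inj_left' heq rfl)

open scoped Classical in
/-- A choice of one word out of each pair of a word and its formal inverse. -/
noncomputable def isPositive (c : List (BlockLetter α)) : Bool :=
  decide (WellOrderingRel c (invRev c))

open scoped Classical in
theorem isPositive_invRev {c : List (BlockLetter α)} (h : Reduced c) (hc : c ≠ []) :
    isPositive (invRev c) = !isPositive c := by
  have trichotomy := trichotomous_of WellOrderingRel c (invRev c)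
  have asymmetry : WellOrderingRel c (invRev c) → ¬WellOrderingRel (invRev c) c :=
    asymm_of WellOrderingRel
  have := h.ne_invRev hc
  rw [isPositive, isPositive, FreeGroup.invRev_invRev, ← decide_not, decide_eq_decide]
  tauto

/-- The positive one of the words `c` and `c⁻¹`. -/
noncomputable def positivePart (c : List (BlockLetter α)) : List (BlockLetter α) :=
  orient (isPositive c) c

theorem orient_positivePart (c : List (BlockLetter α)) :
    orient (isPositive c) (positivePart c) = c :=
  orient_orient _ _

theorem positivePart_ne_nil {c : List (BlockLetter α)} (hc : c ≠ []) : positivePart c ≠ [] :=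
  orient_ne_nil hc

theorem Reduced.positivePart {c : List (BlockLetter α)} (h : Reduced c) :
    Reduced (positivePart c) := by
  rw [← orient_positivePart c] at h
  exact h.of_orient

theorem positivePart_invRev {c : List (BlockLetter α)} (h : Reduced c) (hc : c ≠ []) :
    positivePart (FreeGroup.invRev c) = positivePart c := by
  rw [Recompression.positivePart, Recompression.positivePart, isPositive_invRev h hc, orient_not]
  cases isPositive c <;> simp [orient]

variable [Inhabited α]

/-- The first letter of the word a nonempty word of blocks stands for. -/
def wordFirst (c : List (BlockLetter α)) : α × Bool := firstLetter (c.headD default)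

/-- The last letter of the word a nonempty word of blocks stands for. -/
def wordLast (c : List (BlockLetter α)) : α × Bool := lastLetter (c.getLastD default)

theorem wordFirst_invRev {c : List (BlockLetter α)} (hc : c ≠ []) :
    wordFirst (invRev c) = letterInv (wordLast c) := by
  rcases List.eq_nil_or_concat c with rfl | ⟨l, a, rfl⟩
  · exact absurd rfl hc
  · simp [wordFirst, wordLast, invRev_eq_reverse_map, firstLetter_letterInv]

theorem wordLast_invRev {c : List (BlockLetter α)} (hc : c ≠ []) :
    wordLast (invRev c) = letterInv (wordFirst c) := by
  rw [← letterInv_inj, ← wordFirst_invRev (invRev_ne_nil hc), FreeGroup.invRev_invRev,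
    letterInv_letterInv]

theorem wordFirst_orient (b : Bool) {c : List (BlockLetter α)} (hc : c ≠ []) :
    wordFirst (orient b c) = if b then wordFirst c else letterInv (wordLast c) := by
  cases b
  · exact wordFirst_invRev hc
  · rfl

theorem wordLast_orient (b : Bool) {c : List (BlockLetter α)} (hc : c ≠ []) :
    wordLast (orient b c) = if b then wordLast c else letterInv (wordFirst c) := by
  cases b
  · exact wordLast_invRev hc
  · rfl

theorem wordFirst_of_mem_head? {c : List (BlockLetter α)} {a : BlockLetter α}
    (ha : a ∈ c.head?) : wordFirst c = firstLetter a := by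
  rw [wordFirst, List.headD_eq_head?_getD, ha, Option.getD_some]

theorem wordLast_of_mem_getLast? {c : List (BlockLetter α)} {a : BlockLetter α}
    (ha : a ∈ c.getLast?) : wordLast c = lastLetter a := by
  rw [wordLast, List.getLastD_eq_getLast?, ha, Option.getD_some]

theorem reduced_flatten_iff {L : List (List (BlockLetter α))} (hL : [] ∉ L) :
    Reduced L.flatten ↔ (∀ c ∈ L, Reduced c) ∧
      L.IsChain fun c d => wordFirst d ≠ letterInv (wordLast c) := by
  rw [Reduced, List.isChain_flatten hL]
  refine and_congr_right fun _ => List.IsChain.iff_of_mem_imp fun c d hc hd => ?_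
  have hx := List.getLast?_eq_some_getLast (ne_of_mem_of_not_mem hc hL)
  have hy := List.head?_eq_some_head (ne_of_mem_of_not_mem hd hL)
  rw [wordLast_of_mem_getLast? hx, wordFirst_of_mem_head? hy]
  simp [hx, hy]

theorem wordFirst_extendInv {f : Block α → List (BlockLetter α)} {a : BlockLetter α}
    (hne : f a.1 ≠ []) (hfirst : wordFirst (f a.1) = a.1.first)
    (hlast : wordLast (f a.1) = a.1.last) : wordFirst (extendInv f a) = firstLetter a := by
  rw [extendInv, wordFirst_orient _ hne, hfirst, hlast, firstLetter]

theorem wordLast_extendInv {f : Block α → List (BlockLetter α)} {a : BlockLetter α}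
    (hne : f a.1 ≠ []) (hfirst : wordFirst (f a.1) = a.1.first)
    (hlast : wordLast (f a.1) = a.1.last) : wordLast (extendInv f a) = lastLetter a := by
  rw [extendInv, wordLast_orient _ hne, hfirst, hlast, lastLetter]

theorem Reduced.flatMap_extendInv {f : Block α → List (BlockLetter α)} (hne : ∀ d, f d ≠ [])
    (hred : ∀ d, Reduced (f d)) (hfirst : ∀ d, wordFirst (f d) = d.first)
    (hlast : ∀ d, wordLast (f d) = d.last) {w : List (BlockLetter α)} (hw : Reduced w) :
    Reduced (w.flatMap (extendInv f)) := by
  rw [List.flatMap_def, reduced_flatten_iff]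
  · constructor
    · intro c hc
      obtain ⟨a, -, rfl⟩ := List.mem_map.1 hc
      refine Reduced.of_orient (b := a.2) ?_
      rw [extendInv, orient_orient]
      exact hred a.1
    · rw [List.isChain_map]
      refine List.IsChain.imp (fun a b hab => ?_) hw
      rwa [wordFirst_extendInv (hne _) (hfirst _) (hlast _),
        wordLast_extendInv (hne _) (hfirst _) (hlast _)]
  · simp only [List.mem_map, not_exists, not_and]
    exact fun a _ => orient_ne_nil (hne a.1)

/-- Replacing a chunk by a single block. A chunk and its inverse are replaced by inverse letters,
and the block is labelled by `label`. -/
noncomputable def encodeChunk (label : List (BlockLetter α) → ℕ) (c : List (BlockLetter α)) :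
    BlockLetter α :=
  (⟨wordFirst (positivePart c), wordLast (positivePart c), label (positivePart c)⟩, isPositive c)

variable {label : List (BlockLetter α) → ℕ}

theorem encodeChunk_invRev {c : List (BlockLetter α)} (h : Reduced c) (hc : c ≠ []) :
    encodeChunk label (FreeGroup.invRev c) = letterInv (encodeChunk label c) := by
  rw [encodeChunk, positivePart_invRev h hc, isPositive_invRev h hc]
  rfl

theorem firstLetter_encodeChunk {c : List (BlockLetter α)} (hc : c ≠ []) :
    firstLetter (encodeChunk label c) = wordFirst c := by
  conv_rhs => rw [← orient_positivePart c, wordFirst_orient _ (positivePart_ne_nil hc)]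
  rfl

theorem lastLetter_encodeChunk {c : List (BlockLetter α)} (hc : c ≠ []) :
    lastLetter (encodeChunk label c) = wordLast c := by
  conv_rhs => rw [← orient_positivePart c, wordLast_orient _ (positivePart_ne_nil hc)]
  rfl

variable [DecidableEq α] {s : Block α → Bool}

/-- The compression of a word: each chunk is replaced by a single block. -/
noncomputable def compress (s : Block α → Bool) (label : List (BlockLetter α) → ℕ)
    (w : List (BlockLetter α)) : List (BlockLetter α) :=
  (chunks s w).map (encodeChunk label)

theorem compress_append {u v : List (BlockLetter α)} (h : Separated s u v) :
    compress s label (u ++ v) = compress s label u ++ compress s label v := by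
  rw [compress, chunks_append h, List.map_append]
  rfl

theorem compress_invRev {w : List (BlockLetter α)} (h : Reduced w) :
    compress s label (FreeGroup.invRev w) = FreeGroup.invRev (compress s label w) := by
  rw [compress, chunks_invRev, compress, invRev_eq_reverse_map, List.map_reverse, List.map_map,
    List.map_map]
  congr 1
  exact List.map_congr_left fun c hc =>
    encodeChunk_invRev (h.of_infix (infix_of_mem_chunks hc)) (ne_nil_of_mem_chunks hc)

theorem compress_orient {w : List (BlockLetter α)} (b : Bool) (h : Reduced w) :
    compress s label (orient b w) = orient b (compress s label w) := by
  cases b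
  · exact compress_invRev h
  · rfl

theorem Reduced.compress {w : List (BlockLetter α)} (h : Reduced w) :
    Reduced (compress s label w) := by
  rw [← flatten_chunks (s := s) w,
    reduced_flatten_iff fun hnil => ne_nil_of_mem_chunks hnil rfl] at h
  rw [Recompression.compress, Reduced, List.isChain_map]
  refine h.2.imp_of_mem_imp fun c d hc hd hcd => ?_
  rwa [firstLetter_encodeChunk (ne_nil_of_mem_chunks hd),
    lastLetter_encodeChunk (ne_nil_of_mem_chunks hc)]

theorem length_compress_le (w : List (BlockLetter α)) : (compress s label w).length ≤ w.length := by
  calc (compress s label w).length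
      = ((chunks s w).map List.length).length := by simp only [compress, List.length_map]
    _ ≤ ((chunks s w).map List.length).sum := List.length_le_sum_of_one_le _ fun i hi => by
        obtain ⟨c, hc, rfl⟩ := List.mem_map.1 hi
        exact List.length_pos_iff.2 (ne_nil_of_mem_chunks hc)
    _ = w.length := by rw [← List.length_flatten, flatten_chunks]

end Blocks

section PowerWord

variable {α : Type*}

theorem getLast?_powerWord {A κ : Type*} {x : κ → ℕ} (hx : ∀ k, 1 ≤ x k) (q : List (A × κ)) :
    (powerWord x q).getLast? = q.getLast?.map Prod.fst := by
  rcases List.eq_nil_or_concat q with rfl | ⟨q, p, rfl⟩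
  · rfl
  · have := hx p.2
    rw [List.concat_eq_append, powerWord_append]
    simp [powerWord, List.getLast?_replicate, Nat.ne_of_gt this]

/-- Raising the exponents does not create cancellation: if an exponent is at least `2`, then its
letter may already follow itself. -/
theorem Reduced.powerWord {x : ℕ → ℕ} (hx : ∀ n, 1 ≤ x n) (hx1 : x 1 = 1)
    {q : List (BlockLetter α × ℕ)} (hq : ∀ p ∈ q, 1 ≤ p.2) (h : Reduced (powerWord id q)) :
    Reduced (powerWord x q) := by
  have nil_notMem {y : ℕ → ℕ} (hy : ∀ p ∈ q, 1 ≤ y p.2) :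
      [] ∉ q.map fun p => List.replicate (y p.2) p.1 := by
    simp only [List.mem_map, List.replicate_eq_nil_iff, not_exists, not_and]
    exact fun p hp => Nat.one_le_iff_ne_zero.1 (hy p hp)
  rw [Reduced, Recompression.powerWord, List.flatMap_def, List.isChain_flatten (nil_notMem hq)] at h
  rw [Reduced, Recompression.powerWord, List.flatMap_def,
    List.isChain_flatten (nil_notMem fun p _ => hx p.2)]
  refine ⟨fun l hl => ?_, ?_⟩
  · obtain ⟨p, hp, rfl⟩ := List.mem_map.1 hl
    have run := h.1 _ (List.mem_map.2 ⟨p, hp, rfl⟩)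
    rcases (hq p hp).eq_or_lt with hp1 | hp1
    · rw [← hp1, hx1]
      simp
    · obtain ⟨n, hn⟩ := Nat.exists_eq_add_of_le' hp1
      rw [id_eq, hn] at run
      simp only [List.replicate_succ, List.isChain_cons_cons] at run
      exact List.isChain_replicate_of_rel _ run.1
  · have junctions := h.2
    rw [List.isChain_map] at junctions ⊢
    refine junctions.imp_of_mem_imp fun a b ha hb hab c hc d hd => hab c ?_ d ?_
    · have := hq a ha
      have := hx a.2
      rw [List.getLast?_replicate, if_neg (by omega)] at hc
      rwa [List.getLast?_replicate, id_eq, if_neg (by omega)]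
    · have := hq b hb
      have := hx b.2
      rw [List.head?_replicate, if_neg (by omega)] at hd
      rwa [List.head?_replicate, id_eq, if_neg (by omega)]

end PowerWord

/-! ### The choice of a partition -/

section Averaging

theorem card_le_four_mul_card_filter {D : Type*} [Fintype D] [DecidableEq D] {d₁ d₂ : D}
    (hd : d₁ ≠ d₂) (x y : Bool) :
    Fintype.card (D → Bool) ≤ 4 * Finset.card {s : D → Bool | s d₁ = x ∧ s d₂ = y} := by
  let fiber : Finset (D → Bool) := {s | s d₁ = x ∧ s d₂ = y}
  let normalize (s : D → Bool) : (D → Bool) × Bool × Bool :=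
    (Function.update (Function.update s d₁ x) d₂ y, s d₁, s d₂)
  have normalize_injective : Function.Injective normalize := by
    intro s t hst
    simp only [normalize, Prod.mk.injEq] at hst
    ext d
    rcases eq_or_ne d d₁ with rfl | h₁
    · rw [hst.2.1]
    rcases eq_or_ne d d₂ with rfl | h₂
    · rw [hst.2.2]
    simpa [h₁, h₂] using congrFun hst.1 d
  calc Fintype.card (D → Bool) ≤ (fiber ×ˢ (Finset.univ : Finset (Bool × Bool))).card :=
        Finset.card_le_card_of_injOn normalize (by simp [Set.MapsTo, normalize, fiber, hd])
          normalize_injective.injOn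
    _ = 4 * fiber.card := by rw [Finset.card_product, mul_comm]; rfl

theorem exists_length_le_mul_countP {S γ : Type*} [Fintype S] [Nonempty S] (p : S → γ → Bool)
    (k : ℕ) {L : List γ} (hL : ∀ c ∈ L, Fintype.card S ≤ k * Finset.card {s | p s c = true}) :
    ∃ s, L.length ≤ k * L.countP (p s) := by
  have double_count : ∑ _s : S, L.length ≤ ∑ s, k * L.countP (p s) := by
    induction L with
    | nil => simp
    | cons c L ih =>
      have hc := hL c List.mem_cons_self
      have ih := ih fun c hc => hL c (List.mem_cons_of_mem _ hc)
      simp only [List.length_cons, List.countP_cons, mul_add, Finset.sum_add_distrib,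
        ← Finset.mul_sum, Finset.card_filter, Finset.sum_const, smul_eq_mul, mul_one,
        Finset.card_univ] at hc ih ⊢
      linarith
  obtain ⟨s, -, hs⟩ := Finset.exists_le_of_sum_le Finset.univ_nonempty double_count
  exact ⟨s, hs⟩

/-- A uniformly random partition links two letters that do not cancel with probability at least
`1 / 4`. -/
theorem exists_partition_length_le {β : Type*} [DecidableEq β]
    {L : List ((β × Bool) × (β × Bool))} (hL : ∀ p ∈ L, p.2 ≠ letterInv p.1) :
    ∃ s : β → Bool, L.length ≤ 4 * L.countP fun p => link s p.1 p.2 := by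
  let D : Finset β := (L.flatMap fun p => [p.1.1, p.2.1]).toFinset
  have mem_D {p : (β × Bool) × (β × Bool)} (hp : p ∈ L) : p.1.1 ∈ D ∧ p.2.1 ∈ D := by
    simp only [D, List.mem_toFinset, List.mem_flatMap]
    exact ⟨⟨p, hp, by simp⟩, ⟨p, hp, by simp⟩⟩
  let extend (s : D → Bool) (d : β) : Bool := if h : d ∈ D then s ⟨d, h⟩ else false
  refine (exists_length_le_mul_countP
    (fun s (p : (β × Bool) × (β × Bool)) => link (extend s) p.1 p.2) 4
    fun p hp => ?_).imp' extend fun _ => id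
  by_cases heq : p.1 = p.2
  · simp [link, heq]
  have hne : (⟨p.1.1, (mem_D hp).1⟩ : D) ≠ ⟨p.2.1, (mem_D hp).2⟩ := by
    rintro hfst
    have not_inverse := hL p hp
    obtain ⟨⟨d, b⟩, d', b'⟩ := p
    obtain rfl : d = d' := congrArg Subtype.val hfst
    cases b <;> cases b' <;> simp [letterInv] at not_inverse heq
  refine (card_le_four_mul_card_filter hne p.1.2 (!p.2.2)).trans
    (Nat.mul_le_mul_left 4 (Finset.card_le_card fun s hs => ?_))
  simp only [Finset.mem_filter_univ] at hs ⊢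
  simp [link, extend, mem_D hp, hs.1, hs.2]

end Averaging

/-! ### Words with variables -/

section SymbolicWords

open FreeGroup (invRev)

/-- Words over letters from `A` and signed variables from `V`. -/
abbrev SymbolicWord (A V : Type*) := List (A ⊕ (V × Bool))

variable {A B V κ : Type*}

/-- The letters occurring in a symbolic word, in their order. -/
def letters (U : SymbolicWord A V) : List A := U.filterMap Sum.getLeft?

/-- The signed variables occurring in a symbolic word, in their order. -/
def vars (U : SymbolicWord A V) : List (V × Bool) := U.filterMap Sum.getRight?

@[simp] theorem letters_nil : letters ([] : SymbolicWord A V) = [] := rfl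

@[simp] theorem letters_cons_inl (a : A) (U : SymbolicWord A V) :
    letters (Sum.inl a :: U) = a :: letters U := rfl

@[simp] theorem letters_cons_inr (v : V × Bool) (U : SymbolicWord A V) :
    letters (Sum.inr v :: U) = letters U := rfl

@[simp] theorem letters_append (U U' : SymbolicWord A V) :
    letters (U ++ U') = letters U ++ letters U' :=
  List.filterMap_append

@[simp] theorem letters_map_inl (w : List A) :
    letters (w.map Sum.inl : SymbolicWord A V) = w := by
  rw [letters, List.filterMap_map]
  exact List.filterMap_some

@[simp] theorem vars_nil : vars ([] : SymbolicWord A V) = [] := rfl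

@[simp] theorem vars_cons_inl (a : A) (U : SymbolicWord A V) :
    vars (Sum.inl a :: U) = vars U := rfl

@[simp] theorem vars_cons_inr (v : V × Bool) (U : SymbolicWord A V) :
    vars (Sum.inr v :: U) = v :: vars U := rfl

@[simp] theorem vars_append (U U' : SymbolicWord A V) :
    vars (U ++ U') = vars U ++ vars U' :=
  List.filterMap_append

@[simp] theorem vars_map_inl (w : List A) :
    vars (w.map Sum.inl : SymbolicWord A V) = [] := by
  simp [vars]

theorem length_eq_letters_add_vars (U : SymbolicWord A V) :
    U.length = (letters U).length + (vars U).length := by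
  induction U with
  | nil => rfl
  | cons u U ih =>
    rcases u with a | v <;> simp only [letters_cons_inl, letters_cons_inr, vars_cons_inl,
      vars_cons_inr, List.length_cons] <;> omega

/-- The pairs of letters at adjacent positions of `z ++ U`, where `z` is a possible letter. -/
def adjacentPairs : Option A → SymbolicWord A V → List (A × A)
  | _, [] => []
  | z, Sum.inl a :: U => (z.map fun y => (y, a)).toList ++ adjacentPairs (some a) U
  | _, Sum.inr _ :: U => adjacentPairs none U

theorem length_letters_le_adjacentPairs (z : Option A) (U : SymbolicWord A V) :
    (letters U).length ≤
      (adjacentPairs z U).length + (vars U).length + if z.isNone then 1 else 0 := by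
  induction U generalizing z with
  | nil => simp
  | cons u U ih =>
    rcases u with a | v
    · have := ih (some a)
      cases z <;>
      · simp only [Option.isNone_some, Option.isNone_none, letters_cons_inl, vars_cons_inl,
          adjacentPairs, List.length_append, List.length_cons, Option.map_some, Option.map_none,
          Option.toList_some, Option.toList_none, List.length_nil, reduceIte,
          Bool.false_eq_true] at this ⊢
        omega
    · have := ih none
      simp only [Option.isNone_none, reduceIte, letters_cons_inr, vars_cons_inr,
        adjacentPairs, List.length_cons] at this ⊢
      omega

/-- Substituting words for the variables. -/
def eval (σ : V → List (B × Bool)) (U : SymbolicWord (B × Bool) V) : List (B × Bool) :=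
  U.flatMap (Sum.elim (fun a => [a]) (extendInv σ))

section Eval

variable (σ : V → List (B × Bool))

@[simp] theorem eval_nil : eval σ [] = [] := rfl

@[simp] theorem eval_cons_inl (a : B × Bool) (U : SymbolicWord (B × Bool) V) :
    eval σ (Sum.inl a :: U) = a :: eval σ U := rfl

@[simp] theorem eval_cons_inr (v : V × Bool) (U : SymbolicWord (B × Bool) V) :
    eval σ (Sum.inr v :: U) = extendInv σ v ++ eval σ U := rfl

@[simp] theorem eval_append (U U' : SymbolicWord (B × Bool) V) :
    eval σ (U ++ U') = eval σ U ++ eval σ U' :=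
  List.flatMap_append

@[simp] theorem eval_map_inl (w : List (B × Bool)) :
    eval σ (w.map Sum.inl) = w := by
  simp [eval, List.flatMap_map]

end Eval

theorem ne_letterInv_of_mem_adjacentPairs {α : Type*} {σ : V → List (BlockLetter α)}
    {U : SymbolicWord (BlockLetter α) V} {z : Option (BlockLetter α)}
    (h : Reduced (z.toList ++ eval σ U)) {p : BlockLetter α × BlockLetter α}
    (hp : p ∈ adjacentPairs z U) : p.2 ≠ letterInv p.1 := by
  induction U generalizing z with
  | nil => simp [adjacentPairs] at hp
  | cons u U ih =>
    rcases u with a | v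
    · rw [adjacentPairs, List.mem_append] at hp
      rcases hp with hp | hp
      · cases z with
        | none => simp at hp
        | some y =>
          obtain rfl : p = (y, a) := by simpa using hp
          intro heq
          obtain rfl : a = letterInv y := heq
          simp [Reduced, firstLetter_letterInv] at h
      · exact ih (h.of_infix ⟨z.toList, [], by simp⟩) hp
    · exact ih (z := none) (h.of_infix ⟨z.toList ++ extendInv σ v, [], by simp⟩) hp

/-- Substituting numbers for the exponents and words for the variables. -/
def evalPower (X : κ → ℕ) (τ : V → List (B × Bool))
    (Y : SymbolicWord ((B × Bool) × κ) V) : List (B × Bool) :=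
  Y.flatMap (Sum.elim (fun p => List.replicate (X p.2) p.1) (extendInv τ))

section EvalPower

variable (X : κ → ℕ) (τ : V → List (B × Bool))

@[simp] theorem evalPower_nil : evalPower X τ [] = [] := rfl

@[simp] theorem evalPower_cons_inl (p : (B × Bool) × κ) (Y : SymbolicWord ((B × Bool) × κ) V) :
    evalPower X τ (Sum.inl p :: Y) = List.replicate (X p.2) p.1 ++ evalPower X τ Y := rfl

@[simp] theorem evalPower_cons_inr (v : V × Bool) (Y : SymbolicWord ((B × Bool) × κ) V) :
    evalPower X τ (Sum.inr v :: Y) = extendInv τ v ++ evalPower X τ Y := rfl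

@[simp] theorem evalPower_append (Y Y' : SymbolicWord ((B × Bool) × κ) V) :
    evalPower X τ (Y ++ Y') = evalPower X τ Y ++ evalPower X τ Y' :=
  List.flatMap_append

@[simp] theorem evalPower_map_inl (q : List ((B × Bool) × κ)) :
    evalPower X τ (q.map Sum.inl) = powerWord X q := by
  simp [evalPower, powerWord, List.flatMap_map]

end EvalPower

end SymbolicWords

/-! ### Compression of the maximal variable-free factors -/

section Runs

variable {A B V : Type*}

/-- The maximal variable-free factors of `acc ++ Y`. -/
def runs : List A → SymbolicWord A V → List (List A)
  | acc, [] => [acc]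
  | acc, Sum.inl a :: Y => runs (acc ++ [a]) Y
  | acc, Sum.inr _ :: Y => acc :: runs [] Y

/-- Applying `f` to each of the maximal variable-free factors of `acc ++ Y`. -/
def mapRuns (f : List A → List B) : List A → SymbolicWord A V → SymbolicWord B V
  | acc, [] => (f acc).map Sum.inl
  | acc, Sum.inl a :: Y => mapRuns f (acc ++ [a]) Y
  | acc, Sum.inr v :: Y => (f acc).map Sum.inl ++ Sum.inr v :: mapRuns f [] Y

variable (f : List A → List B)

theorem mapRuns_map_inl_append (acc q : List A) (Y : SymbolicWord A V) :
    mapRuns f acc (q.map Sum.inl ++ Y) = mapRuns f (acc ++ q) Y := by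
  induction q generalizing acc with
  | nil => simp
  | cons a q ih => simpa [mapRuns] using ih (acc ++ [a])

theorem letters_mapRuns (acc : List A) (Y : SymbolicWord A V) :
    letters (mapRuns f acc Y) = (runs acc Y).flatMap f := by
  induction Y generalizing acc with
  | nil => simp [mapRuns, runs]
  | cons y Y ih => rcases y with a | v <;> simp [mapRuns, runs, ih]

theorem vars_mapRuns (acc : List A) (Y : SymbolicWord A V) :
    vars (mapRuns f acc Y) = vars Y := by
  induction Y generalizing acc with
  | nil => simp [mapRuns]
  | cons y Y ih => rcases y with a | v <;> simp [mapRuns, ih]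

theorem map_inl_infix_of_mem_runs {acc t : List A} {Y : SymbolicWord A V}
    (ht : t ∈ runs acc Y) : t.map Sum.inl <:+: acc.map Sum.inl ++ Y := by
  induction Y generalizing acc with
  | nil =>
    obtain rfl : t = acc := by simpa [runs] using ht
    simp
  | cons y Y ih =>
    rcases y with a | v
    · simpa using ih (acc := acc ++ [a]) ht
    · rcases List.mem_cons.1 ht with rfl | ht
      · exact (List.prefix_append _ _).isInfix
      · exact (ih ht).trans ⟨acc.map Sum.inl ++ [Sum.inr v], [], by simp⟩

theorem powerWord_infix_of_mem_runs {κ : Type*} (X : κ → ℕ) (τ : V → List (B × Bool))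
    {t : List ((B × Bool) × κ)} {Y : SymbolicWord ((B × Bool) × κ) V} (ht : t ∈ runs [] Y) :
    powerWord X t <:+: evalPower X τ Y := by
  obtain ⟨Y₁, Y₂, hY⟩ := map_inl_infix_of_mem_runs ht
  rw [List.map_nil, List.nil_append] at hY
  exact ⟨evalPower X τ Y₁, evalPower X τ Y₂, by simp [← hY]⟩

theorem flatMap_eval_mapRuns {C κ : Type*} {X : κ → ℕ} (τ : V → List (C × Bool))
    {φ : C → List (B × Bool)} {f : List ((B × Bool) × κ) → List (C × Bool)}
    {acc : List ((B × Bool) × κ)} {Y : SymbolicWord ((B × Bool) × κ) V}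
    (hf : ∀ t ∈ runs acc Y, (f t).flatMap (extendInv φ) = powerWord X t) :
    (eval τ (mapRuns f acc Y)).flatMap (extendInv φ) =
      powerWord X acc ++ evalPower X (fun x => (τ x).flatMap (extendInv φ)) Y := by
  induction Y generalizing acc with
  | nil => simpa [mapRuns, runs] using hf
  | cons y Y ih =>
    rcases y with p | v
    · rw [mapRuns, ih hf, powerWord_append, List.append_assoc]
      simp [powerWord]
    · simp only [runs, List.mem_cons, forall_eq_or_imp] at hf
      simp only [mapRuns, eval_append, eval_map_inl, eval_cons_inr, List.flatMap_append, hf.1,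
        ih hf.2, evalPower_cons_inr]
      simp [extendInv, ← flatMap_extendInv_orient, powerWord]

end Runs

/-! ### Popping the ends of the variables -/

section PowerInverse

variable {A κ : Type*}

/-- The formal inverse of a word of letters with symbolic exponents if `b = false`, and the word
itself if `b = true`. -/
def orientPower (b : Bool) (q : List ((A × Bool) × κ)) : List ((A × Bool) × κ) :=
  if b then q else (q.map fun p => (letterInv p.1, p.2)).reverse

theorem powerWord_orientPower (x : κ → ℕ) (b : Bool) (q : List ((A × Bool) × κ)) :
    powerWord x (orientPower b q) = orient b (powerWord x q) := by
  cases b with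
  | true => rfl
  | false =>
    change powerWord x (q.map fun p => (letterInv p.1, p.2)).reverse =
      FreeGroup.invRev (powerWord x q)
    induction q with
    | nil => rfl
    | cons p q ih =>
      rw [List.map_cons, List.reverse_cons, powerWord_append, ih, powerWord_cons (p := p),
        FreeGroup.invRev_append, invRev_replicate]
      simp [powerWord]

theorem exists_mem_of_mem_orientPower {b : Bool} {q : List ((A × Bool) × κ)}
    {p : (A × Bool) × κ} (hp : p ∈ orientPower b q) : ∃ p' ∈ q, p'.2 = p.2 := by
  cases b with
  | true => exact ⟨p, hp, rfl⟩
  | false =>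
    obtain ⟨p', hp', rfl⟩ := List.mem_map.1 (List.mem_reverse.1 hp)
    exact ⟨p', hp', rfl⟩

theorem length_orientPower (b : Bool) (q : List ((A × Bool) × κ)) :
    (orientPower b q).length = q.length := by
  cases b <;> simp [orientPower]

end PowerInverse

section Ends

variable {β : Type*} [DecidableEq β] (s : β → Bool)

/-- The first chunk of a word. -/
def prefixChunk (w : List (β × Bool)) : List (β × Bool) := (chunks s w).headD []

/-- The last chunk of a word with at least two chunks, and the empty word otherwise. -/
def suffixChunk (w : List (β × Bool)) : List (β × Bool) := (chunks s w).tail.getLastD []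

/-- What remains of a word when its first and its last chunk are removed. -/
def middle (w : List (β × Bool)) : List (β × Bool) := (chunks s w).tail.dropLast.flatten

variable {s}

theorem prefixChunk_append_middle_append_suffixChunk (w : List (β × Bool)) :
    prefixChunk s w ++ middle s w ++ suffixChunk s w = w := by
  conv_rhs => rw [← flatten_chunks (s := s) w]
  rw [prefixChunk, middle, suffixChunk]
  cases chunks s w with
  | nil => rfl
  | cons c C =>
    rcases List.eq_nil_or_concat C with rfl | ⟨D, e, rfl⟩ <;> simp

theorem prefixChunk_mem_or_eq_nil (w : List (β × Bool)) :
    prefixChunk s w ∈ chunks s w ∨ prefixChunk s w = [] := by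
  rw [prefixChunk]
  cases chunks s w <;> simp

theorem suffixChunk_mem_or_eq_nil (w : List (β × Bool)) :
    suffixChunk s w ∈ chunks s w ∨ suffixChunk s w = [] := by
  rw [suffixChunk]
  rcases List.eq_nil_or_concat (chunks s w).tail with h | ⟨D, e, h⟩
  · simp [h]
  · refine Or.inl (List.mem_of_mem_tail ?_)
    simp [h]

theorem exists_chunks_eq_of_middle_ne_nil {w : List (β × Bool)} (h : middle s w ≠ []) :
    ∃ D, chunks s w = prefixChunk s w :: (D ++ [suffixChunk s w]) ∧ middle s w = D.flatten := by
  rw [prefixChunk, suffixChunk, middle] at *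
  cases hC : chunks s w with
  | nil => simp [hC] at h
  | cons c C =>
    rcases List.eq_nil_or_concat C with rfl | ⟨D, e, rfl⟩
    · simp [hC] at h
    · exact ⟨D, by simp, by simp⟩

theorem prefixChunk_ne_nil {w : List (β × Bool)} (h : middle s w ≠ []) : prefixChunk s w ≠ [] := by
  obtain ⟨D, hD, -⟩ := exists_chunks_eq_of_middle_ne_nil h
  exact ne_nil_of_mem_chunks (s := s) (w := w) (by rw [hD]; simp)

theorem suffixChunk_ne_nil {w : List (β × Bool)} (h : middle s w ≠ []) : suffixChunk s w ≠ [] := by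
  obtain ⟨D, hD, -⟩ := exists_chunks_eq_of_middle_ne_nil h
  exact ne_nil_of_mem_chunks (s := s) (w := w) (by rw [hD]; simp)

theorem separated_prefixChunk_middle {w : List (β × Bool)} (h : middle s w ≠ []) :
    Separated s (prefixChunk s w) (middle s w) := by
  obtain ⟨D, hD, hmiddle⟩ := exists_chunks_eq_of_middle_ne_nil h
  have := separated_flatten_of_chunks_eq (C := [prefixChunk s w])
    (D := D ++ [suffixChunk s w]) hD
  rw [List.flatten_append, ← hmiddle, Separated, List.head?_append_of_ne_nil _ h] at this
  simpa [Separated] using this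

theorem separated_middle_suffixChunk {w : List (β × Bool)} (h : middle s w ≠ []) :
    Separated s (middle s w) (suffixChunk s w) := by
  obtain ⟨D, hD, hmiddle⟩ := exists_chunks_eq_of_middle_ne_nil h
  have := separated_flatten_of_chunks_eq (C := prefixChunk s w :: D) hD
  rw [List.flatten_cons, ← hmiddle, Separated, List.getLast?_append_of_ne_nil _ h] at this
  simpa [Separated] using this

theorem length_middle_lt {w : List (β × Bool)} (hw : w ≠ []) :
    (middle s w).length < w.length := by
  have prefix_ne_nil : prefixChunk s w ≠ [] := by
    rw [prefixChunk]
    cases hC : chunks s w with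
    | nil => exact absurd (List.splitBy_eq_nil.1 hC) hw
    | cons c C => exact ne_nil_of_mem_chunks (s := s) (w := w) (by simp [hC])
  have length_eq := congrArg List.length (prefixChunk_append_middle_append_suffixChunk (s := s) w)
  have := List.length_pos_iff.2 prefix_ne_nil
  simp only [List.length_append] at length_eq
  omega

theorem length_middle_le (w : List (β × Bool)) : (middle s w).length ≤ w.length := by
  rcases eq_or_ne w [] with rfl | hw
  · rfl
  · exact (length_middle_lt hw).le

variable (s) in
/-- The run-length encoding of the end of `orient b w` that is popped to the left. -/
def leftEnd (b : Bool) (w : List (β × Bool)) : List ((β × Bool) × ℕ) :=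
  orientPower b (runLength (if b then prefixChunk s w else suffixChunk s w))

variable (s) in
/-- The run-length encoding of the end of `orient b w` that is popped to the right. -/
def rightEnd (b : Bool) (w : List (β × Bool)) : List ((β × Bool) × ℕ) :=
  orientPower b (runLength (if b then suffixChunk s w else prefixChunk s w))

variable (s) in
/-- The word obtained from `w` by replacing the exponents of its first and its last chunk according
to `X`, and the rest by `u`. -/
def replaceMiddle (X : ℕ → ℕ) (w u : List (β × Bool)) : List (β × Bool) :=
  powerWord X (runLength (prefixChunk s w)) ++ (if middle s w = [] then [] else u) ++
    powerWord X (runLength (suffixChunk s w))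

theorem replaceMiddle_id (w : List (β × Bool)) : replaceMiddle s id w (middle s w) = w := by
  conv_rhs => rw [← prefixChunk_append_middle_append_suffixChunk (s := s) w]
  rw [replaceMiddle, powerWord_runLength, powerWord_runLength, ite_eq_right_iff.2 Eq.symm]

theorem orient_replaceMiddle (X : ℕ → ℕ) (b : Bool) (w u : List (β × Bool)) :
    orient b (replaceMiddle s X w u) =
      powerWord X (leftEnd s b w) ++ (if middle s w = [] then [] else orient b u) ++
        powerWord X (rightEnd s b w) := by
  rw [leftEnd, rightEnd, powerWord_orientPower, powerWord_orientPower, replaceMiddle]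
  cases b
  · by_cases hmiddle : middle s w = [] <;> simp [orient, FreeGroup.invRev_append, hmiddle]
  · rfl

theorem length_chunks_le_one {w c : List (β × Bool)} (hc : c ∈ chunks s w ∨ c = []) :
    (chunks s c).length ≤ 1 := by
  rcases hc with hc | rfl
  · rw [chunks_of_mem_chunks hc, List.length_singleton]
  · exact Nat.zero_le 1

theorem length_chunks_leftEnd_le (b : Bool) (w : List (β × Bool)) :
    (chunks s (powerWord id (leftEnd s b w))).length ≤ 1 := by
  rw [leftEnd, powerWord_orientPower, length_chunks_orient, powerWord_runLength]
  cases b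
  · exact length_chunks_le_one (suffixChunk_mem_or_eq_nil w)
  · exact length_chunks_le_one (prefixChunk_mem_or_eq_nil w)

theorem length_chunks_rightEnd_le (b : Bool) (w : List (β × Bool)) :
    (chunks s (powerWord id (rightEnd s b w))).length ≤ 1 := by
  rw [rightEnd, powerWord_orientPower, length_chunks_orient, powerWord_runLength]
  cases b
  · exact length_chunks_le_one (prefixChunk_mem_or_eq_nil w)
  · exact length_chunks_le_one (suffixChunk_mem_or_eq_nil w)

end Ends

section Pop

variable {β V : Type*} [DecidableEq β] (s : β → Bool) (σ : V → List (β × Bool))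

/-- Popping the first and the last chunk of the value of each variable. The remaining variable
stands for the middle of its former value, and is dropped if this is empty. -/
def pop (U : SymbolicWord (β × Bool) V) : SymbolicWord ((β × Bool) × ℕ) V :=
  U.flatMap <| Sum.elim (fun a => [Sum.inl (a, 1)]) fun v =>
    (leftEnd s v.2 (σ v.1)).map Sum.inl ++
      ((if middle s (σ v.1) = [] then [] else [Sum.inr v]) ++
        (rightEnd s v.2 (σ v.1)).map Sum.inl)

theorem pop_cons_inl (a : β × Bool) (U : SymbolicWord (β × Bool) V) :
    pop s σ (Sum.inl a :: U) = Sum.inl (a, 1) :: pop s σ U := rfl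

theorem pop_cons_inr (v : V × Bool) (U : SymbolicWord (β × Bool) V) :
    pop s σ (Sum.inr v :: U) = (leftEnd s v.2 (σ v.1)).map Sum.inl ++
      ((if middle s (σ v.1) = [] then [] else [Sum.inr v]) ++
        ((rightEnd s v.2 (σ v.1)).map Sum.inl ++ pop s σ U)) := by
  simp [pop]

variable {s σ}

theorem evalPower_pop {X : ℕ → ℕ} (hX : X 1 = 1) (τ : V → List (β × Bool))
    (U : SymbolicWord (β × Bool) V) :
    evalPower X τ (pop s σ U) = eval (fun x => replaceMiddle s X (σ x) (τ x)) U := by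
  induction U with
  | nil => rfl
  | cons u U ih =>
    rcases u with a | v
    · rw [pop_cons_inl, evalPower_cons_inl, ih, hX]
      rfl
    · rw [pop_cons_inr, eval_cons_inr, ← ih]
      simp only [extendInv, orient_replaceMiddle, evalPower_append, evalPower_map_inl]
      split_ifs <;> simp [extendInv]

theorem evalPower_id_pop (U : SymbolicWord (β × Bool) V) :
    evalPower id (fun x => middle s (σ x)) (pop s σ U) = eval σ U := by
  rw [evalPower_pop rfl]
  simp only [replaceMiddle_id]

theorem length_vars_pop_le (U : SymbolicWord (β × Bool) V) :
    (vars (pop s σ U)).length ≤ (vars U).length := by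
  induction U with
  | nil => rfl
  | cons u U ih =>
    rcases u with _ | v
    · exact ih
    · rw [pop_cons_inr]
      split_ifs <;> simp only [vars_append, vars_map_inl, vars_cons_inr, vars_nil, List.nil_append,
        List.length_append, List.length_cons, List.length_nil] <;> omega

theorem length_runLength_le_two {w c : List (β × Bool)} (hc : c ∈ chunks s w ∨ c = []) :
    (runLength c).length ≤ 2 := by
  rcases hc with hc | rfl
  · exact length_runLength_of_mem_chunks hc
  · exact Nat.zero_le 2

theorem length_leftEnd_le (b : Bool) (w : List (β × Bool)) : (leftEnd s b w).length ≤ 2 := by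
  rw [leftEnd, length_orientPower]
  cases b
  · exact length_runLength_le_two (suffixChunk_mem_or_eq_nil w)
  · exact length_runLength_le_two (prefixChunk_mem_or_eq_nil w)

theorem length_rightEnd_le (b : Bool) (w : List (β × Bool)) : (rightEnd s b w).length ≤ 2 := by
  rw [rightEnd, length_orientPower]
  cases b
  · exact length_runLength_le_two (prefixChunk_mem_or_eq_nil w)
  · exact length_runLength_le_two (suffixChunk_mem_or_eq_nil w)

theorem length_pop_le (U : SymbolicWord (β × Bool) V) : (pop s σ U).length ≤ 5 * U.length := by
  induction U with
  | nil => rfl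
  | cons u U ih =>
    rcases u with a | v
    · rw [pop_cons_inl, List.length_cons, List.length_cons]
      omega
    · have := length_leftEnd_le (s := s) v.2 (σ v.1)
      have := length_rightEnd_le (s := s) v.2 (σ v.1)
      rw [pop_cons_inr]
      split_ifs <;> simp only [List.length_append, List.length_map, List.length_cons,
        List.length_nil] <;> omega

variable (s) in
/-- The exponents in the first and the last chunk of a word. -/
def endExponents (w : List (β × Bool)) : List ℕ :=
  (runLength (prefixChunk s w) ++ runLength (suffixChunk s w)).map Prod.snd

theorem length_endExponents_le (w : List (β × Bool)) : (endExponents s w).length ≤ 4 := by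
  have := length_runLength_le_two (prefixChunk_mem_or_eq_nil (s := s) w)
  have := length_runLength_le_two (suffixChunk_mem_or_eq_nil (s := s) w)
  rw [endExponents, List.length_map, List.length_append]
  omega

theorem one_le_of_mem_endExponents {w : List (β × Bool)} {n : ℕ} (hn : n ∈ endExponents s w) :
    1 ≤ n := by
  obtain ⟨p, hp, rfl⟩ := List.mem_map.1 hn
  exact (List.mem_append.1 hp).elim one_le_of_mem_runLength one_le_of_mem_runLength

theorem mem_endExponents_of_mem_leftEnd {b : Bool} {w : List (β × Bool)} {p : (β × Bool) × ℕ}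
    (hp : p ∈ leftEnd s b w) : p.2 ∈ endExponents s w := by
  obtain ⟨p', hp', hpp'⟩ := exists_mem_of_mem_orientPower hp
  cases b <;> exact hpp' ▸ List.mem_map_of_mem (by simp_all)

theorem mem_endExponents_of_mem_rightEnd {b : Bool} {w : List (β × Bool)} {p : (β × Bool) × ℕ}
    (hp : p ∈ rightEnd s b w) : p.2 ∈ endExponents s w := by
  obtain ⟨p', hp', hpp'⟩ := exists_mem_of_mem_orientPower hp
  cases b <;> exact hpp' ▸ List.mem_map_of_mem (by simp_all)

theorem exponent_of_mem_pop {U : SymbolicWord (β × Bool) V} {p : (β × Bool) × ℕ}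
    (hp : Sum.inl p ∈ pop s σ U) : p.2 = 1 ∨ ∃ x, p.2 ∈ endExponents s (σ x) := by
  obtain ⟨u, -, hu⟩ := List.mem_flatMap.1 hp
  rcases u with a | v
  · obtain rfl : p = (a, 1) := by simpa using hu
    exact Or.inl rfl
  · right
    refine ⟨v.1, ?_⟩
    simp only [Sum.elim_inr, List.mem_append, List.mem_map, Sum.inl.injEq, exists_eq_right,
      List.mem_ite_nil_left, List.mem_singleton, reduceCtorEq, and_false, false_or] at hu
    exact hu.elim mem_endExponents_of_mem_leftEnd mem_endExponents_of_mem_rightEnd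

end Pop

/-! ### Compression of words with variables -/

section VisibleChunks

variable {α V : Type*} [DecidableEq α] {s : Block α → Bool} {σ : V → List (BlockLetter α)}

variable (s σ) in
/-- The chunks that are replaced by a single letter in the compression of a word with variables. -/
def visibleChunks (U : SymbolicWord (BlockLetter α) V) : List (List (BlockLetter α)) :=
  (runs [] (pop s σ U)).flatMap fun t => chunks s (powerWord id t)

theorem Reduced.of_mem_visibleChunks {U : SymbolicWord (BlockLetter α) V} {c : List (BlockLetter α)}
    (hU : Reduced (eval σ U)) (hc : c ∈ visibleChunks s σ U) : Reduced c := by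
  obtain ⟨t, ht, hct⟩ := List.mem_flatMap.1 hc
  rw [← evalPower_id_pop (s := s)] at hU
  exact hU.of_infix ((infix_of_mem_chunks hct).trans (powerWord_infix_of_mem_runs _ _ ht))

theorem exists_mem_chunks_of_mem_visibleChunks {U : SymbolicWord (BlockLetter α) V}
    {c : List (BlockLetter α)} (hc : c ∈ visibleChunks s σ U) : ∃ w, c ∈ chunks s w := by
  obtain ⟨t, -, hct⟩ := List.mem_flatMap.1 hc
  exact ⟨_, hct⟩

end VisibleChunks

section CompressSymbolic

variable {α V : Type*} [Inhabited α] [DecidableEq α]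

/-- The compression of a word with variables, the values of which are given by `σ`: the ends of the
variables are popped, and the maximal variable-free factors are compressed. -/
noncomputable def compressSymbolic (s : Block α → Bool) (label : List (BlockLetter α) → ℕ)
    (σ : V → List (BlockLetter α)) (U : SymbolicWord (BlockLetter α) V) :
    SymbolicWord (BlockLetter α) V :=
  mapRuns (fun t => compress s label (powerWord id t)) [] (pop s σ U)

variable {s : Block α → Bool} {label : List (BlockLetter α) → ℕ} {σ : V → List (BlockLetter α)}

/-- The ends of a chunk of the value of a word that meets a variable are popped, so no chunk extends
over the border of a remaining variable. -/
theorem compress_append_orient_append {w u v : List (BlockLetter α)} (hw : Reduced w) (b : Bool)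
    (hmiddle : middle s w ≠ []) :
    compress s label (u ++ powerWord id (leftEnd s b w)) ++
        (orient b (compress s label (middle s w)) ++
          compress s label (powerWord id (rightEnd s b w) ++ v)) =
      compress s label (u ++ (orient b w ++ v)) := by
  have orient_middle_ne_nil : orient b (middle s w) ≠ [] := orient_ne_nil hmiddle
  have middle_reduced : Reduced (middle s w) :=
    hw.of_infix ⟨_, _, prefixChunk_append_middle_append_suffixChunk w⟩
  have right_ne_nil : powerWord id (rightEnd s b w) ≠ [] := by
    rw [rightEnd, powerWord_orientPower, powerWord_runLength]
    cases b
    · exact orient_ne_nil (prefixChunk_ne_nil hmiddle)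
    · exact orient_ne_nil (suffixChunk_ne_nil hmiddle)
  have left_ne_nil : powerWord id (leftEnd s b w) ≠ [] := by
    rw [leftEnd, powerWord_orientPower, powerWord_runLength]
    cases b
    · exact orient_ne_nil (suffixChunk_ne_nil hmiddle)
    · exact orient_ne_nil (prefixChunk_ne_nil hmiddle)
  have separated_left : Separated s (powerWord id (leftEnd s b w)) (orient b (middle s w)) := by
    rw [leftEnd, powerWord_orientPower, powerWord_runLength]
    cases b
    · exact (separated_middle_suffixChunk hmiddle).invRev
    · exact separated_prefixChunk_middle hmiddle
  have separated_right : Separated s (orient b (middle s w)) (powerWord id (rightEnd s b w)) := by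
    rw [rightEnd, powerWord_orientPower, powerWord_runLength]
    cases b
    · exact (separated_prefixChunk_middle hmiddle).invRev
    · exact separated_middle_suffixChunk hmiddle
  have orient_eq := orient_replaceMiddle (s := s) id b w (middle s w)
  rw [replaceMiddle_id, if_neg hmiddle] at orient_eq
  rw [← compress_orient b middle_reduced, ← compress_append (separated_right.append_right
    right_ne_nil v), ← compress_append, orient_eq]
  · simp only [List.append_assoc]
  · exact (separated_left.append_left left_ne_nil u).append_right orient_middle_ne_nil _

theorem eval_mapRuns_pop {U : SymbolicWord (BlockLetter α) V} (hU : Reduced (eval σ U))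
    (acc : List (BlockLetter α × ℕ)) :
    eval (fun x => compress s label (middle s (σ x)))
        (mapRuns (fun t => compress s label (powerWord id t)) acc (pop s σ U)) =
      compress s label (powerWord id acc ++ eval σ U) := by
  induction U generalizing acc with
  | nil => simp [pop, mapRuns]
  | cons u U ih =>
    rcases u with a | v
    · rw [pop_cons_inl, mapRuns, ih (hU.of_infix ⟨[a], [], by simp⟩), powerWord_append]
      simp [powerWord]
    · have ih := ih (hU.of_infix ⟨extendInv σ v, [], by simp⟩)
      have reduced_value : Reduced (σ v.1) :=
        Reduced.of_orient (b := v.2) (hU.of_infix ⟨[], eval σ U, by simp [extendInv]⟩)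
      rw [pop_cons_inr, mapRuns_map_inl_append]
      split_ifs with hmiddle
      · have orient_eq := orient_replaceMiddle (s := s) id v.2 (σ v.1) (middle s (σ v.1))
        rw [replaceMiddle_id, if_pos hmiddle, List.append_nil, ← powerWord_append] at orient_eq
        rw [List.nil_append, mapRuns_map_inl_append, ih, eval_cons_inr, extendInv, orient_eq,
          List.append_assoc acc, powerWord_append, List.append_assoc]
      · rw [List.singleton_append, mapRuns, mapRuns_map_inl_append, eval_append, eval_map_inl,
          eval_cons_inr, ih, eval_cons_inr, List.nil_append, powerWord_append]
        exact compress_append_orient_append reduced_value v.2 hmiddle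

theorem eval_compressSymbolic {U : SymbolicWord (BlockLetter α) V} (hU : Reduced (eval σ U)) :
    eval (fun x => compress s label (middle s (σ x))) (compressSymbolic s label σ U) =
      compress s label (eval σ U) :=
  eval_mapRuns_pop hU []

theorem length_vars_compressSymbolic_le (U : SymbolicWord (BlockLetter α) V) :
    (vars (compressSymbolic s label σ U)).length ≤ (vars U).length := by
  rw [compressSymbolic, vars_mapRuns]
  exact length_vars_pop_le U

theorem length_letters_mapRuns_pop_add_le {z : Option (BlockLetter α)}
    {acc : List (BlockLetter α × ℕ)} (hz : ∀ y ∈ z, y ∈ (powerWord id acc).getLast?)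
    (U : SymbolicWord (BlockLetter α) V) :
    (letters (mapRuns (fun t => compress s label (powerWord id t)) acc (pop s σ U))).length +
        (adjacentPairs z U).countP (fun p => link s p.1 p.2) ≤
      (chunks s (powerWord id acc)).length + (letters U).length + 2 * (vars U).length := by
  induction U generalizing z acc with
  | nil =>
    change (letters ((compress s label (powerWord id acc)).map Sum.inl)).length + 0 ≤ _
    rw [letters_map_inl, compress, List.length_map]
    omega
  | cons u U ih =>
    rcases u with a | v
    · have ih := ih (z := some a) (acc := acc ++ [(a, 1)]) (by simp [powerWord])
      have concat_le := length_chunks_concat_add_countP_le (s := s) a hz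
      have powerWord_concat : powerWord id (acc ++ [(a, 1)]) = powerWord id acc ++ [a] := by
        simp [powerWord]
      rw [powerWord_concat] at ih
      rw [pop_cons_inl, mapRuns, letters_cons_inl, List.length_cons, vars_cons_inl, adjacentPairs,
        List.countP_append]
      linarith
    · have left_le := length_chunks_leftEnd_le (s := s) v.2 (σ v.1)
      have right_le := length_chunks_rightEnd_le (s := s) v.2 (σ v.1)
      have acc_left_le := length_chunks_append_le (s := s) (powerWord id acc)
        (powerWord id (leftEnd s v.2 (σ v.1)))
      rw [pop_cons_inr, mapRuns_map_inl_append, letters_cons_inr, vars_cons_inr, List.length_cons,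
        adjacentPairs]
      rw [← powerWord_append] at acc_left_le
      split_ifs with hmiddle
      · have ih := ih (z := none)
          (acc := acc ++ leftEnd s v.2 (σ v.1) ++ rightEnd s v.2 (σ v.1)) (by simp)
        have all_le := length_chunks_append_le (s := s)
          (powerWord id (acc ++ leftEnd s v.2 (σ v.1))) (powerWord id (rightEnd s v.2 (σ v.1)))
        rw [← powerWord_append] at all_le
        rw [List.nil_append, mapRuns_map_inl_append]
        omega
      · have ih := ih (z := none) (acc := rightEnd s v.2 (σ v.1)) (by simp)
        rw [List.singleton_append, mapRuns, mapRuns_map_inl_append, letters_append,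
          letters_map_inl, letters_cons_inr, List.length_append, List.nil_append, compress,
          List.length_map]
        omega

theorem length_letters_compressSymbolic_add_le (U : SymbolicWord (BlockLetter α) V) :
    (letters (compressSymbolic s label σ U)).length +
        (adjacentPairs none U).countP (fun p => link s p.1 p.2) ≤
      (letters U).length + 2 * (vars U).length := by
  have := length_letters_mapRuns_pop_add_le (s := s) (label := label) (σ := σ) (z := none)
    (acc := []) (by simp) U
  rwa [show (chunks s (powerWord id [])).length = 0 from rfl, Nat.zero_add] at this

theorem letters_compressSymbolic (U : SymbolicWord (BlockLetter α) V) :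
    letters (compressSymbolic s label σ U) = (visibleChunks s σ U).map (encodeChunk label) := by
  rw [compressSymbolic, letters_mapRuns, visibleChunks, List.map_flatMap]
  rfl

end CompressSymbolic

/-! ### Decoding -/

section SmallExponents

theorem diophantineBound_mono_left (M : ℕ) : Monotone fun k => diophantineBound k M := by
  intro k l hkl
  have step_mono (m : ℕ) : Monotone fun v => 2 * v + m := fun v w hvw => by dsimp only; omega
  have count_le : 2 ^ ((2 * M + 1) ^ k * (2 * (M * k) + 1)) ≤
      2 ^ ((2 * M + 1) ^ l * (2 * (M * l) + 1)) := by
    gcongr <;> omega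
  calc diophantineBound k M
      ≤ (fun v => 2 * v + k)^[2 ^ ((2 * M + 1) ^ l * (2 * (M * l) + 1))] 0 :=
        (step_mono k).monotone_iterate_of_le_map (Nat.zero_le _) count_le
    _ ≤ diophantineBound l M :=
        (step_mono k).iterate_le_of_le (fun v => Nat.add_le_add_left hkl (2 * v)) _ 0

theorem exists_small_exponents (A : Type*) {M : ℕ} (hM : 1 ≤ M) {D : Finset ℕ} (one_mem : 1 ∈ D)
    (one_le : ∀ n ∈ D, 1 ≤ n) :
    ∃ X : ℕ → ℕ, X 1 = 1 ∧ (∀ n, 1 ≤ X n) ∧ (∀ n, X n ≤ diophantineBound D.card M + 1) ∧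
      ∀ q q' : List (A × ℕ), q.length ≤ M → q'.length ≤ M →
        (∀ p ∈ q, p.2 ∈ D) → (∀ p ∈ q', p.2 ∈ D) →
          powerWord id q = powerWord id q' → powerWord X q = powerWord X q' := by
  obtain ⟨x, one_le_x, x_one, x_le, preserves⟩ := exists_small_positive_solution hM
    (o := (⟨1, one_mem⟩ : D)) (x := Subtype.val) (fun k => one_le k k.2) rfl
  rw [Fintype.card_coe] at x_le
  let X : ℕ → ℕ := fun n => if h : n ∈ D then x ⟨n, h⟩ else 1
  have X_coe (k : D) : X k = x k := dif_pos k.2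
  let forget : List (A × D) → List (A × ℕ) := List.map (Prod.map id Subtype.val)
  have exists_lift {q : List (A × ℕ)} (hq : ∀ p ∈ q, p.2 ∈ D) : q ∈ Set.range forget := by
    rw [Set.range_list_map]
    exact fun p hp => ⟨(p.1, ⟨p.2, hq p hp⟩), rfl⟩
  have powerWord_forget (y : ℕ → ℕ) (q : List (A × D)) :
      powerWord y (forget q) = powerWord (fun k : D => y k) q := List.flatMap_map _ _ q
  refine ⟨X, (X_coe ⟨1, one_mem⟩).trans x_one, fun n => ?_, fun n => ?_, ?_⟩
  · by_cases h : n ∈ D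
    · exact (one_le_x ⟨n, h⟩).trans_eq (X_coe ⟨n, h⟩).symm
    · exact (show X n = 1 from dif_neg h).ge
  · by_cases h : n ∈ D
    · exact (X_coe ⟨n, h⟩).trans_le (x_le ⟨n, h⟩)
    · exact (show X n = 1 from dif_neg h).trans_le (Nat.le_add_left 1 _)
  · intro q q' hq hq' hqD hq'D heq
    obtain ⟨q, rfl⟩ := exists_lift hqD
    obtain ⟨q', rfl⟩ := exists_lift hq'D
    simp only [powerWord_forget, X_coe] at heq ⊢
    exact powerWord_eq_of_preserves_relations (fun k : D => one_le k k.2) preserves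
      (by simpa [forget] using hq) (by simpa [forget] using hq') heq

end SmallExponents

theorem length_powerWord_le {A κ : Type*} {x : κ → ℕ} {G : ℕ} (hx : ∀ n, x n ≤ G)
    (q : List (A × κ)) : (powerWord x q).length ≤ q.length * G := by
  rw [powerWord, List.length_flatMap, ← List.length_map (fun p : A × κ => _)]
  refine List.sum_le_card_nsmul _ _ fun n hn => ?_
  obtain ⟨p, -, rfl⟩ := List.mem_map.1 hn
  exact (List.length_replicate ..).trans_le (hx p.2)

section RunLength

variable {A : Type*} [DecidableEq A] {x : ℕ → ℕ}

theorem powerWord_runLength_max (w : List A) : powerWord (fun n => max n 1) (runLength w) = w := by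
  conv_rhs => rw [← powerWord_runLength w]
  refine List.flatMap_congr fun p hp => ?_
  exact congrArg (List.replicate · p.1) (max_eq_left (one_le_of_mem_runLength hp))

theorem runLength_ne_nil {w : List A} (hw : w ≠ []) : runLength w ≠ [] := fun h =>
  hw (by rw [← powerWord_runLength w, h]; rfl)

theorem head?_powerWord_runLength (hx : ∀ n, 1 ≤ x n) (w : List A) :
    (powerWord x (runLength w)).head? = w.head? := by
  conv_rhs => rw [← powerWord_runLength_max w, head?_powerWord fun n => le_max_right n 1]
  exact head?_powerWord hx _

theorem getLast?_powerWord_runLength (hx : ∀ n, 1 ≤ x n) (w : List A) :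
    (powerWord x (runLength w)).getLast? = w.getLast? := by
  conv_rhs => rw [← powerWord_runLength_max w, getLast?_powerWord fun n => le_max_right n 1]
  exact getLast?_powerWord hx _

end RunLength

section Decode

variable {α : Type*} [Inhabited α] [DecidableEq α]

/-- The word a block `d` stands for: the exponents of the word with number `d.index` in the list `T`
are replaced according to `X`. A block that does not have the first and the last letter of that word
stands for itself. -/
def decodeBlock (X : ℕ → ℕ) (T : List (List (BlockLetter α))) (d : Block α) :
    List (BlockLetter α) :=
  let c := T.getD d.index []
  if c ≠ [] ∧ wordFirst c = d.first ∧ wordLast c = d.last then powerWord X (runLength c)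
  else [(d, true)]

variable {X : ℕ → ℕ} {T : List (List (BlockLetter α))}

theorem decodeBlock_eq_or (X : ℕ → ℕ) (T : List (List (BlockLetter α))) (d : Block α) :
    (∃ c ∈ T, c ≠ [] ∧ wordFirst c = d.first ∧ wordLast c = d.last ∧
      decodeBlock X T d = powerWord X (runLength c)) ∨ decodeBlock X T d = [(d, true)] := by
  by_cases h : T.getD d.index [] ≠ [] ∧ wordFirst (T.getD d.index []) = d.first ∧
    wordLast (T.getD d.index []) = d.last
  · refine Or.inl ⟨_, ?_, h.1, h.2.1, h.2.2, if_pos h⟩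
    by_cases hd : d.index < T.length
    · exact List.getD_eq_getElem T [] hd ▸ List.getElem_mem hd
    · exact absurd (List.getD_eq_default T [] (not_lt.1 hd)) h.1
  · exact Or.inr (if_neg h)

theorem decodeBlock_ne_nil (hX : ∀ n, 1 ≤ X n) (d : Block α) : decodeBlock X T d ≠ [] := by
  obtain ⟨c, -, hc, -, -, heq⟩ | heq := decodeBlock_eq_or X T d <;> rw [heq]
  · exact (powerWord_eq_nil hX).not.2 (runLength_ne_nil hc)
  · exact List.cons_ne_nil _ _

theorem wordFirst_decodeBlock (hX : ∀ n, 1 ≤ X n) (d : Block α) :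
    wordFirst (decodeBlock X T d) = d.first := by
  obtain ⟨c, -, -, hfirst, -, heq⟩ | heq := decodeBlock_eq_or X T d <;> rw [heq]
  · rw [← hfirst, wordFirst, wordFirst, List.headD_eq_head?_getD, List.headD_eq_head?_getD,
      head?_powerWord_runLength hX]
  · rfl

theorem wordLast_decodeBlock (hX : ∀ n, 1 ≤ X n) (d : Block α) :
    wordLast (decodeBlock X T d) = d.last := by
  obtain ⟨c, -, -, -, hlast, heq⟩ | heq := decodeBlock_eq_or X T d <;> rw [heq]
  · rw [← hlast, wordLast, wordLast, List.getLastD_eq_getLast?, List.getLastD_eq_getLast?,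
      getLast?_powerWord_runLength hX]
  · rfl

theorem reduced_decodeBlock (hX : ∀ n, 1 ≤ X n) (hX1 : X 1 = 1) (hT : ∀ c ∈ T, Reduced c)
    (d : Block α) : Reduced (decodeBlock X T d) := by
  obtain ⟨c, hc, -, -, -, heq⟩ | heq := decodeBlock_eq_or X T d <;> rw [heq]
  · refine Reduced.powerWord hX hX1 (fun p => one_le_of_mem_runLength) ?_
    rw [powerWord_runLength]
    exact hT c hc
  · exact List.isChain_singleton _

theorem length_decodeBlock_le {G : ℕ} (hG : 1 ≤ G) (hX : ∀ n, X n ≤ G)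
    (hT : ∀ c ∈ T, (runLength c).length ≤ 2) (d : Block α) :
    (decodeBlock X T d).length ≤ 2 * G := by
  obtain ⟨c, hc, -, -, -, heq⟩ | heq := decodeBlock_eq_or X T d <;> rw [heq]
  · exact (length_powerWord_le hX _).trans (Nat.mul_le_mul_right G (hT c hc))
  · rw [List.length_singleton]
    omega

/-- The run-length encoding of a chunk, chosen such that those of a chunk and of its inverse are
inverse to each other. -/
noncomputable def chunkPower (c : List (BlockLetter α)) : List (BlockLetter α × ℕ) :=
  orientPower (isPositive c) (runLength (positivePart c))

theorem powerWord_id_flatMap_chunkPower {α : Type*} [DecidableEq α]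
    (C : List (List (BlockLetter α))) : powerWord id (C.flatMap chunkPower) = C.flatten := by
  induction C with
  | nil => rfl
  | cons c C ih =>
    rw [List.flatMap_cons, powerWord_append, ih, chunkPower, powerWord_orientPower,
      powerWord_runLength, orient_positivePart, List.flatten_cons]

theorem extendInv_decodeBlock_encodeChunk {c : List (BlockLetter α)} (hc : c ≠ [])
    (hcT : positivePart c ∈ T) :
    extendInv (decodeBlock X T) (encodeChunk T.idxOf c) = powerWord X (chunkPower c) := by
  have getD_idxOf : T.getD (T.idxOf (positivePart c)) [] = positivePart c := by
    rw [List.getD_eq_getElem _ _ (List.idxOf_lt_length_iff.2 hcT), List.getElem_idxOf]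
  rw [chunkPower, powerWord_orientPower, extendInv, encodeChunk, decodeBlock, getD_idxOf,
    if_pos ⟨positivePart_ne_nil hc, rfl, rfl⟩]

variable {s : Block α → Bool}

theorem flatMap_extendInv_decodeBlock_compress {w : List (BlockLetter α)}
    (hw : ∀ c ∈ chunks s w, positivePart c ∈ T) :
    (compress s T.idxOf w).flatMap (extendInv (decodeBlock X T)) =
      powerWord X ((chunks s w).flatMap chunkPower) := by
  rw [compress, List.flatMap_map, powerWord, List.flatMap_assoc]
  exact List.flatMap_congr fun c hc =>
    extendInv_decodeBlock_encodeChunk (ne_nil_of_mem_chunks hc) (hw c hc)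

theorem length_runLength_positivePart_le {α : Type*} [DecidableEq α] {s : Block α → Bool}
    {w c : List (BlockLetter α)} (hc : c ∈ chunks s w) :
    (runLength (positivePart c)).length ≤ 2 := by
  refine length_runLength_of_mem_chunks (s := s) (w := positivePart c) ?_
  rw [positivePart]
  cases isPositive c
  · change FreeGroup.invRev c ∈ chunks s (FreeGroup.invRev c)
    rw [chunks_invRev, chunks_of_mem_chunks hc]
    exact List.mem_singleton_self _
  · exact (chunks_of_mem_chunks hc).symm ▸ List.mem_singleton_self c

theorem length_flatMap_chunkPower_le {α : Type*} [DecidableEq α] {s : Block α → Bool}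
    (w : List (BlockLetter α)) :
    ((chunks s w).flatMap chunkPower).length ≤ 2 * (chunks s w).length := by
  rw [List.length_flatMap, mul_comm, ← List.length_map fun c => (chunkPower c).length]
  refine List.sum_le_card_nsmul _ _ fun n hn => ?_
  obtain ⟨c, hc, rfl⟩ := List.mem_map.1 hn
  exact (length_orientPower _ _).trans_le (length_runLength_positivePart_le hc)

end Decode

/-! ### Systems of word equations -/

/-- A system of word equations indexed by `ι`: the sides of the equation with index `i` have the
indices `(i, true)` and `(i, false)`. -/
abbrev WordSystem (α V ι : Type*) := ι × Bool → SymbolicWord (BlockLetter α) V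

section Systems

variable {α V ι : Type*}

/-- The words `σ` solve the equations of a system without cancellation in their sides. -/
def IsSolution (E : WordSystem α V ι) (σ : V → List (BlockLetter α)) : Prop :=
  ∀ i, eval σ (E (i, true)) = eval σ (E (i, false)) ∧ Reduced (eval σ (E (i, true)))

theorem IsSolution.reduced {E : WordSystem α V ι} {σ : V → List (BlockLetter α)}
    (h : IsSolution E σ) (j : ι × Bool) : Reduced (eval σ (E j)) := by
  obtain ⟨i, _ | _⟩ := j
  · exact (h i).1 ▸ (h i).2
  · exact (h i).2

/-- The total length of the values of the variables. -/
def weight [Fintype V] (σ : V → List (BlockLetter α)) : ℕ := ∑ x, (σ x).length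

variable [Fintype ι]

/-- A system with at most `K` occurrences of letters, all of index less than `K`, and at most `N`
occurrences of variables. -/
structure IsBounded (K N : ℕ) (E : WordSystem α V ι) : Prop where
  index_lt : ∀ j, ∀ a ∈ letters (E j), a.1.index < K
  letters_le : ∑ j, (letters (E j)).length ≤ K
  vars_le : ∑ j, (vars (E j)).length ≤ N

namespace IsBounded

variable {K N : ℕ} {E : WordSystem α V ι}

theorem length_letters_le (h : IsBounded K N E) (j : ι × Bool) : (letters (E j)).length ≤ K :=
  (Finset.single_le_sum (f := fun j => (letters (E j)).length) (fun _ _ => Nat.zero_le _)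
    (Finset.mem_univ j)).trans h.letters_le

theorem length_le (h : IsBounded K N E) (j : ι × Bool) : (E j).length ≤ K + N := by
  rw [length_eq_letters_add_vars]
  exact add_le_add (h.length_letters_le j)
    ((Finset.single_le_sum (f := fun j => (vars (E j)).length) (fun _ _ => Nat.zero_le _)
      (Finset.mem_univ j)).trans h.vars_le)

end IsBounded

end Systems

section ChunkTable

variable {α V ι : Type*} [Fintype ι] [DecidableEq α]

/-- The list of the words replaced by new blocks in the compression of a system. -/
noncomputable def chunkTable (s : Block α → Bool)
    (σ : V → List (BlockLetter α)) (E : WordSystem α V ι) : List (List (BlockLetter α)) :=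
  Finset.univ.toList.flatMap fun j => (visibleChunks s σ (E j)).map positivePart

variable {s : Block α → Bool} {σ : V → List (BlockLetter α)} {E : WordSystem α V ι}

theorem positivePart_mem_chunkTable {c : List (BlockLetter α)} {j : ι × Bool}
    (hc : c ∈ visibleChunks s σ (E j)) : positivePart c ∈ chunkTable s σ E :=
  List.mem_flatMap.2 ⟨j, Finset.mem_toList.2 (Finset.mem_univ j), List.mem_map_of_mem hc⟩

theorem exists_of_mem_chunkTable {c : List (BlockLetter α)} (hc : c ∈ chunkTable s σ E) :
    ∃ j, ∃ d ∈ visibleChunks s σ (E j), c = positivePart d := by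
  obtain ⟨j, -, hcj⟩ := List.mem_flatMap.1 hc
  obtain ⟨d, hd, rfl⟩ := List.mem_map.1 hcj
  exact ⟨j, d, hd, rfl⟩

theorem IsSolution.reduced_of_mem_chunkTable (hσ : IsSolution E σ) {c : List (BlockLetter α)}
    (hc : c ∈ chunkTable s σ E) : Reduced c := by
  obtain ⟨j, d, hd, rfl⟩ := exists_of_mem_chunkTable hc
  exact ((hσ.reduced j).of_mem_visibleChunks hd).positivePart

theorem length_runLength_of_mem_chunkTable {c : List (BlockLetter α)}
    (hc : c ∈ chunkTable s σ E) : (runLength c).length ≤ 2 := by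
  obtain ⟨j, d, hd, rfl⟩ := exists_of_mem_chunkTable hc
  obtain ⟨w, hdw⟩ := exists_mem_chunks_of_mem_visibleChunks hd
  exact length_runLength_positivePart_le hdw

end ChunkTable

section CompressSystem

variable {α V ι : Type*} [Fintype ι] [Inhabited α] [DecidableEq α]

theorem exists_partition_sum_letters_le {E : WordSystem α V ι} {σ : V → List (BlockLetter α)}
    (hσ : IsSolution E σ) :
    ∃ s : Block α → Bool, ∀ label,
      4 * ∑ j, (letters (compressSymbolic s label σ (E j))).length ≤
        3 * ∑ j, (letters (E j)).length + 9 * ∑ j, (vars (E j)).length +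
          Fintype.card (ι × Bool) := by
  have not_inverse : ∀ p ∈ Finset.univ.toList.flatMap fun j => adjacentPairs none (E j),
      p.2 ≠ letterInv p.1 := by
    intro p hp
    obtain ⟨j, -, hj⟩ := List.mem_flatMap.1 hp
    exact ne_letterInv_of_mem_adjacentPairs (z := none) (hσ.reduced j) hj
  obtain ⟨s, hs⟩ := exists_partition_length_le not_inverse
  refine ⟨s, fun label => ?_⟩
  rw [List.length_flatMap, List.countP_flatMap, Finset.sum_map_toList, Finset.sum_map_toList] at hs
  have pairs_le : ∑ j, (adjacentPairs none (E j)).length ≤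
      4 * ∑ j, (adjacentPairs none (E j)).countP fun p => link s p.1 p.2 := hs
  have letters_le := Finset.sum_le_sum fun j (_ : j ∈ Finset.univ) =>
    length_letters_le_adjacentPairs none (E j)
  have compressed_le := Finset.sum_le_sum fun j (_ : j ∈ Finset.univ) =>
    length_letters_compressSymbolic_add_le (s := s) (label := label) (σ := σ) (E j)
  simp only [Option.isNone_none, if_true, Finset.sum_add_distrib, Finset.sum_const,
    Finset.card_univ, smul_eq_mul, mul_one, ← Finset.mul_sum] at letters_le compressed_le
  omega

/-- The compression of a system, the new blocks being labelled by their position in the table. -/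
noncomputable def compressSystem (s : Block α → Bool) (σ : V → List (BlockLetter α))
    (E : WordSystem α V ι) : WordSystem α V ι :=
  fun j => compressSymbolic s (chunkTable s σ E).idxOf σ (E j)

variable {s : Block α → Bool} {σ : V → List (BlockLetter α)} {E : WordSystem α V ι}

theorem length_chunkTable :
    (chunkTable s σ E).length = ∑ j, (letters (compressSystem s σ E j)).length := by
  simp only [chunkTable, compressSystem, List.length_flatMap, Finset.sum_map_toList,
    letters_compressSymbolic, List.length_map]

protected theorem IsBounded.compressSystem {K N : ℕ} (hE : IsBounded K N E)
    (hletters : ∑ j, (letters (compressSystem s σ E j)).length ≤ K) :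
    IsBounded K N (compressSystem s σ E) where
  index_lt j a ha := by
    rw [compressSystem, letters_compressSymbolic] at ha
    obtain ⟨c, hc, rfl⟩ := List.mem_map.1 ha
    exact (List.idxOf_lt_length_iff.2 (positivePart_mem_chunkTable hc)).trans_le
      (length_chunkTable.trans_le hletters)
  letters_le := hletters
  vars_le := (Finset.sum_le_sum fun _ _ => length_vars_compressSymbolic_le _).trans hE.vars_le

protected theorem IsSolution.compressSystem (hσ : IsSolution E σ) :
    IsSolution (compressSystem s σ E)
      fun x => compress s (chunkTable s σ E).idxOf (middle s (σ x)) := by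
  intro i
  simp only [compressSystem, eval_compressSymbolic (hσ.reduced _)]
  exact ⟨congrArg _ (hσ i).1, (hσ i).2.compress⟩

theorem weight_compress_middle_lt [Fintype V] {label : List (BlockLetter α) → ℕ}
    (hσ : 0 < weight σ) : weight (fun x => compress s label (middle s (σ x))) < weight σ := by
  obtain ⟨x, -, hx⟩ := Finset.sum_pos_iff.1 hσ
  exact Finset.sum_lt_sum (fun y _ => (length_compress_le _).trans (length_middle_le _))
    ⟨x, Finset.mem_univ x,
      (length_compress_le _).trans_lt (length_middle_lt (List.length_pos_iff.1 hx))⟩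

theorem IsSolution.of_compressSystem (hσ : IsSolution E σ) {X : ℕ → ℕ} (X_one : X 1 = 1)
    (one_le_X : ∀ n, 1 ≤ X n)
    (decode : ∀ j, ∀ t ∈ runs [] (pop s σ (E j)),
      (compress s (chunkTable s σ E).idxOf (powerWord id t)).flatMap
        (extendInv (decodeBlock X (chunkTable s σ E))) = powerWord X t)
    {τ : V → List (BlockLetter α)} (hτ : IsSolution (compressSystem s σ E) τ) :
    IsSolution E fun x => replaceMiddle s X (σ x)
      ((τ x).flatMap (extendInv (decodeBlock X (chunkTable s σ E)))) := by
  have eval_eq (j : ι × Bool) : eval (fun x => replaceMiddle s X (σ x)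
      ((τ x).flatMap (extendInv (decodeBlock X (chunkTable s σ E))))) (E j) =
      (eval τ (compressSystem s σ E j)).flatMap
        (extendInv (decodeBlock X (chunkTable s σ E))) := by
    rw [← evalPower_pop X_one, compressSystem, compressSymbolic,
      flatMap_eval_mapRuns τ (decode j)]
    rfl
  intro i
  rw [eval_eq, eval_eq, (hτ i).1]
  exact ⟨rfl, ((hτ i).1 ▸ (hτ i).2).flatMap_extendInv (decodeBlock_ne_nil one_le_X)
    (reduced_decodeBlock one_le_X X_one fun c => hσ.reduced_of_mem_chunkTable)
    (wordFirst_decodeBlock one_le_X) (wordLast_decodeBlock one_le_X)⟩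

end CompressSystem

section Lift

variable {α V ι : Type*} [Fintype V] [Fintype ι] [DecidableEq α]

/-- The exponents that occur in the compression of a system. -/
noncomputable def relevantExponents (s : Block α → Bool) (σ : V → List (BlockLetter α))
    (E : WordSystem α V ι) : Finset ℕ :=
  insert 1 ((Finset.univ.biUnion fun x => (endExponents s (σ x)).toFinset) ∪
    ((chunkTable s σ E).flatMap fun c => (runLength c).map Prod.snd).toFinset)

variable {s : Block α → Bool} {σ : V → List (BlockLetter α)} {E : WordSystem α V ι}

theorem one_le_of_mem_relevantExponents {n : ℕ} (hn : n ∈ relevantExponents s σ E) : 1 ≤ n := by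
  simp only [relevantExponents, Finset.mem_insert, Finset.mem_union, Finset.mem_biUnion,
    List.mem_toFinset, List.mem_flatMap, List.mem_map] at hn
  obtain rfl | ⟨x, -, hx⟩ | ⟨c, -, p, hp, rfl⟩ := hn
  · exact le_rfl
  · exact one_le_of_mem_endExponents hx
  · exact one_le_of_mem_runLength hp

theorem exponent_mem_of_mem_pop {j : ι × Bool} {p : BlockLetter α × ℕ}
    (hp : Sum.inl p ∈ pop s σ (E j)) : p.2 ∈ relevantExponents s σ E := by
  simp only [relevantExponents, Finset.mem_insert, Finset.mem_union, Finset.mem_biUnion,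
    List.mem_toFinset, Finset.mem_univ, true_and]
  exact (exponent_of_mem_pop hp).imp_right Or.inl

theorem exponent_mem_of_mem_chunkPower {c : List (BlockLetter α)} {p : BlockLetter α × ℕ}
    (hc : positivePart c ∈ chunkTable s σ E) (hp : p ∈ chunkPower c) :
    p.2 ∈ relevantExponents s σ E := by
  obtain ⟨p', hp', heq⟩ := exists_mem_of_mem_orientPower hp
  simp only [relevantExponents, Finset.mem_insert, Finset.mem_union, List.mem_toFinset]
  exact Or.inr (Or.inr (List.mem_flatMap.2 ⟨_, hc, heq ▸ List.mem_map_of_mem hp'⟩))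

theorem length_replaceMiddle_le {X : ℕ → ℕ} {G : ℕ} (hX : ∀ n, X n ≤ G)
    (w u : List (BlockLetter α)) :
    (replaceMiddle s X w u).length ≤ 4 * G + u.length := by
  have := length_powerWord_le hX (leftEnd s true w)
  have := length_powerWord_le hX (rightEnd s true w)
  have := Nat.mul_le_mul_right G (length_leftEnd_le (s := s) true w)
  have := Nat.mul_le_mul_right G (length_rightEnd_le (s := s) true w)
  have heq := orient_replaceMiddle (s := s) X true w u
  have := congrArg List.length heq
  simp only [orient, if_true, List.length_append] at this
  split_ifs at this
  · rw [List.length_nil] at this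
    omega
  · omega

theorem card_relevantExponents_le {K : ℕ} (hK : (chunkTable s σ E).length ≤ K) :
    (relevantExponents s σ E).card ≤ 1 + Fintype.card V * 4 + K * 2 := by
  have card_ends : (Finset.univ.biUnion fun x => (endExponents s (σ x)).toFinset).card ≤
      Fintype.card V * 4 :=
    Finset.card_biUnion_le_card_mul _ _ _ fun x _ =>
      (List.toFinset_card_le _).trans (length_endExponents_le _)
  have length_table :
      ((chunkTable s σ E).flatMap fun c => (runLength c).map Prod.snd).length ≤ K * 2 := by
    refine le_trans ?_ (Nat.mul_le_mul_right 2 hK)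
    rw [List.length_flatMap, ← List.length_map fun c => ((runLength c).map Prod.snd).length]
    refine List.sum_le_card_nsmul _ _ fun n hn => ?_
    obtain ⟨c, hc, rfl⟩ := List.mem_map.1 hn
    rw [List.length_map]
    exact length_runLength_of_mem_chunkTable hc
  calc (relevantExponents s σ E).card ≤ _ + 1 := Finset.card_insert_le _ _
    _ ≤ _ := by
      have := Finset.card_union_le (Finset.univ.biUnion fun x => (endExponents s (σ x)).toFinset)
        ((chunkTable s σ E).flatMap fun c => (runLength c).map Prod.snd).toFinset
      have := List.toFinset_card_le ((chunkTable s σ E).flatMap fun c => (runLength c).map Prod.snd)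
      omega

variable [Inhabited α]

/-- A bound on the exponents needed to undo the compression of a system with `v` variables. -/
def exponentBound (v K N : ℕ) : ℕ := diophantineBound (1 + v * 4 + K * 2) (5 * (K + N) + 1) + 1

variable {K N : ℕ} {X : ℕ → ℕ}

/-- Undoing the compression of the letters of a system. The number of letters after popping and the
number of compressed chunks are small, so small values of the exponents suffice. -/
theorem exists_decoding_exponents (hE : IsBounded K N E)
    (hE' : IsBounded K N (compressSystem s σ E)) :
    ∃ X : ℕ → ℕ, X 1 = 1 ∧ (∀ n, 1 ≤ X n) ∧ (∀ n, X n ≤ exponentBound (Fintype.card V) K N) ∧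
      ∀ j, ∀ t ∈ runs [] (pop s σ (E j)),
        (compress s (chunkTable s σ E).idxOf (powerWord id t)).flatMap
          (extendInv (decodeBlock X (chunkTable s σ E))) = powerWord X t := by
  obtain ⟨X, X_one, one_le_X, X_le, preserves⟩ := exists_small_exponents (BlockLetter α)
    (M := 5 * (K + N) + 1) (Nat.le_add_left 1 _) (D := relevantExponents s σ E)
    (Finset.mem_insert_self _ _) fun _ => one_le_of_mem_relevantExponents
  have card_le := card_relevantExponents_le (s := s) (σ := σ) (E := E)
    (length_chunkTable.trans_le hE'.letters_le)
  refine ⟨X, X_one, one_le_X, fun n => (X_le n).trans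
    (Nat.succ_le_succ (diophantineBound_mono_left _ card_le)), fun j t ht => ?_⟩
  have visible {c} (hc : c ∈ chunks s (powerWord id t)) : c ∈ visibleChunks s σ (E j) :=
    List.mem_flatMap.2 ⟨t, ht, hc⟩
  rw [flatMap_extendInv_decodeBlock_compress fun c hc => positivePart_mem_chunkTable (visible hc)]
  have run_infix : t.map Sum.inl <:+: pop s σ (E j) := map_inl_infix_of_mem_runs ht
  have length_run : t.length ≤ 5 * (K + N) := by
    have := run_infix.length_le
    have := length_pop_le (s := s) (σ := σ) (E j)
    have := hE.length_le j
    rw [List.length_map] at *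
    omega
  have length_chunks_le : (chunks s (powerWord id t)).length ≤ K := by
    refine le_trans ?_ (hE'.length_letters_le j)
    rw [compressSystem, letters_compressSymbolic, List.length_map, visibleChunks,
      List.length_flatMap]
    exact List.single_le_sum (fun _ _ => Nat.zero_le _) _ (List.mem_map_of_mem ht)
  have length_flatMap := length_flatMap_chunkPower_le (s := s) (powerWord id t)
  refine preserves _ _ (by omega) (by omega) ?_ ?_ ?_
  · intro p hp
    obtain ⟨c, hc, hpc⟩ := List.mem_flatMap.1 hp
    exact exponent_mem_of_mem_chunkPower (positivePart_mem_chunkTable (visible hc)) hpc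
  · exact fun p hp => exponent_mem_of_mem_pop (run_infix.subset (List.mem_map_of_mem hp))
  · rw [powerWord_id_flatMap_chunkPower, flatten_chunks]

theorem length_flatMap_extendInv_decodeBlock_le {T : List (List (BlockLetter α))} {G : ℕ}
    (hG : 1 ≤ G) (hX : ∀ n, X n ≤ G) (hT : ∀ c ∈ T, (runLength c).length ≤ 2)
    (w : List (BlockLetter α)) :
    (w.flatMap (extendInv (decodeBlock X T))).length ≤ w.length * (2 * G) := by
  rw [List.length_flatMap,
    ← List.length_map fun a => (extendInv (decodeBlock X T) a).length]
  refine List.sum_le_card_nsmul _ _ fun n hn => ?_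
  obtain ⟨a, -, rfl⟩ := List.mem_map.1 hn
  exact (length_orient _ _).trans_le (length_decodeBlock_le hG hX hT a.1)

/-- A bound on the coefficients by which undoing a compression increases the weight. -/
def stepBound (v K N : ℕ) : ℕ := (v + 1) * (4 * exponentBound v K N)

theorem weight_replaceMiddle_le {T : List (List (BlockLetter α))} (one_le_X : ∀ n, 1 ≤ X n)
    (X_le : ∀ n, X n ≤ exponentBound (Fintype.card V) K N)
    (hT : ∀ c ∈ T, (runLength c).length ≤ 2) (σ τ : V → List (BlockLetter α)) :
    weight (fun x => replaceMiddle s X (σ x) ((τ x).flatMap (extendInv (decodeBlock X T)))) ≤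
      stepBound (Fintype.card V) K N * weight τ + stepBound (Fintype.card V) K N := by
  set G := exponentBound (Fintype.card V) K N
  have one_le_G : 1 ≤ G := (one_le_X 0).trans (X_le 0)
  calc weight (fun x => replaceMiddle s X (σ x) ((τ x).flatMap (extendInv (decodeBlock X T))))
      ≤ ∑ x, (4 * G + (τ x).length * (2 * G)) := Finset.sum_le_sum fun x _ =>
        (length_replaceMiddle_le X_le _ _).trans (Nat.add_le_add_left
          (length_flatMap_extendInv_decodeBlock_le one_le_G X_le hT _) _)
    _ = Fintype.card V * (4 * G) + weight τ * (2 * G) := by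
      rw [Finset.sum_add_distrib, Finset.sum_const, Finset.card_univ, smul_eq_mul, weight,
        Finset.sum_mul]
    _ ≤ stepBound (Fintype.card V) K N * weight τ + stepBound (Fintype.card V) K N := by
      rw [add_comm, stepBound]
      refine add_le_add ?_ (Nat.mul_le_mul_right _ (Nat.le_succ _))
      rw [mul_comm]
      refine Nat.mul_le_mul_right _ ?_
      nlinarith [Nat.zero_le (Fintype.card V * G)]

end Lift

/-- One round of compression. A quarter of the letters is saved, which makes up for those popped
from the variables. -/
theorem exists_compressed_system {α V ι : Type*} [Fintype V] [Fintype ι] [Inhabited α] {K N : ℕ}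
    (hK : 9 * N + Fintype.card (ι × Bool) ≤ K)
    {E : WordSystem α V ι} {σ : V → List (BlockLetter α)} (hE : IsBounded K N E)
    (hσ : IsSolution E σ) (hweight : 0 < weight σ) :
    ∃ E' : WordSystem α V ι, IsBounded K N E' ∧
      (∃ σ', IsSolution E' σ' ∧ weight σ' < weight σ) ∧
      ∀ τ, IsSolution E' τ → ∃ τ', IsSolution E τ' ∧ weight τ' ≤
        stepBound (Fintype.card V) K N * weight τ + stepBound (Fintype.card V) K N := by
  classical
  obtain ⟨s, hs⟩ := exists_partition_sum_letters_le hσ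
  have letters_le : ∑ j, (letters (compressSystem s σ E j)).length ≤ K := by
    have : 4 * ∑ j, (letters (compressSystem s σ E j)).length ≤ _ := hs _
    have := hE.letters_le
    have := hE.vars_le
    omega
  have hE' : IsBounded K N (compressSystem s σ E) := hE.compressSystem letters_le
  obtain ⟨X, X_one, one_le_X, X_le, decode⟩ := exists_decoding_exponents hE hE'
  exact ⟨compressSystem s σ E, hE',
    ⟨_, hσ.compressSystem, weight_compress_middle_lt hweight⟩,
    fun τ hτ => ⟨_, hσ.of_compressSystem X_one one_le_X decode hτ,
      weight_replaceMiddle_le one_le_X X_le (fun c => length_runLength_of_mem_chunkTable) σ τ⟩⟩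

section BoundedSolutions

variable {α V ι : Type*}

/-- A finite stock of letters and variables containing those of a system bounded by `K`. -/
abbrev BoundedSymbol (α V : Type*) (K : ℕ) :=
  (((α × Bool) × (α × Bool) × Fin K) × Bool) ⊕ (V × Bool)

/-- A finite type of codes for the bounded systems: the sides of the equations are padded by `none`
to the length `n`. -/
abbrev SystemCode (α V ι : Type*) (K n : ℕ) :=
  ι × Bool → List.Vector (Option (BoundedSymbol α V K)) n

/-- The letter or variable denoted by a symbol. -/
def decodeSymbol {K : ℕ} : BoundedSymbol α V K → BlockLetter α ⊕ (V × Bool) :=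
  Sum.map (fun a => (⟨a.1.1, a.1.2.1, a.1.2.2⟩, a.2)) id

/-- The system with a given code. -/
def decodeSystem {K n : ℕ} (S : SystemCode α V ι K n) : WordSystem α V ι :=
  fun j => (S j).toList.reduceOption.map decodeSymbol

theorem exists_vector_reduceOption_eq {A : Type*} {U : List A} {n : ℕ} (hU : U.length ≤ n) :
    ∃ S : List.Vector (Option A) n, S.toList.reduceOption = U := by
  refine ⟨⟨U.map some ++ List.replicate (n - U.length) none, by simp [hU]⟩, ?_⟩
  simp [List.Vector.toList, List.reduceOption]

theorem exists_map_decodeSymbol_eq {K : ℕ} {U : SymbolicWord (BlockLetter α) V}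
    (hU : ∀ a ∈ letters U, a.1.index < K) :
    ∃ U' : List (BoundedSymbol α V K), U'.map decodeSymbol = U := by
  rw [← Set.mem_range, Set.range_list_map]
  rintro (a | v) h
  · have ha : a ∈ letters U := List.mem_filterMap.2 ⟨Sum.inl a, h, rfl⟩
    exact ⟨Sum.inl ((a.1.first, a.1.last, ⟨a.1.index, hU a ha⟩), a.2), rfl⟩
  · exact ⟨Sum.inr v, rfl⟩

variable [Fintype ι]

theorem IsBounded.exists_code {K N : ℕ} {E : WordSystem α V ι} (hE : IsBounded K N E) :
    ∃ S : SystemCode α V ι K (K + N), decodeSystem S = E := by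
  have exists_side_code (j : ι × Bool) : ∃ S : List.Vector (Option (BoundedSymbol α V K)) (K + N),
      S.toList.reduceOption.map decodeSymbol = E j := by
    obtain ⟨U, hU⟩ := exists_map_decodeSymbol_eq (hE.index_lt j)
    have length_le : U.length ≤ K + N := by
      rw [← List.length_map decodeSymbol, hU]
      exact hE.length_le j
    obtain ⟨S, hS⟩ := exists_vector_reduceOption_eq length_le
    exact ⟨S, hS ▸ hU⟩
  choose S hS using exists_side_code
  exact ⟨S, funext hS⟩

/-- A bound on the weight of a minimal solution of a system of `i` equations in `v` variables over
`a` generators. The number of iterations is the number of codes of bounded systems. -/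
def solutionBound (a v i K N : ℕ) : ℕ :=
  (fun w => stepBound v K N * w + stepBound v K N)^[
    (((a * 2) * ((a * 2) * K) * 2 + v * 2 + 1) ^ (K + N)) ^ (i * 2)] 0

theorem IsSolution.exists_weight_le [Fintype V] [Fintype α] [Inhabited α] {K N : ℕ}
    (hK : 9 * N + Fintype.card (ι × Bool) ≤ K) {E : WordSystem α V ι} (hE : IsBounded K N E)
    {σ : V → List (BlockLetter α)} (hσ : IsSolution E σ) :
    ∃ τ, IsSolution E τ ∧
      weight τ ≤ solutionBound (Fintype.card α) (Fintype.card V) (Fintype.card ι) K N := by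
  classical
  let P : SystemCode α V ι K (K + N) → ℕ → Prop := fun S w =>
    IsBounded K N (decodeSystem S) ∧ ∃ σ, IsSolution (decodeSystem S) σ ∧ weight σ = w
  have step_mono : Monotone fun w =>
      stepBound (Fintype.card V) K N * w + stepBound (Fintype.card V) K N :=
    fun v w hvw => by dsimp only; gcongr
  have descent (S w) (hS : P S w) (hw : 0 < w) : ∃ S' w', P S' w' ∧ w' < w ∧
      ∀ v, P S' v → ∃ u, P S u ∧
        u ≤ stepBound (Fintype.card V) K N * v + stepBound (Fintype.card V) K N := by
    obtain ⟨hE, σ, hσ, rfl⟩ := hS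
    obtain ⟨E', hE', ⟨σ', hσ', weight_lt⟩, lift⟩ := exists_compressed_system hK hE hσ hw
    obtain ⟨S', rfl⟩ := hE'.exists_code
    refine ⟨S', _, ⟨hE', σ', hσ', rfl⟩, weight_lt, ?_⟩
    rintro _ ⟨-, τ, hτ, rfl⟩
    obtain ⟨τ', hτ', weight_le⟩ := lift τ hτ
    exact ⟨_, ⟨hE, τ', hτ', rfl⟩, weight_le⟩
  obtain ⟨S, rfl⟩ := hE.exists_code
  obtain ⟨_, ⟨-, τ, hτ, rfl⟩, weight_le⟩ :=
    exists_le_iterate_of_descent step_mono descent ⟨hE, σ, hσ, rfl⟩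
  have card_code : Fintype.card (SystemCode α V ι K (K + N)) =
      (((Fintype.card α * 2) * ((Fintype.card α * 2) * K) * 2 + Fintype.card V * 2 + 1) ^
        (K + N)) ^ (Fintype.card ι * 2) := by simp
  rw [card_code] at weight_le
  exact ⟨τ, hτ, weight_le⟩

end BoundedSolutions

/-! ### From word equations to free groups -/

section LetterBlocks

open FreeGroup (invRev)

variable {α : Type*}

/-- A letter of the free group regarded as a block of length one. -/
def letterBlock (g : α × Bool) : BlockLetter α := (⟨(g.1, true), (g.1, true), 0⟩, g.2)

@[simp]
theorem firstLetter_letterBlock (g : α × Bool) : firstLetter (letterBlock g) = g := by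
  obtain ⟨a, _ | _⟩ := g <;> simp [firstLetter, letterBlock, letterInv]

@[simp]
theorem lastLetter_letterBlock (g : α × Bool) : lastLetter (letterBlock g) = g := by
  obtain ⟨a, _ | _⟩ := g <;> simp [lastLetter, letterBlock, letterInv]

theorem ne_letterInv_iff {a b : α × Bool} : b ≠ letterInv a ↔ (a.1 = b.1 → a.2 = b.2) := by
  obtain ⟨a, x⟩ := a
  obtain ⟨b, y⟩ := b
  cases x <;> cases y <;> simp [letterInv, eq_comm]

theorem reduced_map_letterBlock {w : List (α × Bool)} :
    Reduced (w.map letterBlock) ↔ FreeGroup.IsReduced w := by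
  simp only [Reduced, List.isChain_map, FreeGroup.IsReduced, firstLetter_letterBlock,
    lastLetter_letterBlock, ne_letterInv_iff]

theorem invRev_map_letterBlock (w : List (α × Bool)) :
    invRev (w.map letterBlock) = (invRev w).map letterBlock := by
  simp only [invRev_eq_reverse_map, List.map_reverse, List.map_map]
  rfl

theorem orient_map_letterBlock (b : Bool) (w : List (α × Bool)) :
    orient b (w.map letterBlock) = (orient b w).map letterBlock := by
  cases b
  · exact invRev_map_letterBlock w
  · rfl

end LetterBlocks

section Cancellation

open FreeGroup (invRev)

variable {α : Type*}

theorem exists_eq_letterInv_of_not_isReduced_append {x y : List (α × Bool)} {a : α × Bool}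
    (hx : FreeGroup.IsReduced (x ++ [a])) (hy : FreeGroup.IsReduced y)
    (hxy : ¬ FreeGroup.IsReduced (x ++ [a] ++ y)) : ∃ y', y = letterInv a :: y' := by
  cases y with
  | nil => exact absurd (by simpa using hx) hxy
  | cons b y =>
    by_contra! hb
    have hab : b ≠ letterInv a := fun h => hb y (h ▸ rfl)
    refine hxy (hx.append_overlap ?_ (List.cons_ne_nil a []))
    rw [List.singleton_append, FreeGroup.isReduced_cons_cons]
    exact ⟨ne_letterInv_iff.1 hab, hy⟩

theorem exists_reduce_append_eq [DecidableEq α] {x y : List (α × Bool)} (hx : FreeGroup.IsReduced x)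
    (hy : FreeGroup.IsReduced y) :
    ∃ p q s, x = p ++ q ∧ y = invRev q ++ s ∧ FreeGroup.reduce (x ++ y) = p ++ s := by
  induction x using List.reverseRecOn generalizing y with
  | nil => exact ⟨[], [], y, rfl, rfl, hy.reduce_eq⟩
  | append_singleton x a ih =>
    by_cases hxy : FreeGroup.IsReduced (x ++ [a] ++ y)
    · exact ⟨x ++ [a], [], y, by simp, rfl, hxy.reduce_eq⟩
    obtain ⟨y, rfl⟩ := exists_eq_letterInv_of_not_isReduced_append hx hy hxy
    obtain ⟨p, q, s, rfl, rfl, hreduce⟩ :=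
      ih (hx.infix (List.infix_append' [] x [a])) (hy.infix (List.suffix_cons _ _).isInfix)
    refine ⟨p, q ++ [a], s, by simp, by simp [invRev_eq_reverse_map], ?_⟩
    rw [← hreduce, List.append_assoc, List.singleton_append]
    exact FreeGroup.reduce.Step.eq FreeGroup.Red.Step.not

end Cancellation

section ExpandBlock

open FreeGroup (invRev)

variable {α : Type*} [DecidableEq α] [Nontrivial α]

/-- A shortest reduced word with the first and the last letter of a given block. -/
noncomputable def expandBlock (d : Block α) : List (α × Bool) :=
  if d.first = d.last then [d.first]
  else if d.last = letterInv d.first then [d.first, ((exists_ne d.first.1).choose, true), d.last]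
  else [d.first, d.last]

theorem expandBlock_ne_nil (d : Block α) : expandBlock d ≠ [] := by
  unfold expandBlock
  split_ifs <;> simp

theorem length_expandBlock_le (d : Block α) : (expandBlock d).length ≤ 3 := by
  unfold expandBlock
  split_ifs <;> simp

theorem isReduced_expandBlock (d : Block α) : FreeGroup.IsReduced (expandBlock d) := by
  have hne := (exists_ne d.first.1).choose_spec
  unfold expandBlock
  split_ifs with heq hinv
  · exact FreeGroup.IsReduced.singleton
  · simp [FreeGroup.IsReduced, hinv, letterInv, hne, hne.symm]
  · rw [FreeGroup.isReduced_cons_cons]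
    exact ⟨ne_letterInv_iff.1 hinv, FreeGroup.IsReduced.singleton⟩

theorem wordFirst_map_expandBlock [Inhabited α] (d : Block α) :
    wordFirst ((expandBlock d).map letterBlock) = d.first := by
  unfold expandBlock
  split_ifs <;> simp [wordFirst]

theorem wordLast_map_expandBlock [Inhabited α] (d : Block α) :
    wordLast ((expandBlock d).map letterBlock) = d.last := by
  unfold expandBlock
  split_ifs with heq <;> simp [wordLast, heq]

theorem extendInv_expandBlock_letterBlock (g : α × Bool) :
    extendInv expandBlock (letterBlock g) = [g] := by
  obtain ⟨a, _ | _⟩ := g <;>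
    simp [extendInv, orient, expandBlock, letterBlock, invRev_singleton, letterInv]

theorem isReduced_flatMap_expandBlock {w : List (BlockLetter α)} (hw : Reduced w) :
    FreeGroup.IsReduced (w.flatMap (extendInv expandBlock)) := by
  inhabit α
  rw [← reduced_map_letterBlock, List.map_flatMap]
  simp only [extendInv, ← orient_map_letterBlock]
  exact Reduced.flatMap_extendInv (f := fun d => (expandBlock d).map letterBlock)
    (fun d => by simpa using expandBlock_ne_nil d)
    (fun d => reduced_map_letterBlock.2 (isReduced_expandBlock d))
    wordFirst_map_expandBlock wordLast_map_expandBlock hw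

/-- The element of the free group represented by a word of blocks. -/
noncomputable def groupValue (w : List (BlockLetter α)) : FreeGroup α :=
  FreeGroup.mk (w.flatMap (extendInv expandBlock))

theorem groupValue_append (u w : List (BlockLetter α)) :
    groupValue (u ++ w) = groupValue u * groupValue w := by
  rw [groupValue, List.flatMap_append, ← FreeGroup.mul_mk]
  rfl

theorem groupValue_invRev (w : List (BlockLetter α)) :
    groupValue (invRev w) = (groupValue w)⁻¹ := by
  rw [groupValue, flatMap_extendInv_invRev, groupValue, FreeGroup.inv_mk]

theorem groupValue_map_letterBlock (w : List (α × Bool)) :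
    groupValue (w.map letterBlock) = FreeGroup.mk w := by
  simp [groupValue, List.flatMap_map, extendInv_expandBlock_letterBlock]

theorem groupValue_ne_one {w : List (BlockLetter α)} (hw : Reduced w) (hne : w ≠ []) :
    groupValue w ≠ 1 := by
  rw [Ne, ← FreeGroup.toWord_eq_nil_iff, groupValue, FreeGroup.toWord_mk,
    (isReduced_flatMap_expandBlock hw).reduce_eq, List.flatMap_eq_nil_iff]
  obtain ⟨a, w, rfl⟩ := List.exists_cons_of_ne_nil hne
  exact fun h => orient_ne_nil (expandBlock_ne_nil a.1) (h a List.mem_cons_self)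

theorem norm_groupValue_le (w : List (BlockLetter α)) : (groupValue w).norm ≤ 3 * w.length := by
  refine FreeGroup.norm_mk_le.trans ?_
  rw [List.length_flatMap, mul_comm, ← smul_eq_mul, ← List.length_map (as := w)]
  refine List.sum_le_card_nsmul _ _ fun n hn => ?_
  obtain ⟨a, -, rfl⟩ := List.mem_map.1 hn
  rw [extendInv, length_orient]
  exact length_expandBlock_le a.1

end ExpandBlock

section GroupConstraints

open FreeGroup (invRev)

/-- Constraints on elements of a free group indexed by `W`. -/
inductive GroupConstraint (α W : Type*)
  | mul (i j k : W)
  | eqConst (i : W) (g : FreeGroup α)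
  | neOne (i : W)

variable {α W C : Type*}

namespace GroupConstraint

/-- The elements `u` satisfy the constraint. -/
def Holds (u : W → FreeGroup α) : GroupConstraint α W → Prop
  | mul i j k => u i * u j = u k
  | eqConst i g => u i = g
  | neOne i => u i ≠ 1

variable [DecidableEq α]

/-- The number of letters in the equations expressing the constraint. -/
def size : GroupConstraint α W → ℕ
  | mul _ _ _ => 0
  | eqConst _ g => g.norm
  | neOne _ => 1

/-- The word equations expressing the constraint with index `c` on reduced words, without
cancellation: a product `x y = z` becomes `x = p₀ p₁`, `y = p₁⁻¹ p₂`, `z = p₀ p₂`, and `x ≠ 1`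
becomes `x = a p₀` for a letter `a`. -/
def equations (a : α × Bool) (c : C) : GroupConstraint α W → Fin 3 →
    SymbolicWord (BlockLetter α) (W ⊕ C × Fin 3) × SymbolicWord (BlockLetter α) (W ⊕ C × Fin 3)
  | mul i j k =>
    ![([.inr (.inl i, true)], [.inr (.inr (c, 0), true), .inr (.inr (c, 1), true)]),
      ([.inr (.inl j, true)], [.inr (.inr (c, 1), false), .inr (.inr (c, 2), true)]),
      ([.inr (.inl k, true)], [.inr (.inr (c, 0), true), .inr (.inr (c, 2), true)])]
  | eqConst i g =>
    ![([.inr (.inl i, true)], (g.toWord.map letterBlock).map .inl), ([], []), ([], [])]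
  | neOne i =>
    ![([.inr (.inl i, true)], [.inl (letterBlock a), .inr (.inr (c, 0), true)]),
      ([], []), ([], [])]

theorem exists_letters_equations_eq_map (φ : GroupConstraint α W) (a : α × Bool) (c : C)
    (k : Fin 3) : ∃ w : List (α × Bool),
      letters (φ.equations a c k).1 ++ letters (φ.equations a c k).2 = w.map letterBlock := by
  cases φ with
  | mul => exact ⟨[], by fin_cases k <;> rfl⟩
  | eqConst i g =>
    fin_cases k
    · exact ⟨g.toWord, letters_map_inl _⟩
    · exact ⟨[], rfl⟩
    · exact ⟨[], rfl⟩
  | neOne =>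
    fin_cases k
    · exact ⟨[a], rfl⟩
    · exact ⟨[], rfl⟩
    · exact ⟨[], rfl⟩

theorem sum_letters_equations (φ : GroupConstraint α W) (a : α × Bool) (c : C) :
    ∑ k, ((letters (φ.equations a c k).1).length + (letters (φ.equations a c k).2).length) =
      φ.size := by
  cases φ <;> simp [Fin.sum_univ_three, equations, size, FreeGroup.norm, -List.map_map]

theorem sum_vars_equations_le (φ : GroupConstraint α W) (a : α × Bool) (c : C) :
    ∑ k, ((vars (φ.equations a c k).1).length + (vars (φ.equations a c k).2).length) ≤ 9 := by
  cases φ <;> simp [Fin.sum_univ_three, equations, -List.map_map]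

theorem Holds.exists_isSolution_equations [Nonempty α] {u : W → FreeGroup α}
    {φ : GroupConstraint α W} (h : φ.Holds u) : ∃ (a : α × Bool) (p : Fin 3 → List (α × Bool)),
    ∀ (c : C) (σ : W ⊕ C × Fin 3 → List (BlockLetter α)),
      (∀ i, σ (.inl i) = (u i).toWord.map letterBlock) →
      (∀ k, σ (.inr (c, k)) = (p k).map letterBlock) →
      ∀ k, eval σ (φ.equations a c k).1 = eval σ (φ.equations a c k).2 ∧
        Reduced (eval σ (φ.equations a c k).1) := by
  inhabit α
  have reduced (i : W) : Reduced ((u i).toWord.map letterBlock) :=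
    reduced_map_letterBlock.2 FreeGroup.isReduced_toWord
  have reduced_nil : Reduced ([] : List (BlockLetter α)) := List.IsChain.nil
  cases φ with
  | mul i j k =>
    obtain ⟨p, q, s, hi, hj, hij⟩ := exists_reduce_append_eq
      (FreeGroup.isReduced_toWord (x := u i)) (FreeGroup.isReduced_toWord (x := u j))
    have hk : (u k).toWord = p ++ s := by rw [← hij, ← FreeGroup.toWord_mul, h]
    refine ⟨default, ![p, q, s], fun c σ hσ hp k => ?_⟩
    fin_cases k
    · simpa [equations, extendInv_true, hσ, hp, reduced] using congrArg (List.map letterBlock) hi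
    · simpa [equations, extendInv_true, extendInv_false, hσ, hp, reduced,
        invRev_map_letterBlock] using congrArg (List.map letterBlock) hj
    · simpa [equations, extendInv_true, hσ, hp, reduced] using congrArg (List.map letterBlock) hk
  | eqConst i g =>
    subst h
    refine ⟨default, fun _ => [], fun c σ hσ _ k => ?_⟩
    fin_cases k <;> simp [equations, extendInv_true, hσ, reduced, reduced_nil, -List.map_map]
  | neOne i =>
    obtain ⟨a, p, hi⟩ := List.exists_cons_of_ne_nil (mt FreeGroup.toWord_eq_nil_iff.1 h)
    refine ⟨a, fun _ => p, fun c σ hσ hp k => ?_⟩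
    fin_cases k
    · simpa [equations, extendInv_true, hσ, hp, reduced] using congrArg (List.map letterBlock) hi
    · simp [equations, reduced_nil]
    · simp [equations, reduced_nil]

theorem holds_groupValue [Nontrivial α] {φ : GroupConstraint α W} {a : α × Bool} {c : C}
    {τ : W ⊕ C × Fin 3 → List (BlockLetter α)}
    (h : ∀ k, eval τ (φ.equations a c k).1 = eval τ (φ.equations a c k).2 ∧
      Reduced (eval τ (φ.equations a c k).1)) :
    φ.Holds fun i => groupValue (τ (.inl i)) := by
  cases φ with
  | mul i j k =>
    have h₀ := h 0
    have h₁ := h 1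
    have h₂ := h 2
    simp only [equations, Matrix.cons_val, eval_cons_inr, eval_nil, List.append_nil, extendInv_true,
      extendInv_false] at h₀ h₁ h₂
    rw [Holds, h₀.1, h₁.1, h₂.1]
    simp only [groupValue_append, groupValue_invRev]
    group
  | eqConst i g =>
    have h₀ := h 0
    simp only [equations, Matrix.cons_val, eval_cons_inr, eval_nil, List.append_nil, extendInv_true,
      eval_map_inl] at h₀
    rw [Holds, h₀.1, groupValue_map_letterBlock, FreeGroup.mk_toWord]
  | neOne i =>
    have h₀ := h 0
    simp only [equations, Matrix.cons_val, eval_cons_inr, eval_cons_inl, eval_nil,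
      List.append_nil, extendInv_true] at h₀
    exact groupValue_ne_one h₀.2 (h₀.1 ▸ List.cons_ne_nil _ _)

end GroupConstraint

variable [DecidableEq α]

/-- The system of word equations expressing a family of constraints. -/
def constraintSystem (φ : C → GroupConstraint α W) (a : C → α × Bool) :
    WordSystem α (W ⊕ C × Fin 3) (C × Fin 3) := fun j =>
  bif j.2 then ((φ j.1.1).equations (a j.1.1) j.1.1 j.1.2).1
  else ((φ j.1.1).equations (a j.1.1) j.1.1 j.1.2).2

theorem isBounded_constraintSystem [Fintype C] (φ : C → GroupConstraint α W) (a : C → α × Bool)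
    {l K : ℕ} (hl : ∑ c, (φ c).size ≤ l) (hK : l < K) :
    IsBounded K (9 * Fintype.card C) (constraintSystem φ a) := by
  have sum_sides (f : SymbolicWord (BlockLetter α) (W ⊕ C × Fin 3) → ℕ) :
      ∑ j, f (constraintSystem φ a j) = ∑ c, ∑ k,
        (f ((φ c).equations (a c) c k).1 + f ((φ c).equations (a c) c k).2) := by
    simp [Fintype.sum_prod_type, constraintSystem]
  refine ⟨?_, ?_, ?_⟩
  · rintro ⟨⟨c, k⟩, b⟩ x hx
    obtain ⟨w, hw⟩ := (φ c).exists_letters_equations_eq_map (a c) c k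
    have mem_map : x ∈ w.map letterBlock := by
      rw [← hw, List.mem_append]
      cases b
      · exact Or.inr hx
      · exact Or.inl hx
    obtain ⟨g, -, rfl⟩ := List.mem_map.1 mem_map
    exact (hl.trans_lt hK).pos
  · rw [sum_sides fun U => (letters U).length]
    simp only [GroupConstraint.sum_letters_equations]
    exact hl.trans hK.le
  · rw [sum_sides fun U => (vars U).length]
    refine (Finset.sum_le_card_nsmul _ _ 9 fun c _ =>
      GroupConstraint.sum_vars_equations_le _ _ _).trans ?_
    simp [mul_comm]

/-- A bound on the norms in a minimal solution of `c` constraints of total size `l` on `w` elements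
of a free group of rank `a`. -/
def constraintBound (a w c l : ℕ) : ℕ :=
  3 * solutionBound a (w + c * 3) (c * 3) (l + 1 + 87 * c) (9 * c)

theorem exists_norm_le_constraintBound [Fintype α] [Nontrivial α] [Fintype C] [Fintype W]
    {φ : C → GroupConstraint α W} {l : ℕ} (hl : ∑ c, (φ c).size ≤ l) {u : W → FreeGroup α}
    (hu : ∀ c, (φ c).Holds u) :
    ∃ u' : W → FreeGroup α, (∀ c, (φ c).Holds u') ∧
      ∀ i, (u' i).norm ≤
        constraintBound (Fintype.card α) (Fintype.card W) (Fintype.card C) l := by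
  inhabit α
  choose a p hp using fun c => (hu c).exists_isSolution_equations (C := C)
  have hσ : IsSolution (constraintSystem φ a)
      (Sum.elim (fun i => (u i).toWord.map letterBlock) fun j => (p j.1 j.2).map letterBlock) :=
    fun j => hp j.1 j.1 _ (fun _ => rfl) (fun _ => rfl) j.2
  obtain ⟨τ, hτ, weight_le⟩ := hσ.exists_weight_le
    (K := l + 1 + 87 * Fintype.card C) (by simp; omega)
    (isBounded_constraintSystem φ a hl (by omega))
  refine ⟨fun i => groupValue (τ (.inl i)),
    fun c => GroupConstraint.holds_groupValue (a := a c) (c := c) fun k => hτ (c, k), fun i => ?_⟩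
  have length_le_weight : (τ (.inl i)).length ≤ weight τ :=
    Finset.single_le_sum (f := fun x => (τ x).length) (fun _ _ => Nat.zero_le _)
      (Finset.mem_univ _)
  calc (groupValue (τ (.inl i))).norm ≤ 3 * weight τ := by
        linarith [norm_groupValue_le (τ (.inl i))]
    _ ≤ _ := by
        simp only [Fintype.card_sum, Fintype.card_prod, Fintype.card_fin] at weight_le
        exact Nat.mul_le_mul_left 3 weight_le

end GroupConstraints

section PartialHom

variable {α : Type*} [DecidableEq α]

/-- A map of a free group that respects the products and inverses computed inside the finite set
`S`, the nontriviality of the elements of `S`, and fixes its elements of norm at most `n`. Such maps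
preserve the truth of every quantifier-free formula whose subterms have values in `S`. -/
structure IsPartialHom (n : ℕ) (S : Finset (FreeGroup α)) (f : FreeGroup α → FreeGroup α) :
    Prop where
  map_mul : ∀ {x y}, x ∈ S → y ∈ S → x * y ∈ S → f (x * y) = f x * f y
  map_inv : ∀ {x}, x ∈ S → x⁻¹ ∈ S → f x⁻¹ = (f x)⁻¹
  map_one : f 1 = 1
  map_ne_one : ∀ {x}, x ∈ S → x ≠ 1 → f x ≠ 1
  map_eq_self : ∀ {x}, x ∈ S → x.norm ≤ n → f x = x

theorem IsPartialHom.mono {m n : ℕ} {S T : Finset (FreeGroup α)}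
    {f : FreeGroup α → FreeGroup α} (hf : IsPartialHom n T f) (hST : S ⊆ T) (hmn : m ≤ n) :
    IsPartialHom m S f where
  map_mul hx hy hxy := hf.map_mul (hST hx) (hST hy) (hST hxy)
  map_inv hx hx' := hf.map_inv (hST hx) (hST hx')
  map_one := hf.map_one
  map_ne_one hx := hf.map_ne_one (hST hx)
  map_eq_self hx hn := hf.map_eq_self (hST hx) (hn.trans hmn)

/-- The constraints that the inclusion of `T` in the free group satisfies and that characterize the
restrictions to `T` of partial homomorphisms: the multiplication table, the values of the elements
of norm at most `n`, and nontriviality. -/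
def tableConstraint (n : ℕ) (T : Finset (FreeGroup α)) (h : 1 ∈ T) :
    (T × T) ⊕ (T ⊕ T) → GroupConstraint α T
  | .inl p => if h' : p.1.1 * p.2.1 ∈ T then .mul p.1 p.2 ⟨_, h'⟩ else .eqConst ⟨1, h⟩ 1
  | .inr (.inl x) => if x.1.norm ≤ n then .eqConst x x else .eqConst ⟨1, h⟩ 1
  | .inr (.inr x) => if x.1 = 1 then .eqConst ⟨1, h⟩ 1 else .neOne x

variable {n : ℕ} {S T : Finset (FreeGroup α)} (h : 1 ∈ T)

theorem sum_size_tableConstraint_le :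
    ∑ c, (tableConstraint n T h c).size ≤ T.card * n + T.card := by
  have mul_size (p : T × T) : (tableConstraint n T h (.inl p)).size = 0 := by
    simp only [tableConstraint]
    split_ifs <;> simp [GroupConstraint.size]
  have eq_size (x : T) : (tableConstraint n T h (.inr (.inl x))).size ≤ n := by
    simp only [tableConstraint]
    split_ifs with hx <;> simp [GroupConstraint.size, hx]
  have ne_size (x : T) : (tableConstraint n T h (.inr (.inr x))).size ≤ 1 := by
    simp only [tableConstraint]
    split_ifs <;> simp [GroupConstraint.size]
  simp only [Fintype.sum_sum_type, mul_size, Finset.sum_const_zero, zero_add]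
  refine add_le_add ?_ ?_
  · simpa using Finset.sum_le_card_nsmul Finset.univ _ n fun x _ => eq_size x
  · simpa using Finset.sum_le_card_nsmul Finset.univ _ 1 fun x _ => ne_size x

theorem holds_tableConstraint (c : (T × T) ⊕ (T ⊕ T)) :
    (tableConstraint n T h c).Holds Subtype.val := by
  rcases c with p | x | x <;> simp only [tableConstraint] <;> split_ifs with h' <;>
    first | rfl | exact h'

theorem isPartialHom_of_holds_tableConstraint {u : T → FreeGroup α}
    (hu : ∀ c, (tableConstraint n T h c).Holds u) :
    IsPartialHom n T fun x => if hx : x ∈ T then u ⟨x, hx⟩ else 1 := by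
  have u_mul (x y : T) (hxy : x.1 * y.1 ∈ T) : u ⟨_, hxy⟩ = u x * u y := by
    have := hu (.inl (x, y))
    simp only [tableConstraint, hxy, dif_pos, GroupConstraint.Holds] at this
    exact this.symm
  have u_one : u ⟨1, h⟩ = 1 := by
    simpa [tableConstraint, GroupConstraint.Holds] using hu (.inr (.inr ⟨1, h⟩))
  refine ⟨fun hx hy hxy => ?_, fun {x} hx hx' => ?_, ?_, fun {x} hx hne => ?_,
    fun {x} hx hn => ?_⟩
  · simpa only [hx, hy, hxy, dif_pos] using u_mul ⟨_, hx⟩ ⟨_, hy⟩ hxy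
  · have := u_mul ⟨x, hx⟩ ⟨x⁻¹, hx'⟩ (by simpa using h)
    simp only [mul_inv_cancel, u_one] at this
    simpa only [hx, hx', dif_pos] using eq_inv_of_mul_eq_one_right this.symm
  · simpa only [h, dif_pos] using u_one
  · simpa [tableConstraint, GroupConstraint.Holds, hne, hx] using hu (.inr (.inr ⟨x, hx⟩))
  · simpa [tableConstraint, GroupConstraint.Holds, hn, hx] using hu (.inr (.inl ⟨x, hx⟩))

/-- A bound on the values of suitable partial homomorphisms on `n` elements of a free group of
rank `a`. -/
def partialHomBound (a n : ℕ) : ℕ :=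
  constraintBound a (n + 1) ((n + 1) * (n + 1) + ((n + 1) + (n + 1))) ((n + 1) * n + (n + 1))

theorem exists_isPartialHom [Fintype α] [Nontrivial α] (hS : S.card ≤ n) :
    ∃ f, IsPartialHom n S f ∧ ∀ x, (f x).norm ≤ partialHomBound (Fintype.card α) n := by
  obtain ⟨T, hST, card_T⟩ := Infinite.exists_superset_card_eq (insert 1 S) (n + 1)
    ((Finset.card_insert_le _ _).trans (Nat.succ_le_succ hS))
  have one_mem : 1 ∈ T := hST (Finset.mem_insert_self _ _)
  obtain ⟨u, hu, norm_le⟩ := exists_norm_le_constraintBound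
    (sum_size_tableConstraint_le (n := n) one_mem) (holds_tableConstraint one_mem)
  refine ⟨_, (isPartialHom_of_holds_tableConstraint one_mem hu).mono
    ((Finset.subset_insert _ _).trans hST) le_rfl, fun x => ?_⟩
  split_ifs with hx
  · simpa [card_T, partialHomBound] using norm_le ⟨x, hx⟩
  · simp

end PartialHom

/-! ### Terms and formulas over the language of groups with constants -/

section TermsAndFormulas

/-- Terms in `k` variables with constants from the free group of rank `r`. -/
abbrev GroupTerm (r k : ℕ) := groupLang[[FreeGroup (Fin r)]].Term (Empty ⊕ Fin k)

/-- Formulas in `k` variables with constants from the free group of rank `r`. -/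
abbrev GroupFormula (r k : ℕ) := groupLang[[FreeGroup (Fin r)]].BoundedFormula Empty k

variable {r k : ℕ}

namespace GroupTerm

/-- The product of two terms. -/
def mul (s t : GroupTerm r k) : GroupTerm r k :=
  .func (l := 2) (Sum.inl GroupFunc.mul) ![s, t]

/-- The inverse of a term. -/
def inv (s : GroupTerm r k) : GroupTerm r k :=
  .func (l := 1) (Sum.inl GroupFunc.inv) ![s]

/-- The term for the identity. -/
def one : GroupTerm r k :=
  .func (l := 0) (Sum.inl GroupFunc.one) ![]

/-- The term for a constant from the free group. -/
def const (g : FreeGroup (Fin r)) : GroupTerm r k :=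
  .func (l := 0) (Sum.inr g) ![]

/-- The term for a variable. -/
def var (i : Fin k) : GroupTerm r k :=
  Term.var (Sum.inr i)

@[elab_as_elim]
theorem induction {P : GroupTerm r k → Prop} (mul : ∀ s t, P s → P t → P (mul s t))
    (inv : ∀ s, P s → P (inv s)) (one : P one) (const : ∀ g, P (const g)) (var : ∀ i, P (var i))
    (t : GroupTerm r k) : P t := by
  induction t with
  | var x =>
    obtain x | i := x
    · exact x.elim
    · exact var i
  | @func n f ts ih =>
    obtain f | f := f
    · cases f with
      | mul =>
        rw [show ts = ![ts 0, ts 1] by ext i; fin_cases i <;> rfl]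
        exact mul _ _ (ih 0) (ih 1)
      | inv =>
        rw [show ts = ![ts 0] by ext i; fin_cases i; rfl]
        exact inv _ (ih 0)
      | one =>
        rw [show ts = ![] by ext i; exact i.elim0]
        exact one
    · match n, f, ts with
      | 0, g, ts =>
        rw [show ts = ![] by ext i; exact i.elim0]
        exact const g
      | _ + 1, f, _ => exact PEmpty.elim f

/-- The value of a term in the free group under the assignment `xs`. -/
def value (xs : Fin k → FreeGroup (Fin r)) (t : GroupTerm r k) : FreeGroup (Fin r) :=
  t.realize (Sum.elim default xs)

variable (xs : Fin k → FreeGroup (Fin r))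

theorem value_mul (s t : GroupTerm r k) : value xs (mul s t) = value xs s * value xs t := rfl

theorem value_inv (s : GroupTerm r k) : value xs (inv s) = (value xs s)⁻¹ := rfl

theorem value_one : value xs one = 1 := rfl

theorem value_const (g : FreeGroup (Fin r)) : value xs (const g) = g := rfl

theorem value_var (i : Fin k) : value xs (var i) = xs i := rfl

/-- The list of codes of the symbols of a term, in prefix notation. -/
def code (t : GroupTerm r k) : List ℕ := t.listEncode.map Encodable.encode

end GroupTerm

/-- The symbol code of multiplication; an arity is paired with the code of a function symbol, and
summands of a sum type are told apart by parity. -/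
def mulCode : ℕ := 2 * Nat.pair 2 0 + 1

/-- The symbol code of inversion. -/
def invCode : ℕ := 2 * Nat.pair 1 0 + 1

/-- The symbol code of the identity. -/
def oneCode : ℕ := 2 * Nat.pair 0 0 + 1

/-- The symbol code of the constant whose reduced word has code `c`. -/
def constCode (c : ℕ) : ℕ := 2 * Nat.pair 0 (2 * c + 1) + 1

/-- The symbol code of the `i`-th variable. -/
def varCode (i : ℕ) : ℕ := 2 * (2 * i + 1)

/-- The code of a term with symbol codes `l` in `k` variables, as a symbol of a formula. -/
def termCode (k : ℕ) (l : List ℕ) : ℕ := 2 * Nat.pair k (Encodable.encode l)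

/-- The symbol code of implication. -/
def impCode : ℕ := 3

/-- The symbol code of the universal quantifier. -/
def allCode : ℕ := 7

/-- The symbol code of falsity as a formula in `k` variables. -/
def falsumCode (k : ℕ) : ℕ := 2 * (2 * (k + 2) + 1) + 1

theorem encode_list_map_encode {β : Type*} [Encodable β] (l : List β) :
    Encodable.encode (l.map Encodable.encode) = Encodable.encode l := by
  induction l with
  | nil => rfl
  | cons b l ih =>
    rw [List.map_cons, Encodable.encode_list_cons, Encodable.encode_list_cons, ih,
      Encodable.encode_nat]

namespace GroupTerm

theorem code_mul (s t : GroupTerm r k) : code (mul s t) = mulCode :: (code s ++ code t) := by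
  simp only [code, mul, Term.listEncode, List.map_cons]
  congr 1
  simp [List.finRange_succ]

theorem code_inv (s : GroupTerm r k) : code (inv s) = invCode :: code s := by
  simp only [code, inv, Term.listEncode, List.map_cons]
  congr 1
  simp [List.finRange_succ]

theorem code_one : code (one : GroupTerm r k) = [oneCode] := rfl

theorem code_const (g : FreeGroup (Fin r)) :
    code (const g : GroupTerm r k) = [constCode (Encodable.encode g.toWord)] := rfl

theorem code_var (i : Fin k) : code (var i : GroupTerm r k) = [varCode i] := rfl

theorem encode_code (t : GroupTerm r k) : Encodable.encode (code t) = Encodable.encode t :=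
  encode_list_map_encode _

end GroupTerm

open GroupTerm (value)

namespace GroupFormula

/-- The truth of a formula in the free group under the assignment `xs`. -/
def Holds (xs : Fin k → FreeGroup (Fin r)) (φ : GroupFormula r k) : Prop :=
  φ.Realize default xs

variable (xs : Fin k → FreeGroup (Fin r))

theorem holds_equal (s t : GroupTerm r k) :
    Holds xs (.equal s t) ↔ value xs s = value xs t := Iff.rfl

theorem holds_imp (φ ψ : GroupFormula r k) :
    Holds xs (φ.imp ψ) ↔ (Holds xs φ → Holds xs ψ) := Iff.rfl

theorem not_holds_falsum : ¬ Holds xs (.falsum : GroupFormula r k) := id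

/-- The list of codes of the symbols of a formula, in prefix notation. -/
def code (φ : GroupFormula r k) : List ℕ := φ.listEncode.map Encodable.encode

theorem code_falsum : code (.falsum : GroupFormula r k) = [falsumCode k] := rfl

theorem code_equal (s t : GroupTerm r k) :
    code (.equal s t) = [termCode k (GroupTerm.code s), termCode k (GroupTerm.code t)] := by
  simp only [termCode, GroupTerm.encode_code]
  rfl

theorem code_imp (φ ψ : GroupFormula r k) : code (φ.imp ψ) = impCode :: (code φ ++ code ψ) := by
  simp only [code, BoundedFormula.listEncode, List.cons_append, List.map_cons, List.map_append]
  rfl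

theorem code_all (φ : GroupFormula r (k + 1)) : code φ.all = allCode :: code φ := rfl

theorem encode_code_eq_godelNumberWithConstants (σ : groupLang[[FreeGroup (Fin r)]].Sentence) :
    Encodable.encode (code (k := 0) σ) = godelNumberWithConstants r σ :=
  encode_list_map_encode _

@[elab_as_elim]
theorem isQF_induction {P : ∀ φ : GroupFormula r k, φ.IsQF → Prop} (falsum : P .falsum .falsum)
    (equal : ∀ s t, P (.equal s t) (.of_isAtomic (.equal s t)))
    (imp : ∀ φ ψ hφ hψ, P φ hφ → P ψ hψ → P (φ.imp ψ) (hφ.imp hψ))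
    (φ : GroupFormula r k) (h : φ.IsQF) : P φ h := by
  induction h with
  | falsum => exact falsum
  | of_isAtomic h =>
    cases h with
    | equal s t => exact equal s t
    | rel R => obtain R | R := R <;> exact Empty.elim R
  | imp _ _ hφ hψ => exact imp _ _ _ _ hφ hψ

end GroupFormula

/-! ### Small witnesses for quantifier-free formulas -/

/-- The size of a list of codes: it bounds the number of symbols, the norms of the constants and the
number of distinct subterms of the expression encoded by the list. -/
def codeSize (l : List ℕ) : ℕ := (l.map (· + 1)).sum

theorem codeSize_append (l l' : List ℕ) : codeSize (l ++ l') = codeSize l + codeSize l' := by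
  simp [codeSize]

theorem codeSize_cons (a : ℕ) (l : List ℕ) : codeSize (a :: l) = a + 1 + codeSize l := by
  simp [codeSize]

theorem codeSize_nil : codeSize [] = 0 := rfl

theorem codeSize_le_encode (l : List ℕ) : codeSize l ≤ Encodable.encode l := by
  induction l with
  | nil => simp [codeSize]
  | cons a l ih =>
    have := Nat.add_le_pair a (Encodable.encode l)
    rw [codeSize_cons, Encodable.encode_list_cons, Encodable.encode_nat, Nat.succ_eq_add_one]
    omega

theorem GroupTerm.exists_value_comp_eq (xs : Fin k → FreeGroup (Fin r)) (t : GroupTerm r k) :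
    ∃ S : Finset (FreeGroup (Fin r)), S.card ≤ codeSize (code t) ∧ value xs t ∈ S ∧
      ∀ f, IsPartialHom (codeSize (code t)) S f → value (f ∘ xs) t = f (value xs t) := by
  induction t using GroupTerm.induction with
  | mul s t hs ht =>
    obtain ⟨A, card_A, hsA, hA⟩ := hs
    obtain ⟨B, card_B, htB, hB⟩ := ht
    rw [code_mul, codeSize_cons, codeSize_append]
    refine ⟨insert (value xs s * value xs t) (A ∪ B), ?_, by simp [value_mul], fun f hf => ?_⟩
    · grind
    · rw [value_mul, hA f (hf.mono (by grind) (by omega)), hB f (hf.mono (by grind) (by omega)),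
        value_mul]
      exact (hf.map_mul (by simp [hsA]) (by simp [htB]) (by simp)).symm
  | inv s hs =>
    obtain ⟨A, card_A, hsA, hA⟩ := hs
    rw [code_inv, codeSize_cons]
    refine ⟨insert (value xs s)⁻¹ A, ?_, by simp [value_inv], fun f hf => ?_⟩
    · exact (Finset.card_insert_le _ _).trans (by omega)
    · rw [value_inv, hA f (hf.mono (by simp) (by omega)), value_inv]
      exact (hf.map_inv (by simp [hsA]) (by simp)).symm
  | one =>
    refine ⟨{1}, ?_, by simp [value_one], fun f hf => hf.map_one.symm⟩
    rw [code_one, codeSize_cons, Finset.card_singleton]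
    omega
  | const g =>
    have := Nat.right_le_pair 0 (2 * Encodable.encode g.toWord + 1)
    have norm_le : g.norm ≤ Encodable.encode g.toWord := Encodable.length_le_encode _
    rw [code_const, codeSize_cons, codeSize_nil, constCode]
    exact ⟨{g}, by simp, by simp [value_const],
      fun f hf => (hf.map_eq_self (x := g) (by simp) (by omega)).symm⟩
  | var i =>
    refine ⟨{xs i}, ?_, by simp [value_var], fun f _ => rfl⟩
    rw [code_var, codeSize_cons, Finset.card_singleton]
    omega

namespace GroupFormula

theorem codeSize_code_equal (s t : GroupTerm r k) :
    codeSize (GroupTerm.code s) + codeSize (GroupTerm.code t) + 1 ≤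
      codeSize (code (.equal s t)) := by
  have code_le (l : List ℕ) : codeSize l ≤ termCode k l := by
    have := codeSize_le_encode l
    have := Nat.right_le_pair k (Encodable.encode l)
    rw [termCode]
    omega
  have := code_le (GroupTerm.code s)
  have := code_le (GroupTerm.code t)
  rw [code_equal, codeSize_cons, codeSize_cons]
  omega

/-- Adding `s t⁻¹` to the set makes a partial homomorphism separate distinct values of `s` and
`t`. -/
theorem exists_holds_comp_equal_iff (xs : Fin k → FreeGroup (Fin r)) (s t : GroupTerm r k) :
    ∃ S : Finset (FreeGroup (Fin r)), S.card ≤ codeSize (code (.equal s t)) ∧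
      ∀ f, IsPartialHom (codeSize (code (.equal s t))) S f →
        (Holds (f ∘ xs) (.equal s t) ↔ Holds xs (.equal s t)) := by
  obtain ⟨A, card_A, hsA, hA⟩ := s.exists_value_comp_eq xs
  obtain ⟨B, card_B, htB, hB⟩ := t.exists_value_comp_eq xs
  have := codeSize_code_equal s t
  refine ⟨insert (value xs s * (value xs t)⁻¹) (A ∪ B), by grind, fun f hf => ?_⟩
  rw [holds_equal, holds_equal, hA f (hf.mono (by grind) (by omega)),
    hB f (hf.mono (by grind) (by omega))]
  refine ⟨fun h => ?_, congrArg f⟩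
  by_contra hne
  have map_mul := hf.map_mul (x := value xs s * (value xs t)⁻¹) (y := value xs t)
    (by simp) (by simp [htB]) (by simp [hsA])
  rw [inv_mul_cancel_right, h] at map_mul
  exact hf.map_ne_one (by simp) (by rwa [Ne, mul_inv_eq_one]) (right_eq_mul.1 map_mul)

theorem exists_holds_comp_iff (xs : Fin k → FreeGroup (Fin r)) (φ : GroupFormula r k)
    (hφ : φ.IsQF) :
    ∃ S : Finset (FreeGroup (Fin r)), S.card ≤ codeSize (code φ) ∧
      ∀ f, IsPartialHom (codeSize (code φ)) S f → (Holds (f ∘ xs) φ ↔ Holds xs φ) := by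
  induction φ, hφ using isQF_induction with
  | falsum => exact ⟨∅, by simp, fun f _ => Iff.rfl⟩
  | equal s t => exact exists_holds_comp_equal_iff xs s t
  | imp φ ψ _ _ hφ hψ =>
    obtain ⟨A, card_A, hA⟩ := hφ
    obtain ⟨B, card_B, hB⟩ := hψ
    rw [code_imp, codeSize_cons, codeSize_append]
    refine ⟨A ∪ B, by grind, fun f hf => ?_⟩
    rw [holds_imp, holds_imp, hA f (hf.mono (by grind) (by omega)),
      hB f (hf.mono (by grind) (by omega))]

theorem exists_holds_norm_le (hr : 2 ≤ r) {φ : GroupFormula r k} (hφ : φ.IsQF) {n : ℕ}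
    (hn : codeSize (code φ) ≤ n) {xs : Fin k → FreeGroup (Fin r)} (h : Holds xs φ) :
    ∃ ys, Holds ys φ ∧ ∀ i, (ys i).norm ≤ partialHomBound r n := by
  have : Nontrivial (Fin r) := Fin.nontrivial_iff_two_le.2 hr
  obtain ⟨S, card_S, hS⟩ := exists_holds_comp_iff xs φ hφ
  obtain ⟨f, hf, norm_le⟩ := exists_isPartialHom (card_S.trans hn)
  rw [Fintype.card_fin] at norm_le
  exact ⟨f ∘ xs, (hS f (hf.mono subset_rfl hn)).2 h, fun i => norm_le _⟩

end GroupFormula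

end TermsAndFormulas

/-! ### Evaluating codes of terms -/

section CodeEvaluation

/-- Words representing elements of the free group of rank `r`. -/
abbrev GroupWord (r : ℕ) := List (Fin r × Bool)

variable {r : ℕ}

/-- Replaces the two words on top of a stack by their product. -/
def applyMul (s : List (GroupWord r)) : Option (List (GroupWord r)) :=
  s.head?.bind fun x => s.tail.head?.map fun y => (x ++ y) :: s.tail.tail

/-- Replaces the word on top of a stack by its inverse. -/
def applyInv (s : List (GroupWord r)) : Option (List (GroupWord r)) :=
  s.head?.map fun x => FreeGroup.invRev x :: s.tail

/-- Pushes the reduced word of the constant with symbol code `c`; fails if `c` is no such code. -/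
def pushConst (c : ℕ) (s : List (GroupWord r)) : Option (List (GroupWord r)) :=
  (Encodable.decode (α := GroupWord r) ((Nat.unpair (c / 2)).2 / 2)).bind fun w =>
    if c = constCode (Encodable.encode w) ∧ FreeGroup.reduce w = w then some (w :: s) else none

/-- One step of a stack machine that evaluates terms in `k` variables with symbol codes read from
right to left; the variables take the values listed in `a`. -/
def termStep (a : List (GroupWord r)) (k c : ℕ) (s : List (GroupWord r)) :
    Option (List (GroupWord r)) :=
  if c = mulCode then applyMul s
  else if c = invCode then applyInv s
  else if c = oneCode then some ([] :: s)
  else if c = varCode (c / 4) ∧ c / 4 < k then some (a.getD (c / 4) [] :: s)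
  else pushConst c s

/-- The stack after reading the symbol codes `l`. -/
def termStack (a : List (GroupWord r)) (k : ℕ) (l : List ℕ) : Option (List (GroupWord r)) :=
  l.foldr (fun c s => s.bind (termStep a k c)) (some [])

/-- A word for the value of the term with symbol codes `l`; fails if there is no such term. -/
def termValue (a : List (GroupWord r)) (k : ℕ) (l : List ℕ) : Option (GroupWord r) :=
  (termStack a k l).bind fun s => if s.tail = [] then s.head? else none

/-- The assignment of the elements represented by the words in `a` to `k` variables; missing
entries count as the identity. -/
def assignment (a : List (GroupWord r)) (k : ℕ) : Fin k → FreeGroup (Fin r) :=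
  fun i => FreeGroup.mk (a.getD i [])

section TermMachine

open GroupTerm

variable {k : ℕ} {a : List (GroupWord r)}

/-- The word `v` represents the value of the term `t`. -/
def Represents (a : List (GroupWord r)) (v : GroupWord r) (t : GroupTerm r k) : Prop :=
  FreeGroup.mk v = value (assignment a k) t

theorem Represents.mul {v w : GroupWord r} {s t : GroupTerm r k} (hs : Represents a v s)
    (ht : Represents a w t) : Represents a (v ++ w) (mul s t) := by
  rw [Represents] at *
  rw [value_mul, ← hs, ← ht, FreeGroup.mul_mk]

theorem Represents.inv {v : GroupWord r} {t : GroupTerm r k} (ht : Represents a v t) :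
    Represents a (FreeGroup.invRev v) (inv t) := by
  rw [Represents] at *
  rw [value_inv, ← ht, FreeGroup.inv_mk]

theorem represents_one : Represents a [] (one : GroupTerm r k) := rfl

theorem represents_var (i : Fin k) : Represents a (a.getD i []) (var i) := rfl

theorem represents_const (w : GroupWord r) :
    Represents a w (const (FreeGroup.mk w) : GroupTerm r k) := rfl

theorem exists_forall₂_of_termStep_eq_some {c : ℕ} {s s' : List (GroupWord r)}
    {ts : List (GroupTerm r k)} (h : termStep a k c s = some s')
    (hs : List.Forall₂ (Represents a) s ts) :
    ∃ ts' : List (GroupTerm r k), ts'.flatMap code = c :: ts.flatMap code ∧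
      List.Forall₂ (Represents a) s' ts' := by
  rw [termStep] at h
  split_ifs at h with c_mul c_inv c_one c_var
  · obtain - | ⟨hx, - | ⟨hy, hs⟩⟩ := hs <;> cases h
    exact ⟨_, by simp [code_mul, c_mul], .cons (hx.mul hy) hs⟩
  · obtain - | ⟨hx, hs⟩ := hs <;> cases h
    exact ⟨_, by simp [code_inv, c_inv], .cons hx.inv hs⟩
  · cases h
    exact ⟨_, by simp [code_one, c_one], .cons represents_one hs⟩
  · cases h
    exact ⟨_, by simp [code_var, ← c_var.1], .cons (represents_var ⟨c / 4, c_var.2⟩) hs⟩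
  · obtain ⟨w, -, h⟩ := Option.bind_eq_some_iff.1 h
    split_ifs at h with hc
    cases h
    refine ⟨_, ?_, .cons (represents_const w) hs⟩
    simp [code_const, FreeGroup.toWord_mk, hc.2, ← hc.1]

theorem exists_forall₂_of_termStack_eq_some {l : List ℕ} {s : List (GroupWord r)}
    (h : termStack a k l = some s) :
    ∃ ts : List (GroupTerm r k), ts.flatMap code = l ∧ List.Forall₂ (Represents a) s ts := by
  induction l generalizing s with
  | nil =>
    cases h
    exact ⟨[], rfl, .nil⟩
  | cons c l ih =>
    obtain ⟨s', hs', step⟩ := Option.bind_eq_some_iff.1 h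
    obtain ⟨ts, rfl, hts⟩ := ih hs'
    exact exists_forall₂_of_termStep_eq_some step hts

theorem exists_code_eq_of_termValue_eq_some {l : List ℕ} {v : GroupWord r}
    (h : termValue a k l = some v) :
    ∃ t : GroupTerm r k, code t = l ∧ Represents a v t := by
  obtain ⟨s, hs, head_s⟩ := Option.bind_eq_some_iff.1 h
  obtain ⟨ts, rfl, hts⟩ := exists_forall₂_of_termStack_eq_some hs
  split_ifs at head_s with s_tail
  obtain - | ⟨hv, - | _⟩ := hts
  · cases head_s
  · cases head_s
    exact ⟨_, by simp, hv⟩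
  · cases s_tail

theorem termStep_mulCode (x y : GroupWord r) (s : List (GroupWord r)) :
    termStep a k mulCode (x :: y :: s) = some ((x ++ y) :: s) := by
  simp [termStep, applyMul]

theorem termStep_invCode (x : GroupWord r) (s : List (GroupWord r)) :
    termStep a k invCode (x :: s) = some (FreeGroup.invRev x :: s) := by
  simp [termStep, applyInv, invCode, mulCode]

theorem termStep_oneCode (s : List (GroupWord r)) :
    termStep a k oneCode s = some ([] :: s) := by
  simp [termStep, invCode, mulCode, oneCode]

theorem termStep_varCode (i : Fin k) (s : List (GroupWord r)) :
    termStep a k (varCode i) s = some (a.getD i [] :: s) := by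
  have index : varCode i / 4 = i := by rw [varCode]; omega
  have : varCode i ≠ mulCode ∧ varCode i ≠ invCode ∧ varCode i ≠ oneCode := by
    simp only [varCode, mulCode, invCode, oneCode]
    omega
  rw [termStep, if_neg this.1, if_neg this.2.1, if_neg this.2.2, index, if_pos ⟨rfl, i.2⟩]

theorem termStep_constCode (g : FreeGroup (Fin r)) (s : List (GroupWord r)) :
    termStep a k (constCode (Encodable.encode g.toWord)) s = some (g.toWord :: s) := by
  set c := Encodable.encode g.toWord
  have half : constCode c / 2 = Nat.pair 0 (2 * c + 1) := by rw [constCode]; omega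
  have ne_of_half_ne {m n : ℕ} (h : (0, 2 * c + 1) ≠ (m, n)) :
      constCode c ≠ 2 * Nat.pair m n + 1 := fun h' => h <| by
    have : Nat.pair 0 (2 * c + 1) = Nat.pair m n := by omega
    simpa only [Nat.unpair_pair] using congrArg Nat.unpair this
  have ne_varCode (i : ℕ) : constCode c ≠ varCode i := by rw [constCode, varCode]; omega
  have decode_eq : (Nat.unpair (constCode c / 2)).2 / 2 = c := by
    rw [half, Nat.unpair_pair]
    omega
  have ne_mulCode : constCode c ≠ mulCode := ne_of_half_ne (by simp)
  have ne_invCode : constCode c ≠ invCode := ne_of_half_ne (by simp)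
  have ne_oneCode : constCode c ≠ oneCode := ne_of_half_ne (by simp)
  rw [termStep, if_neg ne_mulCode, if_neg ne_invCode, if_neg ne_oneCode,
    if_neg (fun h => ne_varCode _ h.1), pushConst, decode_eq, Encodable.encodek, Option.bind_some,
    if_pos ⟨rfl, FreeGroup.reduce_toWord g⟩]

theorem termStack_cons {c : ℕ} {l : List ℕ} {s : List (GroupWord r)}
    (h : termStack a k l = some s) : termStack a k (c :: l) = termStep a k c s := by
  rw [termStack] at *
  rw [List.foldr_cons, h, Option.bind_some]

theorem exists_termStack_code_append (a : List (GroupWord r)) (t : GroupTerm r k) :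
    ∃ v, Represents a v t ∧ ∀ l s, termStack a k l = some s →
      termStack a k (code t ++ l) = some (v :: s) := by
  induction t using GroupTerm.induction with
  | mul s t hs ht =>
    obtain ⟨v, hv, run_s⟩ := hs
    obtain ⟨w, hw, run_t⟩ := ht
    refine ⟨v ++ w, hv.mul hw, fun l st h => ?_⟩
    rw [code_mul, List.cons_append, List.append_assoc, termStack_cons (run_s _ _ (run_t _ _ h)),
      termStep_mulCode]
  | inv s hs =>
    obtain ⟨v, hv, run_s⟩ := hs
    refine ⟨FreeGroup.invRev v, hv.inv, fun l st h => ?_⟩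
    rw [code_inv, List.cons_append, termStack_cons (run_s _ _ h), termStep_invCode]
  | one =>
    refine ⟨[], represents_one, fun l st h => ?_⟩
    rw [code_one, List.singleton_append, termStack_cons h, termStep_oneCode]
  | const g =>
    refine ⟨g.toWord, FreeGroup.mk_toWord, fun l st h => ?_⟩
    rw [code_const, List.singleton_append, termStack_cons h, termStep_constCode]
  | var i =>
    refine ⟨a.getD i [], represents_var i, fun l st h => ?_⟩
    rw [code_var, List.singleton_append, termStack_cons h, termStep_varCode]

theorem exists_termValue_code_eq_some (a : List (GroupWord r)) (t : GroupTerm r k) :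
    ∃ v, Represents a v t ∧ termValue a k (code t) = some v := by
  obtain ⟨v, hv, run_t⟩ := exists_termStack_code_append a t
  have := run_t [] [] rfl
  rw [List.append_nil] at this
  exact ⟨v, hv, by simp [termValue, this]⟩

end TermMachine

/-! ### Evaluating codes of quantifier-free formulas -/

/-- Replaces the two truth values on top of a stack by that of the implication. -/
def applyImp (s : List (GroupWord r ⊕ Bool)) : Option (List (GroupWord r ⊕ Bool)) :=
  (s.head?.bind Sum.getRight?).bind fun p => (s.tail.head?.bind Sum.getRight?).map fun q =>
    Sum.inr (!p || q) :: s.tail.tail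

/-- Pushes the value of a term, unless the value of another term is on top of the stack: the two
terms are then the sides of an equation, and its truth value replaces them. -/
def pushTerm (v : GroupWord r) (s : List (GroupWord r ⊕ Bool)) : List (GroupWord r ⊕ Bool) :=
  match s.head?.bind Sum.getLeft? with
  | none => Sum.inl v :: s
  | some w => Sum.inr (decide (FreeGroup.reduce v = FreeGroup.reduce w)) :: s.tail

/-- The symbol codes of the term encoded by a symbol `c` of a formula. -/
def termSymbols (c : ℕ) : List ℕ := Denumerable.ofNat (List ℕ) (Nat.unpair (c / 2)).2

/-- One step of a stack machine that evaluates quantifier-free formulas in `k` variables with symbol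
codes read from right to left; the variables take the values listed in `a`. -/
def formulaStep (a : List (GroupWord r)) (k c : ℕ) (s : List (GroupWord r ⊕ Bool)) :
    Option (List (GroupWord r ⊕ Bool)) :=
  if c = impCode then applyImp s
  else if c = falsumCode k then some (Sum.inr false :: s)
  else if c = termCode k (termSymbols c) then
    (termValue a k (termSymbols c)).map fun v => pushTerm v s
  else none

/-- The stack after reading the symbol codes `l`. -/
def formulaStack (a : List (GroupWord r)) (k : ℕ) (l : List ℕ) :
    Option (List (GroupWord r ⊕ Bool)) :=
  l.foldr (fun c s => s.bind (formulaStep a k c)) (some [])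

section FormulaMachine

open GroupFormula

variable {k : ℕ} {a : List (GroupWord r)}

/-- The expressions whose values the stack of the formula machine holds. -/
abbrev Expression (r k : ℕ) := GroupTerm r k ⊕ {φ : GroupFormula r k // φ.IsQF}

/-- The contribution of an expression to the symbol codes of a formula. -/
def Expression.code : Expression r k → List ℕ
  | .inl t => [termCode k (GroupTerm.code t)]
  | .inr φ => GroupFormula.code φ.1

/-- The stack entry `x` is the value of the expression `e`. -/
abbrev IsValue (a : List (GroupWord r)) (x : GroupWord r ⊕ Bool) (e : Expression r k) : Prop :=
  Sum.LiftRel (Represents a) (fun b φ => b = true ↔ Holds (assignment a k) φ.1) x e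

theorem Represents.reduce_eq_iff {v w : GroupWord r} {s t : GroupTerm r k}
    (hs : Represents a v s) (ht : Represents a w t) :
    decide (FreeGroup.reduce v = FreeGroup.reduce w) = true ↔
      Holds (assignment a k) (.equal s t) := by
  rw [Represents] at hs ht
  rw [holds_equal, ← hs, ← ht, decide_eq_true_eq]
  exact ⟨FreeGroup.reduce.exact, fun h => FreeGroup.reduce.sound h⟩

theorem or_eq_true_iff_holds_imp {φ ψ : GroupFormula r k} {p q : Bool}
    {xs : Fin k → FreeGroup (Fin r)} (hp : p = true ↔ Holds xs φ) (hq : q = true ↔ Holds xs ψ) :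
    (!p || q) = true ↔ Holds xs (φ.imp ψ) := by
  rw [holds_imp, ← hp, ← hq]
  cases p <;> simp

theorem false_eq_true_iff_holds_falsum {xs : Fin k → FreeGroup (Fin r)} :
    false = true ↔ Holds xs (.falsum : GroupFormula r k) :=
  iff_of_false Bool.false_ne_true (not_holds_falsum xs)

theorem exists_forall₂_pushTerm {s : List (GroupWord r ⊕ Bool)} {es : List (Expression r k)}
    {v : GroupWord r} {t : GroupTerm r k} (hv : Represents a v t)
    (hs : List.Forall₂ (IsValue a) s es) :
    ∃ es' : List (Expression r k),
      es'.flatMap Expression.code = termCode k (GroupTerm.code t) :: es.flatMap Expression.code ∧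
      List.Forall₂ (IsValue a) (pushTerm v s) es' := by
  obtain - | ⟨hx, hs⟩ := hs
  · exact ⟨[.inl t], rfl, .cons (.inl hv) .nil⟩
  obtain @⟨w, t', hw⟩ | hb := hx
  · refine ⟨.inr ⟨.equal t t', .of_isAtomic (.equal t t')⟩ :: _, ?_,
      .cons (.inr (hv.reduce_eq_iff hw)) hs⟩
    simp [Expression.code, code_equal]
  · exact ⟨.inl t :: _, rfl, .cons (.inl hv) (.cons (.inr hb) hs)⟩

theorem exists_forall₂_of_formulaStep_eq_some {c : ℕ} {s s' : List (GroupWord r ⊕ Bool)}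
    {es : List (Expression r k)} (h : formulaStep a k c s = some s')
    (hs : List.Forall₂ (IsValue a) s es) :
    ∃ es' : List (Expression r k),
      es'.flatMap Expression.code = c :: es.flatMap Expression.code ∧
      List.Forall₂ (IsValue a) s' es' := by
  rw [formulaStep] at h
  split_ifs at h with c_imp c_falsum c_term
  · obtain - | ⟨_ | hp, - | ⟨_ | hq, hs⟩⟩ := hs <;> cases h
    refine ⟨.inr ⟨_, .imp (Subtype.prop _) (Subtype.prop _)⟩ :: _, ?_,
      .cons (.inr (or_eq_true_iff_holds_imp hp hq)) hs⟩
    simp [Expression.code, code_imp, c_imp]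
  · cases h
    refine ⟨.inr ⟨.falsum, .falsum⟩ :: es, ?_, .cons (.inr false_eq_true_iff_holds_falsum) hs⟩
    simp [Expression.code, code_falsum, c_falsum]
  · obtain ⟨v, hv, rfl⟩ := Option.map_eq_some_iff.1 h
    obtain ⟨t, ht, hv⟩ := exists_code_eq_of_termValue_eq_some hv
    rw [c_term, ← ht]
    exact exists_forall₂_pushTerm hv hs

theorem exists_forall₂_of_formulaStack_eq_some {l : List ℕ} {s : List (GroupWord r ⊕ Bool)}
    (h : formulaStack a k l = some s) :
    ∃ es : List (Expression r k), es.flatMap Expression.code = l ∧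
      List.Forall₂ (IsValue a) s es := by
  induction l generalizing s with
  | nil =>
    cases h
    exact ⟨[], rfl, .nil⟩
  | cons c l ih =>
    obtain ⟨s', hs', step⟩ := Option.bind_eq_some_iff.1 h
    obtain ⟨es, rfl, hes⟩ := ih hs'
    exact exists_forall₂_of_formulaStep_eq_some step hes

theorem formulaStack_cons {c : ℕ} {l : List ℕ} {s : List (GroupWord r ⊕ Bool)}
    (h : formulaStack a k l = some s) : formulaStack a k (c :: l) = formulaStep a k c s := by
  rw [formulaStack] at *
  rw [List.foldr_cons, h, Option.bind_some]

theorem formulaStep_impCode (p q : Bool) (s : List (GroupWord r ⊕ Bool)) :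
    formulaStep a k impCode (.inr p :: .inr q :: s) = some (.inr (!p || q) :: s) := by
  simp [formulaStep, applyImp]

theorem formulaStep_falsumCode (s : List (GroupWord r ⊕ Bool)) :
    formulaStep a k (falsumCode k) s = some (.inr false :: s) := by
  have : falsumCode k ≠ impCode := by rw [falsumCode, impCode]; omega
  rw [formulaStep, if_neg this, if_pos rfl]

theorem formulaStep_termCode {l : List ℕ} {v : GroupWord r} (h : termValue a k l = some v)
    (s : List (GroupWord r ⊕ Bool)) :
    formulaStep a k (termCode k l) s = some (pushTerm v s) := by
  have symbols_eq : termSymbols (termCode k l) = l := by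
    have half : termCode k l / 2 = Nat.pair k (Encodable.encode l) := by rw [termCode]; omega
    rw [termSymbols, half, Nat.unpair_pair, Denumerable.ofNat_encode]
  have : termCode k l ≠ impCode ∧ termCode k l ≠ falsumCode k := by
    rw [termCode, impCode, falsumCode]
    omega
  rw [formulaStep, if_neg this.1, if_neg this.2, symbols_eq, if_pos rfl, h, Option.map_some]

/-- The stack must not start with the value of a term, since that term would be taken for the
right-hand side of an equation. -/
theorem exists_formulaStack_code_append (a : List (GroupWord r)) (φ : GroupFormula r k)
    (hφ : φ.IsQF) :
    ∃ b : Bool, (b = true ↔ Holds (assignment a k) φ) ∧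
      ∀ l s, formulaStack a k l = some s → s.head?.bind Sum.getLeft? = none →
        formulaStack a k (code φ ++ l) = some (.inr b :: s) := by
  induction φ, hφ using isQF_induction with
  | falsum =>
    refine ⟨false, false_eq_true_iff_holds_falsum, fun l st h _ => ?_⟩
    rw [code_falsum, List.singleton_append, formulaStack_cons h, formulaStep_falsumCode]
  | equal s t =>
    obtain ⟨v, hv, value_s⟩ := exists_termValue_code_eq_some a s
    obtain ⟨w, hw, value_t⟩ := exists_termValue_code_eq_some a t
    refine ⟨_, hv.reduce_eq_iff hw, fun l st h st_head => ?_⟩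
    have push_w : pushTerm w st = .inl w :: st := by rw [pushTerm, st_head]
    have run_t : formulaStack a k (termCode k (GroupTerm.code t) :: l) = some (.inl w :: st) := by
      rw [formulaStack_cons h, formulaStep_termCode value_t, push_w]
    rw [code_equal, List.cons_append, List.singleton_append, formulaStack_cons run_t,
      formulaStep_termCode value_s]
    rfl
  | imp φ ψ _ _ hφ hψ =>
    obtain ⟨p, hp, run_φ⟩ := hφ
    obtain ⟨q, hq, run_ψ⟩ := hψ
    refine ⟨!p || q, or_eq_true_iff_holds_imp hp hq, fun l st h st_head => ?_⟩
    rw [code_imp, List.cons_append, List.append_assoc,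
      formulaStack_cons (run_φ _ _ (run_ψ _ _ h st_head) rfl), formulaStep_impCode]

theorem formulaStack_code_eq_iff {φ : GroupFormula r k} (hφ : φ.IsQF) :
    formulaStack a k (code φ) = some [.inr true] ↔ Holds (assignment a k) φ := by
  obtain ⟨b, hb, run_φ⟩ := exists_formulaStack_code_append a φ hφ
  have := run_φ [] [] rfl rfl
  rw [List.append_nil] at this
  simp [this, hb]

theorem exists_code_eq_of_formulaStack_eq {l : List ℕ}
    (h : formulaStack a k l = some [.inr true]) :
    ∃ φ : GroupFormula r k, φ.IsQF ∧ code φ = l := by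
  obtain ⟨es, rfl, hes⟩ := exists_forall₂_of_formulaStack_eq_some h
  obtain - | ⟨- | @⟨b, φ, hφ⟩, - | _⟩ := hes
  exact ⟨φ.1, φ.2, by simp [Expression.code]⟩

end FormulaMachine

end CodeEvaluation

/-! ### Evaluating codes of existential sentences -/

section ExistentialClosure

open GroupFormula

variable {r k : ℕ}

/-- The symbol codes that precede the matrix of an existential sentence with `m` quantifiers; `∃` is
encoded as `¬ ∀ ¬`. -/
def exsPrefix : ℕ → List ℕ
  | 0 => []
  | m + 1 => exsPrefix m ++ [impCode, allCode, impCode]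

/-- The symbol codes that follow the matrix of an existential sentence with `m` quantifiers. -/
def exsSuffix : ℕ → List ℕ
  | 0 => []
  | m + 1 => [falsumCode (m + 1), falsumCode m] ++ exsSuffix m

theorem length_exsPrefix (m : ℕ) : (exsPrefix m).length = 3 * m := by
  induction m with
  | zero => rfl
  | succ m ih =>
    rw [exsPrefix, List.length_append, ih]
    rfl

theorem length_exsSuffix (m : ℕ) : (exsSuffix m).length = 2 * m := by
  induction m with
  | zero => rfl
  | succ m ih =>
    rw [exsSuffix, List.length_append, ih, Nat.add_comm]
    rfl

theorem le_codeSize_exsSuffix (m : ℕ) : m ≤ codeSize (exsSuffix m) := by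
  induction m with
  | zero => exact Nat.zero_le _
  | succ m ih =>
    rw [exsSuffix, codeSize_append, codeSize_cons]
    omega

theorem code_ex (φ : GroupFormula r (k + 1)) :
    code φ.ex = [impCode, allCode, impCode] ++ code φ ++ [falsumCode (k + 1), falsumCode k] := by
  change code ((φ.imp .falsum).all.imp .falsum) = _
  rw [code_imp, code_all, code_imp, code_falsum, code_falsum]
  simp

theorem code_exs (φ : GroupFormula r k) :
    code (k := 0) φ.exs = exsPrefix k ++ code φ ++ exsSuffix k := by
  induction k with
  | zero => simp [exsPrefix, exsSuffix, BoundedFormula.exs]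
  | succ k ih =>
    rw [BoundedFormula.exs, ih, code_ex, exsPrefix, exsSuffix]
    simp only [List.append_assoc]

theorem isExistential_exs {φ : GroupFormula r k} (hφ : IsExistential φ) :
    IsExistential (n := 0) φ.exs := by
  induction k with
  | zero => exact hφ
  | succ k ih => exact ih hφ.ex

theorem exists_isQF_exs_eq {φ : GroupFormula r k} (hφ : IsExistential φ) :
    ∃ m, ∃ θ : GroupFormula r m, θ.IsQF ∧ θ.exs = φ.exs := by
  induction hφ with
  | of_isQF hφ => exact ⟨_, _, hφ, rfl⟩
  | ex _ ih => exact ih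

theorem models_exs_iff (φ : GroupFormula r k) :
    FreeGroup (Fin r) ⊨ φ.exs ↔ ∃ xs, Holds xs φ := by
  rw [Sentence.Realize, BoundedFormula.realize_exs]
  exact exists_congr fun xs => iff_of_eq <|
    congrArg (BoundedFormula.Realize φ · xs) (Subsingleton.elim _ _)

/-- The symbol codes of the matrix of the existential sentence with `m` quantifiers and symbol
codes `l`. -/
def matrixSymbols (m : ℕ) (l : List ℕ) : List ℕ := (l.drop (3 * m)).take (l.length - 5 * m)

/-- `l` is the list of symbol codes of an existential sentence with `m` quantifiers whose matrix is
true under the assignment `a`. -/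
def Accepts (a : List (GroupWord r)) (m : ℕ) (l : List ℕ) : Prop :=
  l = exsPrefix m ++ matrixSymbols m l ++ exsSuffix m ∧
    formulaStack a m (matrixSymbols m l) = some [.inr true]

theorem matrixSymbols_append (m : ℕ) (l : List ℕ) :
    matrixSymbols m (exsPrefix m ++ l ++ exsSuffix m) = l := by
  have length_eq : (exsPrefix m ++ l ++ exsSuffix m).length - 5 * m = l.length := by
    simp only [List.length_append, length_exsPrefix, length_exsSuffix]
    omega
  rw [matrixSymbols, length_eq, List.append_assoc, ← length_exsPrefix, List.drop_left,
    List.take_left]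

theorem accepts_code_exs_iff {a : List (GroupWord r)} {φ : GroupFormula r k} (hφ : φ.IsQF) :
    Accepts a k (code (k := 0) φ.exs) ↔ Holds (assignment a k) φ := by
  rw [Accepts, code_exs, matrixSymbols_append, formulaStack_code_eq_iff hφ]
  exact and_iff_right rfl

theorem Accepts.exists_isQF {a : List (GroupWord r)} {m : ℕ} {l : List ℕ} (h : Accepts a m l) :
    ∃ φ : GroupFormula r m, φ.IsQF ∧ code (k := 0) φ.exs = l := by
  obtain ⟨φ, hφ, code_φ⟩ := exists_code_eq_of_formulaStack_eq h.2
  exact ⟨φ, hφ, by rw [code_exs, code_φ, ← h.1]⟩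

theorem assignment_ofFn_toWord (xs : Fin k → FreeGroup (Fin r)) :
    assignment (List.ofFn fun i => (xs i).toWord) k = xs := by
  ext i
  simp [assignment, FreeGroup.mk_toWord]

/-- All lists of length at most `m` with entries from `A`. -/
def boundedLists {β : Type*} (A : List β) : ℕ → List (List β)
  | 0 => [ [] ]
  | m + 1 => [] :: A.flatMap fun b => (boundedLists A m).map fun l => b :: l

theorem mem_boundedLists {β : Type*} {A : List β} {m : ℕ} {l : List β} (hl : l.length ≤ m)
    (l_subset : ∀ b ∈ l, b ∈ A) : l ∈ boundedLists A m := by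
  induction m generalizing l with
  | zero => simp [boundedLists, List.length_eq_zero_iff.1 (Nat.le_zero.1 hl)]
  | succ m ih =>
    cases l with
    | nil => exact List.mem_cons_self
    | cons b l =>
      rw [List.forall_mem_cons] at l_subset
      exact List.mem_cons_of_mem _ (List.mem_flatMap.2 ⟨b, l_subset.1,
        List.mem_map.2 ⟨l, ih (Nat.le_of_succ_le_succ hl) l_subset.2, rfl⟩⟩)

/-- The assignments that suffice to decide the existential sentence with Gödel number `n`. -/
noncomputable def smallAssignments (r n : ℕ) : List (List (GroupWord r)) :=
  boundedLists (boundedLists (Finset.univ : Finset (Fin r × Bool)).toList (partialHomBound r n)) n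

theorem ofFn_toWord_mem_smallAssignments {n : ℕ} {xs : Fin k → FreeGroup (Fin r)} (hk : k ≤ n)
    (hxs : ∀ i, (xs i).norm ≤ partialHomBound r n) :
    (List.ofFn fun i => (xs i).toWord) ∈ smallAssignments r n := by
  refine mem_boundedLists (by rwa [List.length_ofFn]) fun w hw => ?_
  obtain ⟨i, rfl⟩ := List.mem_ofFn.1 hw
  exact mem_boundedLists (hxs i) fun x _ => Finset.mem_toList.2 (Finset.mem_univ x)

theorem exists_accepts_of_models (hr : 2 ≤ r) {σ : groupLang[[FreeGroup (Fin r)]].Sentence}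
    (hσ : IsExistential σ) (models_σ : FreeGroup (Fin r) ⊨ σ) :
    ∃ m ≤ godelNumberWithConstants r σ,
      ∃ a ∈ smallAssignments r (godelNumberWithConstants r σ), Accepts a m (code (k := 0) σ) := by
  obtain ⟨m, θ, hθ, θ_exs⟩ := exists_isQF_exs_eq (k := 0) hσ
  change _ = σ at θ_exs
  subst θ_exs
  have size_le := codeSize_le_encode (code (k := 0) θ.exs)
  rw [encode_code_eq_godelNumberWithConstants, code_exs, codeSize_append,
    codeSize_append] at size_le
  have m_le := le_codeSize_exsSuffix m
  obtain ⟨xs, hxs⟩ := (models_exs_iff θ).1 models_σ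
  obtain ⟨ys, hys, ys_le⟩ := exists_holds_norm_le hr hθ
    (n := godelNumberWithConstants r θ.exs) (by omega) hxs
  refine ⟨m, by omega, _, ofFn_toWord_mem_smallAssignments (by omega) ys_le, ?_⟩
  rwa [accepts_code_exs_iff hθ, assignment_ofFn_toWord]

theorem Accepts.exists_models {a : List (GroupWord r)} {m : ℕ} {l : List ℕ} (h : Accepts a m l) :
    ∃ σ : groupLang[[FreeGroup (Fin r)]].Sentence,
      code (k := 0) σ = l ∧ IsExistential σ ∧ FreeGroup (Fin r) ⊨ σ := by
  obtain ⟨φ, hφ, rfl⟩ := h.exists_isQF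
  exact ⟨φ.exs, rfl, isExistential_exs (.of_isQF hφ),
    (models_exs_iff φ).2 ⟨_, (accepts_code_exs_iff hφ).1 h⟩⟩

theorem exists_models_iff_exists_accepts (hr : 2 ≤ r) (n : ℕ) :
    (∃ σ : groupLang[[FreeGroup (Fin r)]].Sentence,
      godelNumberWithConstants r σ = n ∧ IsExistential σ ∧ FreeGroup (Fin r) ⊨ σ) ↔
    ∃ m ∈ List.range (n + 1), ∃ a ∈ smallAssignments r n,
      Accepts a m (Denumerable.ofNat (List ℕ) n) := by
  simp only [List.mem_range, Nat.lt_succ_iff]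
  constructor
  · rintro ⟨σ, rfl, hσ, models_σ⟩
    have := exists_accepts_of_models hr hσ models_σ
    rwa [← Denumerable.ofNat_encode (code (k := 0) σ),
      encode_code_eq_godelNumberWithConstants] at this
  · rintro ⟨m, -, a, -, h⟩
    obtain ⟨σ, code_σ, hσ, models_σ⟩ := h.exists_models
    refine ⟨σ, ?_, hσ, models_σ⟩
    rw [← encode_code_eq_godelNumberWithConstants, code_σ, Denumerable.encode_ofNat]

end ExistentialClosure

/-! ### Primitive recursiveness of the decision procedure -/

section PrimitiveRecursion

open Primrec

variable {r : ℕ} {σ : Type*} [Primcodable σ]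

section Bounds

variable {u v i x y K N : σ → ℕ}

theorem primrec_add (hx : Primrec x) (hy : Primrec y) : Primrec fun z => x z + y z :=
  nat_add.comp hx hy

theorem primrec_mul (hx : Primrec x) (hy : Primrec y) : Primrec fun z => x z * y z :=
  nat_mul.comp hx hy

theorem primrec_div (hx : Primrec x) (d : ℕ) : Primrec fun z => x z / d :=
  nat_div.comp hx (const d)

theorem primrec_pow (hx : Primrec x) (hy : Primrec y) : Primrec fun z => x z ^ y z :=
  (Primrec₂.unpaired'.1 Nat.Primrec.pow).comp hx hy

theorem primrec_affine_iterate (hu : Primrec u) (hx : Primrec x) (hy : Primrec y) :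
    Primrec fun z => (fun w => u z * w + x z)^[y z] 0 :=
  nat_iterate (h := fun z w => u z * w + x z) hy (const 0)
    (primrec_add (primrec_mul (hu.comp fst) snd) (hx.comp fst))

theorem primrec_diophantineBound (hx : Primrec x) (hy : Primrec y) :
    Primrec fun z => diophantineBound (x z) (y z) := by
  have base : Primrec fun z => 2 * y z + 1 := primrec_add (primrec_mul (const 2) hy) (const 1)
  have factor : Primrec fun z => 2 * (y z * x z) + 1 :=
    primrec_add (primrec_mul (const 2) (primrec_mul hy hx)) (const 1)
  exact primrec_affine_iterate (const 2) hx
    (primrec_pow (const 2) (primrec_mul (primrec_pow base hx) factor))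

theorem primrec_stepBound (hv : Primrec v) (hK : Primrec K) (hN : Primrec N) :
    Primrec fun z => stepBound (v z) (K z) (N z) := by
  have dimension : Primrec fun z => 1 + v z * 4 + K z * 2 :=
    primrec_add (primrec_add (const 1) (primrec_mul hv (const 4))) (primrec_mul hK (const 2))
  have height : Primrec fun z => 5 * (K z + N z) + 1 :=
    primrec_add (primrec_mul (const 5) (primrec_add hK hN)) (const 1)
  exact primrec_mul (primrec_add hv (const 1))
    (primrec_mul (const 4) (primrec_add (primrec_diophantineBound dimension height) (const 1)))

theorem primrec_solutionBound (a : ℕ) (hv : Primrec v) (hi : Primrec i) (hK : Primrec K)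
    (hN : Primrec N) : Primrec fun z => solutionBound a (v z) (i z) (K z) (N z) := by
  have step := primrec_stepBound hv hK hN
  have symbols : Primrec fun z => (a * 2) * ((a * 2) * K z) * 2 + v z * 2 + 1 :=
    primrec_add (primrec_add (primrec_mul (primrec_mul (const (a * 2))
      (primrec_mul (const (a * 2)) hK)) (const 2)) (primrec_mul hv (const 2))) (const 1)
  exact primrec_affine_iterate step step
    (primrec_pow (primrec_pow symbols (primrec_add hK hN)) (primrec_mul hi (const 2)))

theorem primrec_partialHomBound (a : ℕ) : Primrec (partialHomBound a) := by
  have succ_n : Primrec fun n : ℕ => n + 1 := succ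
  have constraints : Primrec fun n : ℕ => (n + 1) * (n + 1) + ((n + 1) + (n + 1)) :=
    primrec_add (primrec_mul succ_n succ_n) (primrec_add succ_n succ_n)
  have size : Primrec fun n : ℕ => (n + 1) * n + (n + 1) :=
    primrec_add (primrec_mul succ_n .id) succ_n
  have equations := primrec_mul constraints (const 3)
  exact primrec_mul (const 3) (primrec_solutionBound a (primrec_add succ_n equations) equations
    (primrec_add (primrec_add size (const 1)) (primrec_mul (const 87) constraints))
    (primrec_mul (const 9) constraints))

end Bounds

section TermMachine

/-- The effect on a reduced word `l` of multiplying it from the left by the letter `x`, as in the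
recursion that defines `FreeGroup.reduce`. -/
def reduceCons (x : Fin r × Bool) (l : GroupWord r) : GroupWord r :=
  List.casesOn l [x] fun y l => if x.1 = y.1 ∧ x.2 = not y.2 then l else x :: y :: l

theorem primrec_reduceCons : Primrec₂ (reduceCons : Fin r × Bool → GroupWord r → _) := by
  have cancels : PrimrecPred fun q : ((Fin r × Bool) × GroupWord r) ×
      ((Fin r × Bool) × GroupWord r) => q.1.1.1 = q.2.1.1 ∧ q.1.1.2 = not q.2.1.2 :=
    PrimrecPred.and (Primrec.eq.comp (fst.comp (fst.comp fst)) (fst.comp (fst.comp snd)))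
      (Primrec.eq.comp (snd.comp (fst.comp fst)) (Primrec.not.comp (snd.comp (fst.comp snd))))
  exact list_casesOn snd (list_cons.comp fst (const []))
    (Primrec.ite cancels (snd.comp snd)
      (list_cons.comp (fst.comp fst) (list_cons.comp (fst.comp snd) (snd.comp snd)))).to₂

theorem primrec_reduce : Primrec (FreeGroup.reduce : GroupWord r → GroupWord r) := by
  refine (list_foldr .id (const []) (primrec_reduceCons.comp
    (fst.comp snd) (snd.comp snd)).to₂).of_eq fun l => ?_
  induction l with
  | nil => rfl
  | cons x l ih =>
    rw [FreeGroup.reduce.cons, ← ih]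
    rfl

theorem primrec_invRev : Primrec (FreeGroup.invRev : GroupWord r → GroupWord r) :=
  list_reverse.comp
    (list_map .id ((dom_finite fun x : Fin r × Bool => (x.1, !x.2)).comp₂ Primrec₂.right))

theorem primrec_applyMul : Primrec (applyMul : List (GroupWord r) → _) :=
  option_bind list_head? (option_map (list_head?.comp (list_tail.comp fst))
    (list_cons.comp (list_append.comp (snd.comp fst) snd)
      (list_tail.comp (list_tail.comp (fst.comp fst)))))

theorem primrec_applyInv : Primrec (applyInv : List (GroupWord r) → _) :=
  option_map list_head? (list_cons.comp (primrec_invRev.comp snd) (list_tail.comp fst))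

theorem primrec_constCode : Primrec constCode :=
  nat_double_succ.comp (Primrec₂.natPair.comp (const 0) nat_double_succ)

theorem primrec_varCode : Primrec varCode := nat_double.comp nat_double_succ

theorem primrec_pushConst : Primrec₂ (pushConst : ℕ → List (GroupWord r) → _) := by
  have is_code : PrimrecPred fun q : (ℕ × List (GroupWord r)) × GroupWord r =>
      q.1.1 = constCode (Encodable.encode q.2) ∧ FreeGroup.reduce q.2 = q.2 :=
    PrimrecPred.and
      (Primrec.eq.comp (fst.comp fst) (primrec_constCode.comp (Primrec.encode.comp snd)))
      (Primrec.eq.comp (primrec_reduce.comp snd) snd)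
  exact option_bind
    (Primrec.decode.comp (primrec_div (snd.comp (Primrec.unpair.comp (primrec_div fst 2))) 2))
    (ite is_code (option_some.comp (list_cons.comp snd (snd.comp fst))) (const none))

variable {a : σ → List (GroupWord r)} {k c : σ → ℕ} {l : σ → List ℕ}

theorem primrec_termStep {s : σ → List (GroupWord r)} (ha : Primrec a) (hk : Primrec k)
    (hc : Primrec c) (hs : Primrec s) : Primrec fun z => termStep (a z) (k z) (c z) (s z) := by
  have index := primrec_div hc 4
  have is_var : PrimrecPred fun z => c z = varCode (c z / 4) ∧ c z / 4 < k z :=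
    PrimrecPred.and (Primrec.eq.comp hc (primrec_varCode.comp index)) (nat_lt.comp index hk)
  exact ite (Primrec.eq.comp hc (const mulCode)) (primrec_applyMul.comp hs)
    (ite (Primrec.eq.comp hc (const invCode)) (primrec_applyInv.comp hs)
    (ite (Primrec.eq.comp hc (const oneCode)) (option_some.comp (list_cons.comp (const []) hs))
    (ite is_var (option_some.comp (list_cons.comp ((list_getD []).comp ha index) hs))
      (primrec_pushConst.comp hc hs))))

theorem primrec_termStack (ha : Primrec a) (hk : Primrec k) (hl : Primrec l) :
    Primrec fun z => termStack (a z) (k z) (l z) := by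
  have step : Primrec₂ fun z (p : ℕ × Option (List (GroupWord r))) =>
      p.2.bind (termStep (a z) (k z) p.1) :=
    option_bind (snd.comp snd) (primrec_termStep (ha.comp (fst.comp fst))
      (hk.comp (fst.comp fst)) (fst.comp (snd.comp fst)) snd).to₂
  exact list_foldr hl (const (some [])) step

theorem primrec_termValue (ha : Primrec a) (hk : Primrec k) (hl : Primrec l) :
    Primrec fun z => termValue (a z) (k z) (l z) :=
  option_bind (primrec_termStack ha hk hl)
    (ite (Primrec.eq.comp (list_tail.comp snd) (const [])) (list_head?.comp snd) (const none))

end TermMachine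

section FormulaMachine

theorem primrec_getLeft? {β γ : Type*} [Primcodable β] [Primcodable γ] :
    Primrec (Sum.getLeft? : β ⊕ γ → _) :=
  (sumCasesOn (h := fun _ _ => none) .id (option_some.comp₂ Primrec₂.right)
    (const none)).of_eq fun s => by cases s <;> rfl

theorem primrec_getRight? {β γ : Type*} [Primcodable β] [Primcodable γ] :
    Primrec (Sum.getRight? : β ⊕ γ → _) :=
  (sumCasesOn (g := fun _ _ => none) .id (const none)
    (option_some.comp₂ Primrec₂.right)).of_eq fun s => by cases s <;> rfl

theorem primrec_applyImp : Primrec (applyImp : List (GroupWord r ⊕ Bool) → _) :=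
  option_bind (option_bind list_head? (primrec_getRight?.comp snd))
    (option_map (option_bind (list_head?.comp (list_tail.comp fst)) (primrec_getRight?.comp snd))
      (list_cons.comp
        (sumInr.comp (Primrec.or.comp (Primrec.not.comp (snd.comp fst)) snd))
        (list_tail.comp (list_tail.comp (fst.comp fst)))))

theorem primrec_pushTerm : Primrec₂ (pushTerm : GroupWord r → _ → _) := by
  have top : Primrec fun p : GroupWord r × List (GroupWord r ⊕ Bool) =>
      p.2.head?.bind Sum.getLeft? :=
    option_bind (list_head?.comp snd) (primrec_getLeft?.comp snd)
  have equation : Primrec₂ fun (p : GroupWord r × List (GroupWord r ⊕ Bool)) w =>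
      (Sum.inr (decide (FreeGroup.reduce p.1 = FreeGroup.reduce w)) :: p.2.tail :
        List (GroupWord r ⊕ Bool)) :=
    list_cons.comp (sumInr.comp (Primrec.eq.comp (primrec_reduce.comp (fst.comp fst))
      (primrec_reduce.comp snd)).decide) (list_tail.comp (snd.comp fst))
  refine (option_casesOn top (list_cons.comp (sumInl.comp fst) snd) equation).of_eq fun p => ?_
  rw [pushTerm]
  cases p.2.head?.bind Sum.getLeft? <;> rfl

theorem primrec_falsumCode : Primrec falsumCode :=
  nat_double_succ.comp (nat_double_succ.comp (primrec_add .id (const 2)))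

theorem primrec_termCode : Primrec₂ termCode :=
  nat_double.comp (Primrec₂.natPair.comp fst (Primrec.encode.comp snd))

theorem primrec_termSymbols : Primrec termSymbols :=
  (Primrec.ofNat (List ℕ)).comp (snd.comp (Primrec.unpair.comp (primrec_div .id 2)))

variable {a : σ → List (GroupWord r)} {k c : σ → ℕ} {l : σ → List ℕ}

theorem primrec_formulaStep {s : σ → List (GroupWord r ⊕ Bool)} (ha : Primrec a) (hk : Primrec k)
    (hc : Primrec c) (hs : Primrec s) : Primrec fun z => formulaStep (a z) (k z) (c z) (s z) := by
  have symbols := primrec_termSymbols.comp hc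
  exact ite (Primrec.eq.comp hc (const impCode)) (primrec_applyImp.comp hs)
    (ite (Primrec.eq.comp hc (primrec_falsumCode.comp hk))
      (option_some.comp (list_cons.comp (const (Sum.inr false)) hs))
    (ite (Primrec.eq.comp hc (primrec_termCode.comp hk symbols))
      (option_map (primrec_termValue ha hk symbols) (primrec_pushTerm.comp snd (hs.comp fst)))
      (const none)))

theorem primrec_formulaStack (ha : Primrec a) (hk : Primrec k) (hl : Primrec l) :
    Primrec fun z => formulaStack (a z) (k z) (l z) := by
  have step : Primrec₂ fun z (p : ℕ × Option (List (GroupWord r ⊕ Bool))) =>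
      p.2.bind (formulaStep (a z) (k z) p.1) :=
    option_bind (snd.comp snd) (primrec_formulaStep (ha.comp (fst.comp fst))
      (hk.comp (fst.comp fst)) (fst.comp (snd.comp fst)) snd).to₂
  exact list_foldr hl (const (some [])) step

end FormulaMachine

theorem primrec_exsPrefix : Primrec exsPrefix := by
  refine (nat_rec₁ (f := fun _ l => l ++ [impCode, allCode, impCode]) []
    (list_append.comp snd (const _))).of_eq fun m => ?_
  induction m with
  | zero => rfl
  | succ m ih => rw [exsPrefix, ← ih]

theorem primrec_exsSuffix : Primrec exsSuffix := by
  refine (nat_rec₁ (f := fun m l => [falsumCode (m + 1), falsumCode m] ++ l) []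
    (list_append.comp (list_cons.comp (primrec_falsumCode.comp (succ.comp fst))
      (list_cons.comp (primrec_falsumCode.comp fst) (const []))) snd)).of_eq fun m => ?_
  induction m with
  | zero => rfl
  | succ m ih => rw [exsSuffix, ← ih]

theorem primrec_matrixSymbols : Primrec₂ matrixSymbols :=
  list_take.comp (nat_sub.comp (list_length.comp snd) (primrec_mul (const 5) fst))
    (list_drop.comp (primrec_mul (const 3) fst) snd)

theorem primrecPred_accepts {a : σ → List (GroupWord r)} {m : σ → ℕ} {l : σ → List ℕ}
    (ha : Primrec a) (hm : Primrec m) (hl : Primrec l) :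
    PrimrecPred fun z => Accepts (a z) (m z) (l z) := by
  have symbols := primrec_matrixSymbols.comp hm hl
  exact PrimrecPred.and
    (Primrec.eq.comp hl (list_append.comp (list_append.comp (primrec_exsPrefix.comp hm) symbols)
      (primrec_exsSuffix.comp hm)))
    (Primrec.eq.comp (primrec_formulaStack ha hm symbols) (const (some [Sum.inr true])))

theorem primrec_boundedLists {β : Type*} [Primcodable β] {A : σ → List β} {m : σ → ℕ}
    (hA : Primrec A) (hm : Primrec m) : Primrec fun z => boundedLists (A z) (m z) := by
  have step : Primrec₂ fun z (p : ℕ × List (List β)) =>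
      [] :: (A z).flatMap fun b => p.2.map fun l => b :: l :=
    list_cons.comp (const []) (list_flatMap (hA.comp fst)
      (list_map (snd.comp (snd.comp fst)) (list_cons.comp (snd.comp fst) snd)))
  refine (nat_rec' hm (const [ [] ]) step).of_eq fun z => ?_
  induction m z with
  | zero => rfl
  | succ m ih => rw [boundedLists, ← ih]

theorem primrec_smallAssignments (r : ℕ) : Primrec (smallAssignments r) :=
  primrec_boundedLists (primrec_boundedLists (const _) (primrec_partialHomBound r)) .id

theorem primrecPred_existential_theory (hr : 2 ≤ r) : PrimrecPred fun n : ℕ =>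
    ∃ σ : groupLang[[FreeGroup (Fin r)]].Sentence,
      godelNumberWithConstants r σ = n ∧ IsExistential σ ∧ FreeGroup (Fin r) ⊨ σ := by
  have accepts : PrimrecRel fun (a : List (GroupWord r)) (p : ℕ × ℕ) =>
      Accepts a p.1 (Denumerable.ofNat (List ℕ) p.2) :=
    primrecPred_accepts fst (fst.comp snd) ((Primrec.ofNat (List ℕ)).comp (snd.comp snd))
  have accepts_some : PrimrecRel fun m n : ℕ =>
      ∃ a ∈ smallAssignments r n, Accepts a m (Denumerable.ofNat (List ℕ) n) :=
    accepts.exists_mem_list.comp ((primrec_smallAssignments r).comp snd) .id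
  exact (accepts_some.exists_mem_list.comp (list_range.comp succ) .id).of_eq fun n =>
    (exists_models_iff_exists_accepts hr n).symm

end PrimitiveRecursion

end Recompression

/-- The existential theory of a free group of finite rank at least 2, in the language of
groups with constants from the free group, is decidable: with respect to the fixed Gödel
numbering of sentences, the set of existential sentences true in the free group is
computable. -/
theorem existential_theory_of_free_group_decidable (r : ℕ) (hr : 2 ≤ r) :
    ComputablePred (fun n : ℕ =>
      ∃ σ : (groupLang[[FreeGroup (Fin r)]]).Sentence,
        godelNumberWithConstants r σ = n ∧ IsExistential σ ∧ FreeGroup (Fin r) ⊨ σ) := by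
  obtain ⟨_, h⟩ := Recompression.primrecPred_existential_theory hr
  exact ⟨_, h.to_comp⟩
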